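/- Suppose n > n₁ ≥ 1 and m > m₁ ≥ 1 are integers with n ≥ 300 and L_n − L_{n₁} = 𝒫_m − 𝒫_{m₁}. Then n − 3 < 1.8·10^{41}·(1 + log(2n))³, and consequently n < 2.45·10^{47}. -/

import Mathlib

/-- The Padovan sequence: 𝒫₀ = 𝒫₁ = 𝒫₂ = 1, 𝒫_{k+3} = 𝒫_{k+1} + 𝒫_k. -/
def padovan : ℕ → ℕ
  | 0 => 1
  | 1 => 1
  | 2 => 1
  | k + 3 => padovan (k + 1) + padovan k

/-- The Lucas sequence: L₀ = 2, L₁ = 1, L_{k+2} = L_{k+1} + L_k. -/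
def lucasSeq : ℕ → ℕ
  | 0 => 2
  | 1 => 1
  | k + 2 => lucasSeq (k + 1) + lucasSeq k

/-!
Let `φ` be the golden ratio and `ρ` the real root of `X ^ 3 - X - 1`. By Binet, `Lₙ = φ ^ n + O(1)`
and `𝒫ₘ = c ρ ^ m + O(1)`, so the equation says that `φ ^ n (1 - φ ^ (-(n - n₁)))` and
`c ρ ^ m (1 - ρ ^ (-(m - m₁)))` nearly agree. With none, one or both of the corrections in brackets
taken into account, the logarithm of the quotient of the two sides is a small linear form
`n log φ - m log ρ - log η`, where `η` lies in the sextic field `ℚ(φ, ρ)`. A lower bound for such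
forms bounds first the smaller of the two corrections' exponents, hence the height of the next `η`,
then the other exponent, and finally `n` itself, by a multiple of `(log n) ^ 9`.

The lower bound comes from Baker's method, for `α = φ`, `γ = ρ` and the linear form
`Λ = n log α - m log γ - log η`. At the points `z = (r + t n, s - t m)` of the plane,
`w = z₁ log α + z₂ log γ` equals `log (α ^ r * γ ^ s * η ^ t) + t Λ`. The pigeonhole principle gives
integer coefficients, not all zero, such that an exponential polynomial `∑ Pₖ(z) exp (k w)` is very
small where `z₁` and `w` are bounded. With `α ^ r * γ ^ s * η ^ t` in place of `exp w`, its values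
at these points are algebraic. If `Λ` were too small, their norms would be less than `1`, so they
would vanish for all `(r, s, t)` in a box. This contradicts a zero estimate: the relations at the
points `(z₁ + i, z₂)`, for small `i`, are a linear system for the powers of `α ^ r * γ ^ s * η ^ t`,
whose determinant is a polynomial in `z`, nonzero because its leading coefficient is a Vandermonde
determinant up to a factor. By Bézout, an irreducible curve that is not a line meets each of its
translates in few points, so it has few points on a set with few differences, such as the image of
the box.
-/

namespace LucasPadovan

open scoped Finset Pointwise

/-! ### Bézout's theorem for finite sets -/

section Bezout

open MvPolynomial

lemma two_mul_card_degree_le (D : ℕ) :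
    2 * Nat.card {n : Fin 2 →₀ ℕ | (n.sum fun _ e ↦ e) ≤ D} = (D + 1) * (D + 2) := by
  have sum_eq (n : Fin 2 →₀ ℕ) : (n.sum fun _ e ↦ e) = n 0 + n 1 := by
    simp [Finsupp.sum_fintype]
  have e : {n : Fin 2 →₀ ℕ | (n.sum fun _ e ↦ e) ≤ D} ≃ Σ d : Fin (D + 1), Fin (d + 1) :=
    { toFun n := ⟨⟨n.1 0 + n.1 1, Nat.lt_succ_of_le (sum_eq n.1 ▸ n.2)⟩,
        ⟨n.1 0, Nat.lt_succ_of_le (Nat.le_add_right _ _)⟩⟩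
      invFun p := ⟨Finsupp.equivFunOnFinite.symm ![p.2, p.1 - p.2], by
        have := p.1.2
        have := p.2.2
        simp only [Set.mem_ofPred_eq, sum_eq]
        simp
        omega⟩
      left_inv n := by
        ext i
        fin_cases i <;> simp
      right_inv p := by
        have hle : (p.2 : ℕ) ≤ p.1 := Nat.le_of_lt_succ p.2.2
        have hfst : (p.2 : ℕ) + (p.1 - p.2) = p.1 := by omega
        exact Sigma.ext (Fin.ext (by simpa using hfst))
          ((Fin.heq_ext_iff (by simp [hfst])).mpr (by simp)) }
  rw [Nat.card_congr e, Nat.card_eq_fintype_card, Fintype.card_sigma]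
  simp only [Fintype.card_fin]
  rw [Fin.sum_univ_eq_sum_range (· + 1), Finset.sum_add_distrib, mul_add, mul_comm 2 (∑ i ∈ _, i),
    Finset.sum_range_id_mul_two]
  simp
  ring

variable {σ K : Type*} [Field K]

instance finite_restrictTotalDegree [Finite σ] (D : ℕ) :
    Module.Finite K (restrictTotalDegree σ K D) :=
  have : Finite {n : σ →₀ ℕ | (n.sum fun _ e ↦ e) ≤ D} := (Finsupp.finite_of_degree_le D).subset
    fun _ h ↦ h
  Module.Finite.of_basis (basisRestrictSupport K _)

lemma two_mul_finrank_restrictTotalDegree (D : ℕ) :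
    2 * Module.finrank K (restrictTotalDegree (Fin 2) K D) = (D + 1) * (D + 2) := by
  rw [restrictTotalDegree, Module.finrank_eq_nat_card_basis (basisRestrictSupport K _),
    two_mul_card_degree_le]

/-- Evaluation of polynomials at the points of a finite set, as a linear map. -/
noncomputable def evalOn (A : Finset (σ → K)) : MvPolynomial σ K →ₗ[K] (A → K) :=
  LinearMap.pi fun a ↦ (aeval (a : σ → K)).toLinearMap

@[simp]
lemma evalOn_apply (A : Finset (σ → K)) (p : MvPolynomial σ K) (a : A) :
    evalOn A p a = eval a.1 p := by
  simp [evalOn, aeval_eq_eval]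

lemma exists_totalDegree_le_one_separating {a b : σ → K} (hb : b ≠ a) :
    ∃ q : MvPolynomial σ K, q.totalDegree ≤ 1 ∧ eval a q ≠ 0 ∧ eval b q = 0 := by
  obtain ⟨i, hi⟩ := Function.ne_iff.mp hb
  exact ⟨X i - C (b i), (totalDegree_sub _ _).trans (by simp),
    by simpa [sub_eq_zero] using hi.symm, by simp⟩

lemma exists_totalDegree_le_card_separating (A : Finset (σ → K)) (a : A) :
    ∃ p : MvPolynomial σ K, p.totalDegree ≤ #A ∧ eval a.1 p ≠ 0 ∧
      ∀ b ∈ A, b ≠ a → eval b p = 0 := by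
  classical
  choose! q hdeg hne hzero using
    fun b hb ↦ exists_totalDegree_le_one_separating (a := a.1) (b := b) hb
  refine ⟨∏ b ∈ A.erase a, q b, ?_, ?_, fun b hb hne ↦ ?_⟩
  · refine (totalDegree_finsetProd _ _).trans ((Finset.sum_le_card_nsmul _ _ 1 fun b hb ↦
      hdeg b (Finset.ne_of_mem_erase hb)).trans ?_)
    simp [Finset.card_erase_of_mem a.2]
  · rw [map_prod]
    exact Finset.prod_ne_zero_iff.mpr fun b hb ↦ hne b (Finset.ne_of_mem_erase hb)
  · rw [map_prod]
    exact Finset.prod_eq_zero (Finset.mem_erase.mpr ⟨hne, hb⟩) (hzero b hne)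

lemma map_evalOn_restrictTotalDegree {A : Finset (σ → K)} {D : ℕ} (hD : #A ≤ D) :
    (restrictTotalDegree σ K D).map (evalOn A) = ⊤ := by
  classical
  choose p hdeg hne hzero using exists_totalDegree_le_card_separating A
  refine Submodule.eq_top_iff'.mpr fun f ↦ ⟨∑ a : A, (f a / eval a.1 (p a)) • p a, ?_, ?_⟩
  · exact Submodule.sum_mem _ fun a _ ↦ Submodule.smul_mem _ _
      ((mem_restrictTotalDegree _ _ _).mpr ((hdeg a).trans hD))
  · ext b
    rw [map_sum, Finset.sum_apply, Finset.sum_eq_single b]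
    · simp [hne b]
    · intro a _ hab
      simp [hzero a b.1 b.2 fun h ↦ hab (Subtype.ext h.symm)]
    · simp

lemma finrank_inf_ker_add_finrank_map {V W : Type*} [AddCommGroup V] [Module K V]
    [AddCommGroup W] [Module K W] (f : V →ₗ[K] W) (P : Submodule K V) [Module.Finite K P] :
    Module.finrank K ↥(P ⊓ LinearMap.ker f) + Module.finrank K (P.map f) = Module.finrank K P := by
  rw [← LinearMap.finrank_range_add_finrank_ker (f.domRestrict P), LinearMap.range_domRestrict,
    LinearMap.ker_domRestrict, ← Submodule.finrank_map_subtype_eq, Submodule.map_comap_subtype,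
    add_comm]

section SubmoduleProd

variable {V W : Type*} [AddCommGroup V] [Module K V] [AddCommGroup W] [Module K W]
  (P : Submodule K V) (Q : Submodule K W)

/-- The product of two submodules, as a submodule, is the product of the underlying modules. -/
def submoduleProdEquiv : (P.prod Q) ≃ₗ[K] P × Q where
  toFun x := (⟨x.1.1, x.2.1⟩, ⟨x.1.2, x.2.2⟩)
  invFun y := ⟨(y.1, y.2), y.1.2, y.2.2⟩
  map_add' _ _ := rfl
  map_smul' _ _ := rfl

variable [Module.Finite K P] [Module.Finite K Q]

instance finite_submodule_prod : Module.Finite K (P.prod Q) :=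
  Module.Finite.equiv (submoduleProdEquiv P Q).symm

lemma finrank_submodule_prod :
    Module.finrank K (P.prod Q) = Module.finrank K P + Module.finrank K Q := by
  rw [(submoduleProdEquiv P Q).finrank_eq, Module.finrank_prod]

end SubmoduleProd

/-- The linear map `(u, v) ↦ p * u + q * v`, whose range is the ideal generated by `p` and `q`. -/
noncomputable def linearCombinationMap (p q : MvPolynomial σ K) :
    MvPolynomial σ K × MvPolynomial σ K →ₗ[K] MvPolynomial σ K :=
  (LinearMap.mulLeft K p).coprod (LinearMap.mulLeft K q)

/-- The linear map `s ↦ (-(q * s), p * s)`, which parametrises the relations between two coprime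
polynomials `p` and `q`. -/
noncomputable def syzygyMap (p q : MvPolynomial σ K) :
    MvPolynomial σ K →ₗ[K] MvPolynomial σ K × MvPolynomial σ K :=
  (-LinearMap.mulLeft K q).prod (LinearMap.mulLeft K p)

variable {p q : MvPolynomial σ K}

lemma prod_inf_ker_linearCombinationMap_le (hp : Irreducible p) (hpq : ¬ p ∣ q) (d e : ℕ) :
    (restrictTotalDegree σ K d).prod (restrictTotalDegree σ K (e + p.totalDegree)) ⊓
      LinearMap.ker (linearCombinationMap p q) ≤
        (restrictTotalDegree σ K e).map (syzygyMap p q) := by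
  rintro ⟨u, v⟩ ⟨⟨-, hv⟩, huv⟩
  have hrel : p * u + q * v = 0 := by simpa [linearCombinationMap] using huv
  obtain ⟨s, rfl⟩ : p ∣ v :=
    (hp.prime.dvd_or_dvd ⟨-u, by linear_combination hrel⟩).resolve_left hpq
  have hu : u = -(q * s) := by
    refine mul_left_cancel₀ hp.ne_zero ?_
    linear_combination hrel
  refine ⟨s, (mem_restrictTotalDegree _ _ _).mpr ?_, by simp [syzygyMap, hu]⟩
  by_cases hs : s = 0
  · simp [hs]
  · have := (mem_restrictTotalDegree _ _ _).mp hv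
    rw [totalDegree_mul_of_isDomain hp.ne_zero hs] at this
    omega

lemma map_linearCombinationMap_prod_le (A : Finset (σ → K))
    (hA : ∀ a ∈ A, eval a p = 0 ∧ eval a q = 0) (d : ℕ) :
    ((restrictTotalDegree σ K (d + q.totalDegree)).prod
      (restrictTotalDegree σ K (d + p.totalDegree))).map (linearCombinationMap p q) ≤
        restrictTotalDegree σ K (d + p.totalDegree + q.totalDegree) ⊓ LinearMap.ker (evalOn A) := by
  rintro _ ⟨⟨u, v⟩, ⟨hu, hv⟩, rfl⟩
  refine ⟨(mem_restrictTotalDegree _ _ _).mpr ?_, ?_⟩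
  · replace hu : u.totalDegree ≤ _ := (mem_restrictTotalDegree _ _ _).mp hu
    replace hv : v.totalDegree ≤ _ := (mem_restrictTotalDegree _ _ _).mp hv
    have hpu := totalDegree_mul p u
    have hqv := totalDegree_mul q v
    exact (totalDegree_add (p * u) (q * v)).trans (max_le (by omega) (by omega))
  · refine LinearMap.mem_ker.mpr (funext fun a ↦ ?_)
    simp [linearCombinationMap, hA a a.2]

-- Compare, for `D = #A + deg p + deg q`, the dimension `#A` of the space of values on `A` of
-- polynomials of degree `≤ D` with the codimension of those in the ideal `(p, q)`.
theorem card_common_zeros_le {p q : MvPolynomial (Fin 2) K} (hp : Irreducible p) (hpq : ¬ p ∣ q)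
    (A : Finset (Fin 2 → K)) (hA : ∀ a ∈ A, eval a p = 0 ∧ eval a q = 0) :
    #A ≤ p.totalDegree * q.totalDegree := by
  let V := restrictTotalDegree (Fin 2) K
  let e := p.totalDegree
  let f := q.totalDegree
  have hker : Module.finrank K ↥((V (#A + f)).prod (V (#A + e)) ⊓
      LinearMap.ker (linearCombinationMap p q)) ≤ Module.finrank K (V #A) :=
    (Submodule.finrank_mono (prod_inf_ker_linearCombinationMap_le hp hpq _ _)).trans
      (Submodule.finrank_map_le _ _)
  have hrange := Submodule.finrank_mono (map_linearCombinationMap_prod_le A hA #A)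
  have hsum := finrank_inf_ker_add_finrank_map (linearCombinationMap p q)
    ((V (#A + f)).prod (V (#A + e)))
  rw [finrank_submodule_prod] at hsum
  have heval := finrank_inf_ker_add_finrank_map (evalOn A) (V (#A + e + f))
  rw [map_evalOn_restrictTotalDegree (by omega), finrank_top,
    Module.finrank_fintype_fun_eq_card, Fintype.card_coe] at heval
  have h₁ := two_mul_finrank_restrictTotalDegree (K := K) #A
  have h₂ := two_mul_finrank_restrictTotalDegree (K := K) (#A + e)
  have h₃ := two_mul_finrank_restrictTotalDegree (K := K) (#A + f)
  have h₄ := two_mul_finrank_restrictTotalDegree (K := K) (#A + e + f)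
  nlinarith

end Bezout

section Translate

open MvPolynomial

variable {σ R : Type*} [CommRing R]

/-- The polynomial `x ↦ q (x + v)`. -/
noncomputable def translate (v : σ → R) (q : MvPolynomial σ R) : MvPolynomial σ R :=
  bind₁ (fun i ↦ X i + C (v i)) q

lemma eval_translate (v x : σ → R) (q : MvPolynomial σ R) :
    eval x (translate v q) = eval (x + v) q := by
  rw [translate, ← coe_aeval_eq_eval, RingHom.coe_coe, aeval_bind₁, ← coe_aeval_eq_eval,
    RingHom.coe_coe]
  congr 2
  ext i
  simp

lemma totalDegree_translate_le [Nontrivial R] (v : σ → R) (q : MvPolynomial σ R) :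
    (translate v q).totalDegree ≤ q.totalDegree := by
  rw [translate, bind₁, aeval_def, eval₂_eq]
  refine totalDegree_finsetSum_le fun d hd ↦ ?_
  rw [algebraMap_eq]
  calc (C (coeff d q) * ∏ i ∈ d.support, (X i + C (v i)) ^ d i).totalDegree
      ≤ ∑ i ∈ d.support, ((X i + C (v i)) ^ d i).totalDegree := by
        refine (totalDegree_mul _ _).trans ?_
        rw [totalDegree_C, zero_add]
        exact totalDegree_finsetProd _ _
    _ ≤ ∑ i ∈ d.support, d i := Finset.sum_le_sum (f := fun i ↦ totalDegree ((X i + C (v i)) ^ d i))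
        fun i _ ↦ (totalDegree_pow _ _).trans <| by
        have : (X i + C (v i)).totalDegree ≤ 1 := (totalDegree_add _ _).trans (by simp)
        exact (Nat.mul_le_mul_left _ this).trans_eq (mul_one _)
    _ ≤ q.totalDegree := le_totalDegree hd

end Translate

section Lines

open MvPolynomial

variable {K : Type*} [Field K]

lemma totalDegree_pos_of_irreducible {σ : Type*} {p : MvPolynomial σ K} (hp : Irreducible p) :
    0 < p.totalDegree := by
  by_contra! h
  have hC := totalDegree_eq_zero_iff_eq_C.mp (Nat.le_zero.mp h)
  refine hp.not_isUnit (isUnit_iff_totalDegree_of_isReduced.mpr ⟨?_, Nat.le_zero.mp h⟩)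
  exact isUnit_iff_ne_zero.mpr fun h0 ↦ hp.ne_zero (by rw [hC, h0, map_zero])

/-- The polynomial of degree `1` defining the line through `a` with direction `v`. -/
noncomputable def linePoly (v a : Fin 2 → K) : MvPolynomial (Fin 2) K :=
  C (v 1) * (X 0 - C (a 0)) - C (v 0) * (X 1 - C (a 1))

@[simp]
lemma eval_linePoly (v a x : Fin 2 → K) :
    eval x (linePoly v a) = v 1 * (x 0 - a 0) - v 0 * (x 1 - a 1) := by
  simp [linePoly]

variable {v a : Fin 2 → K}

lemma totalDegree_linePoly (hv : v ≠ 0) : (linePoly v a).totalDegree = 1 := by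
  have hle (i : Fin 2) (s : K) : (C s * (X i - C (a i))).totalDegree ≤ 1 :=
    (totalDegree_mul _ _).trans (by simpa using (totalDegree_sub _ _).trans (by simp))
  refine le_antisymm ((totalDegree_sub _ _).trans (max_le (hle _ _) (hle _ _))) ?_
  by_contra! h
  have hC := totalDegree_eq_zero_iff_eq_C.mp (Nat.lt_one_iff.mp h)
  have hconst (x : Fin 2 → K) : eval x (linePoly v a) = eval a (linePoly v a) := by
    rw [hC, eval_C, eval_C]
  have h₀ := hconst ![a 0 + 1, a 1]
  have h₁ := hconst ![a 0, a 1 + 1]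
  simp only [eval_linePoly, Matrix.cons_val_zero, Matrix.cons_val_one] at h₀ h₁
  refine hv (funext fun i ↦ ?_)
  fin_cases i
  · simp only [Fin.zero_eta, Pi.zero_apply]
    linear_combination -h₁
  · simp only [Fin.mk_one, Pi.zero_apply]
    linear_combination h₀

lemma irreducible_linePoly (hv : v ≠ 0) : Irreducible (linePoly v a) := by
  have hdeg := totalDegree_linePoly (a := a) hv
  refine irreducible_of_totalDegree_eq_one hdeg fun x hx ↦ isUnit_iff_ne_zero.mpr ?_
  rintro rfl
  have : linePoly v a = 0 := MvPolynomial.ext _ _ fun i ↦ by simpa using hx i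
  simp [this] at hdeg

lemma associated_linePoly_of_dvd {q : MvPolynomial (Fin 2) K} (hq : Irreducible q) (hv : v ≠ 0)
    (h : linePoly v a ∣ q) : Associated (linePoly v a) q :=
  (irreducible_linePoly hv).associated_of_dvd hq h

lemma eval_eq_zero_of_dvd {σ : Type*} {p q : MvPolynomial σ K} {x : σ → K} (h : p ∣ q)
    (hp : eval x p = 0) : eval x q = 0 :=
  zero_dvd_iff.mp (hp ▸ map_dvd (eval x) h)

lemma linePoly_dvd_of_forall_eval_eq_zero [CharZero K] {q : MvPolynomial (Fin 2) K} (hv : v ≠ 0)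
    (h : ∀ k : ℕ, eval (a + (k : K) • v) q = 0) : linePoly v a ∣ q := by
  classical
  by_contra hn
  have hinj : Function.Injective fun k : ℕ ↦ a + (k : K) • v :=
    (add_right_injective a).comp ((smul_left_injective K hv).comp Nat.cast_injective)
  have hcard := card_common_zeros_le (irreducible_linePoly hv) hn
    ((Finset.range (q.totalDegree + 1)).image fun k : ℕ ↦ a + (k : K) • v) fun x hx ↦ by
      obtain ⟨k, -, rfl⟩ := Finset.mem_image.mp hx
      refine ⟨?_, h k⟩
      simp
      ring
  rw [Finset.card_image_of_injective _ hinj, Finset.card_range, totalDegree_linePoly hv] at hcard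
  omega

lemma linePoly_dvd_of_dvd_translate [CharZero K] {q : MvPolynomial (Fin 2) K} (hv : v ≠ 0)
    (ha : eval a q = 0) (hdvd : q ∣ translate v q) : linePoly v a ∣ q := by
  refine linePoly_dvd_of_forall_eval_eq_zero hv fun k ↦ ?_
  induction k with
  | zero => simpa using ha
  | succ k ih =>
    have := eval_eq_zero_of_dvd hdvd ih
    rw [eval_translate] at this
    rw [Nat.cast_succ, add_smul, one_smul, ← add_assoc, this]

end Lines

section ZeroCount

open MvPolynomial

variable {K : Type*} [Field K]

lemma card_filter_le_mul_totalDegree {σ : Type*} (P : MvPolynomial σ K → (σ → K) → Prop)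
    [∀ q, DecidablePred (P q)] (S : Finset (σ → K)) (M : ℕ) (hunit : ∀ u x, IsUnit u → ¬ P u x)
    (hmul : ∀ p q x, Irreducible p → P (p * q) x → P p x ∨ P q x)
    (hirr : ∀ p, Irreducible p → #{x ∈ S | P p x} ≤ M * p.totalDegree) {Q : MvPolynomial σ K}
    (hQ : Q ≠ 0) : #{x ∈ S | P Q x} ≤ M * Q.totalDegree := by
  classical
  induction Q using WfDvdMonoid.induction_on_irreducible with
  | zero => exact absurd rfl hQ
  | unit u hu => simp [Finset.filter_eq_empty_iff.mpr fun x _ ↦ hunit u x hu]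
  | mul q p hq hp ih =>
    rw [totalDegree_mul_of_isDomain hp.ne_zero hq, mul_add]
    calc #{x ∈ S | P (p * q) x} ≤ #{x ∈ S | P p x ∨ P q x} :=
          Finset.card_le_card (Finset.monotone_filter_right _ fun x _ ↦ hmul p q x hp)
      _ ≤ #{x ∈ S | P p x} + #{x ∈ S | P q x} := by
          rw [Finset.filter_or]
          exact Finset.card_union_le _ _
      _ ≤ _ := add_le_add (hirr p hp) (ih hq)

variable [DecidableEq K]

lemma card_filter_sub_eq_le {q : MvPolynomial (Fin 2) K} (hq : Irreducible q) {v : Fin 2 → K}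
    (hv : ¬ q ∣ translate v q) (A : Finset (Fin 2 → K)) (hA : ∀ a ∈ A, eval a q = 0) :
    #{x ∈ A.offDiag | x.2 - x.1 = v} ≤ q.totalDegree * q.totalDegree := by
  rw [← Finset.card_image_of_injOn (f := Prod.fst)]
  · refine (card_common_zeros_le hq hv _ fun x hx ↦ ?_).trans
      (Nat.mul_le_mul_left _ (totalDegree_translate_le v q))
    simp only [Finset.mem_image, Finset.mem_filter, Finset.mem_offDiag] at hx
    obtain ⟨⟨x, y⟩, ⟨⟨hx, hy, -⟩, rfl⟩, rfl⟩ := hx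
    rw [eval_translate]
    exact ⟨hA _ hx, by simpa using hA _ hy⟩
  · rintro ⟨x, y⟩ hxy ⟨x', y'⟩ hxy' rfl
    simp only [Finset.coe_filter, Set.mem_ofPred_eq] at hxy hxy'
    simpa using hxy.2.trans hxy'.2.symm

lemma card_le_of_forall_not_dvd_translate {q : MvPolynomial (Fin 2) K} (hq : Irreducible q)
    {A : Finset (Fin 2 → K)} (hA : ∀ a ∈ A, eval a q = 0) {c : ℕ} (hc : #(A - A) ≤ c ^ 2)
    (h : ∀ v ∈ A - A, v ≠ 0 → ¬ q ∣ translate v q) : #A ≤ c * q.totalDegree + 1 := by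
  have hoff : #A.offDiag ≤ (c * q.totalDegree) ^ 2 := by
    refine (Finset.card_le_mul_card_image_of_maps_to (f := fun x ↦ x.2 - x.1)
      (t := (A - A).erase 0) (fun x hx ↦ ?_) (q.totalDegree * q.totalDegree) fun v hv ↦ ?_).trans ?_
    · rw [Finset.mem_offDiag] at hx
      exact Finset.mem_erase.mpr
        ⟨sub_ne_zero.mpr hx.2.2.symm, Finset.sub_mem_sub hx.2.1 hx.1⟩
    · rw [Finset.mem_erase] at hv
      exact card_filter_sub_eq_le hq (h v hv.2 hv.1) A hA
    · rw [mul_pow, sq q.totalDegree, mul_comm]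
      exact Nat.mul_le_mul_right _ ((Finset.card_le_card (Finset.erase_subset _ _)).trans hc)
  rw [Finset.offDiag_card, Nat.sub_le_iff_le_add] at hoff
  by_contra! hlt
  obtain ⟨k, hk⟩ := Nat.exists_eq_add_of_lt hlt
  rw [hk] at hoff
  nlinarith [Nat.zero_le (c * q.totalDegree * k), Nat.zero_le (k * k)]

lemma card_filter_eval_eq_zero_le_of_irreducible [CharZero K] {q : MvPolynomial (Fin 2) K}
    (hq : Irreducible q) {S : Finset (Fin 2 → K)} {c M : ℕ} (hc : #(S - S) ≤ c ^ 2) (hcM : c < M)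
    (hline : ∀ v ∈ S - S, v ≠ 0 → ∀ a ∈ S, #{x ∈ S | eval x (linePoly v a) = 0} ≤ M) :
    #{x ∈ S | eval x q = 0} ≤ M * q.totalDegree := by
  have hdeg := totalDegree_pos_of_irreducible hq
  set A := {x ∈ S | eval x q = 0}
  have hAS : A ⊆ S := Finset.filter_subset _ _
  have hsub : A - A ⊆ S - S := Finset.sub_subset_sub hAS hAS
  have hzero : ∀ a ∈ A, eval a q = 0 := fun a ha ↦ (Finset.mem_filter.mp ha).2
  by_cases hcase : ∀ v ∈ A - A, v ≠ 0 → ¬ q ∣ translate v q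
  · have := card_le_of_forall_not_dvd_translate hq hzero
      ((Finset.card_le_card hsub).trans hc) hcase
    nlinarith
  · push Not at hcase
    obtain ⟨v, hv, hv0, hdvd⟩ := hcase
    obtain ⟨a, ha, -, -, -⟩ := Finset.mem_sub.mp hv
    have hassoc := associated_linePoly_of_dvd hq hv0
      (linePoly_dvd_of_dvd_translate hv0 (hzero a ha) hdvd)
    calc #A ≤ #{x ∈ S | eval x (linePoly v a) = 0} :=
          Finset.card_le_card fun x hx ↦ Finset.mem_filter.mpr
            ⟨hAS hx, eval_eq_zero_of_dvd hassoc.symm.dvd (hzero x hx)⟩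
      _ ≤ M := hline v (hsub hv) hv0 a (hAS ha)
      _ ≤ M * q.totalDegree := Nat.le_mul_of_pos_right _ hdeg

theorem card_filter_eval_eq_zero_le [CharZero K] {Q : MvPolynomial (Fin 2) K} (hQ : Q ≠ 0)
    {S : Finset (Fin 2 → K)} {c M : ℕ} (hc : #(S - S) ≤ c ^ 2) (hcM : c < M)
    (hline : ∀ v ∈ S - S, v ≠ 0 → ∀ a ∈ S, #{x ∈ S | eval x (linePoly v a) = 0} ≤ M) :
    #{x ∈ S | eval x Q = 0} ≤ M * Q.totalDegree :=
  card_filter_le_mul_totalDegree (fun q x ↦ eval x q = 0) S M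
    (fun _ x hu ↦ (hu.map (eval x)).ne_zero) (fun p q x _ h ↦ by simpa using h)
    (fun _ hp ↦ card_filter_eval_eq_zero_le_of_irreducible hp hc hcM hline) hQ

open Classical in
theorem card_filter_exists_linePoly_dvd_le {Q : MvPolynomial (Fin 2) K} (hQ : Q ≠ 0)
    {S : Finset (Fin 2 → K)} {M : ℕ}
    (hline : ∀ v ≠ 0, ∀ a ∈ S, #{x ∈ S | eval x (linePoly v a) = 0} ≤ M) :
    #{x ∈ S | ∃ v ≠ 0, linePoly v x ∣ Q} ≤ M * Q.totalDegree := by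
  refine card_filter_le_mul_totalDegree (fun q x ↦ ∃ v ≠ 0, linePoly v x ∣ q) S M ?_ ?_ ?_ hQ
  · rintro u x hu ⟨v, hv, hdvd⟩
    exact (irreducible_linePoly hv).not_isUnit (isUnit_of_dvd_unit hdvd hu)
  · rintro p q x - ⟨v, hv, hdvd⟩
    exact ((irreducible_linePoly hv).prime.dvd_or_dvd hdvd).imp (⟨v, hv, ·⟩) (⟨v, hv, ·⟩)
  · intro p hp
    rcases Finset.eq_empty_or_nonempty {x ∈ S | ∃ v ≠ 0, linePoly v x ∣ p} with h | ⟨a, ha⟩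
    · simp [h]
    · obtain ⟨haS, v, hv, hdvd⟩ := Finset.mem_filter.mp ha
      refine ((Finset.card_le_card fun x hx ↦ ?_).trans (hline v hv a haS)).trans
        (Nat.le_mul_of_pos_right _ (totalDegree_pos_of_irreducible hp))
      obtain ⟨hxS, w, hw, hdvd'⟩ := Finset.mem_filter.mp hx
      have hassoc := (associated_linePoly_of_dvd hp hw hdvd').trans
        (associated_linePoly_of_dvd hp hv hdvd).symm
      exact Finset.mem_filter.mpr ⟨hxS, eval_eq_zero_of_dvd hassoc.dvd (by simp)⟩

end ZeroCount

/-! ### The zero estimate -/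

section ShiftMatrix

open Polynomial

lemma coeff_prod_sum_of_natDegree_le {ι R : Type*} [CommSemiring R] (s : Finset ι) (f : ι → R[X])
    (d : ι → ℕ) (h : ∀ i ∈ s, (f i).natDegree ≤ d i) :
    (∏ i ∈ s, f i).coeff (∑ i ∈ s, d i) = ∏ i ∈ s, (f i).coeff (d i) := by
  classical
  induction s using Finset.induction_on with
  | empty => simp
  | insert a s ha ih =>
    rw [Finset.forall_mem_insert] at h
    rw [Finset.prod_insert ha, Finset.sum_insert ha, Finset.prod_insert ha,
      coeff_mul_add_eq_of_natDegree_le h.1 ((natDegree_prod_le _ _).trans (Finset.sum_le_sum h.2)),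
      ih h.2]

variable {R : Type*} [CommRing R] {N : ℕ}

/-- The matrix of the linear system satisfied by the powers `Z ^ e j` when the exponential
polynomial `∑ j, Q j (u) * (ζ ^ u * Z) ^ e j` vanishes at `u, u + 1, …, u + N - 1`. -/
noncomputable def shiftMatrix (Q : Fin N → R[X]) (e : Fin N → ℕ) (ζ : R) :
    Matrix (Fin N) (Fin N) R[X] :=
  Matrix.of fun i j ↦ taylor (i : R) (Q j) * C ((ζ ^ e j) ^ (i : ℕ))

lemma natDegree_shiftMatrix_le (Q : Fin N → R[X]) (e : Fin N → ℕ) (ζ : R) (i j : Fin N) :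
    (shiftMatrix Q e ζ i j).natDegree ≤ (Q j).natDegree :=
  (natDegree_mul_C_le _ _).trans_eq (natDegree_taylor _ _)

lemma natDegree_det_shiftMatrix_le {Q : Fin N → R[X]} {d : ℕ} (hQ : ∀ j, (Q j).natDegree ≤ d)
    (e : Fin N → ℕ) (ζ : R) : (shiftMatrix Q e ζ).det.natDegree ≤ N * d := by
  rw [Matrix.det_apply]
  refine natDegree_sum_le_of_forall_le _ _ fun σ _ ↦ (natDegree_smul_le _ _).trans
    ((natDegree_prod_le _ _).trans ?_)
  simpa using Finset.sum_le_card_nsmul Finset.univ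
    (fun j ↦ (shiftMatrix Q e ζ (σ j) j).natDegree) d
    fun j _ ↦ (natDegree_shiftMatrix_le Q e ζ _ j).trans (hQ j)

lemma coeff_det_shiftMatrix (Q : Fin N → R[X]) (e : Fin N → ℕ) (ζ : R) :
    (shiftMatrix Q e ζ).det.coeff (∑ j, (Q j).natDegree) =
      (∏ j, (Q j).leadingCoeff) * (Matrix.vandermonde fun j ↦ ζ ^ e j).det := by
  rw [← Matrix.det_transpose (Matrix.vandermonde _), Matrix.det_apply, Matrix.det_apply,
    finsetSum_coeff, Finset.mul_sum]
  refine Finset.sum_congr rfl fun σ _ ↦ ?_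
  rw [coeff_smul, coeff_prod_sum_of_natDegree_le _ _ _
    fun j _ ↦ natDegree_shiftMatrix_le Q e ζ (σ j) j, mul_smul_comm, ← Finset.prod_mul_distrib]
  simp [shiftMatrix, Matrix.vandermonde_apply, coeff_taylor_natDegree, coeff_mul_C, -map_pow]

-- The leading coefficient of the determinant is a Vandermonde determinant up to a nonzero factor.
lemma det_shiftMatrix_ne_zero [IsDomain R] {Q : Fin N → R[X]} (hQ : ∀ j, Q j ≠ 0) {e : Fin N → ℕ}
    {ζ : R} (hζ : Function.Injective fun j ↦ ζ ^ e j) : (shiftMatrix Q e ζ).det ≠ 0 := by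
  intro hdet
  have hcoeff := coeff_det_shiftMatrix Q e ζ
  rw [hdet, coeff_zero] at hcoeff
  exact mul_ne_zero (Finset.prod_ne_zero_iff.mpr fun j _ ↦ leadingCoeff_ne_zero.mpr (hQ j))
    (Matrix.det_vandermonde_ne_zero_iff.mpr hζ) hcoeff.symm

lemma exists_embedding_range_iff_ne_zero {α : Type*} [Zero α] {M : ℕ} {P : Fin M → α}
    (hP : ∃ l, P l ≠ 0) :
    ∃ N, 0 < N ∧ N ≤ M ∧ ∃ e : Fin N ↪ Fin M, ∀ l, l ∈ Set.range e ↔ P l ≠ 0 := by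
  classical
  let s : Finset (Fin M) := {l | P l ≠ 0}
  obtain ⟨l, hl⟩ := hP
  refine ⟨#s, Finset.card_pos.mpr ⟨l, by simp [s, hl]⟩, card_finset_fin_le s,
    (s.orderEmbOfFin rfl).toEmbedding, fun l ↦ ?_⟩
  simp [s]

lemma det_eq_zero_of_sum_mul_pow_eq_zero [IsDomain R] (hN : 0 < N)
    {A : Matrix (Fin N) (Fin N) R} (e : Fin N → ℕ) {Z : R} (hZ : Z ≠ 0)
    (h : ∀ i, ∑ j, A i j * Z ^ e j = 0) : A.det = 0 := by
  by_contra hdet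
  have := congrFun (Matrix.eq_zero_of_mulVec_eq_zero hdet (v := fun j ↦ Z ^ e j) (funext h)) ⟨0, hN⟩
  exact pow_ne_zero _ hZ this

variable {K : Type*} [Field K] {M : ℕ} {ζ : K}

theorem card_le_of_exponential_polynomial_eq_zero (hζ : Function.Injective (ζ ^ · : ℕ → K))
    {Q : Fin M → K[X]} (hQ : ∃ l, Q l ≠ 0) {d : ℕ} (hd : ∀ l, (Q l).natDegree ≤ d) {U : Finset K}
    (hU : ∀ u ∈ U, ∃ Z : K, Z ≠ 0 ∧
      ∀ i < M, ∑ l, (Q l).eval (u + i) * (ζ ^ i * Z) ^ (l : ℕ) = 0) :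
    #U ≤ M * d := by
  classical
  obtain ⟨N, hN, hNM, e, he⟩ := exists_embedding_range_iff_ne_zero hQ
  set A := shiftMatrix (Q ∘ e) (fun j ↦ (e j : ℕ)) ζ with hA
  have hdet : A.det ≠ 0 := det_shiftMatrix_ne_zero (fun j ↦ (he _).mp ⟨j, rfl⟩)
    (hζ.comp (Fin.val_injective.comp e.injective))
  have hroot : ∀ u ∈ U, A.det.eval u = 0 := fun u hu ↦ by
    obtain ⟨Z, hZ, hzero⟩ := hU u hu
    rw [← coe_evalRingHom, RingHom.map_det]
    refine det_eq_zero_of_sum_mul_pow_eq_zero hN (fun j ↦ (e j : ℕ)) hZ fun i ↦ ?_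
    rw [← hzero i (i.2.trans_le hNM)]
    refine Fintype.sum_of_injective e e.injective _ _ (fun l hl ↦ ?_) fun j ↦ ?_
    · simp [not_not.mp (mt (he l).mpr hl)]
    · simp [hA, shiftMatrix, taylor_eval]
      ring
  have hsub : U ⊆ A.det.roots.toFinset := fun u hu ↦ by simp [hdet, hroot u hu]
  calc #U ≤ A.det.natDegree :=
        (Finset.card_le_card hsub).trans ((Multiset.toFinset_card_le _).trans (card_roots' _))
    _ ≤ N * d := natDegree_det_shiftMatrix_le (fun j ↦ hd _) _ ζ
    _ ≤ M * d := Nat.mul_le_mul_right _ hNM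

end ShiftMatrix

section MultivariateShift

open MvPolynomial

variable {R K : Type*} [CommRing R] [Field K]

lemma totalDegree_det_le {σ : Type*} {N d : ℕ}
    {A : Matrix (Fin N) (Fin N) (MvPolynomial σ R)} (hA : ∀ i j, (A i j).totalDegree ≤ d) :
    A.det.totalDegree ≤ N * d := by
  rw [Matrix.det_apply]
  refine totalDegree_finsetSum_le fun τ _ ↦ ?_
  have hsign : (Equiv.Perm.sign τ • ∏ j, A (τ j) j).totalDegree = (∏ j, A (τ j) j).totalDegree := by
    rcases Int.units_eq_one_or (Equiv.Perm.sign τ) with h | h <;> simp [h, Units.neg_smul]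
  rw [hsign]
  refine (totalDegree_finsetProd _ _).trans ?_
  simpa using Finset.sum_le_card_nsmul Finset.univ (fun j ↦ (A (τ j) j).totalDegree) d
    fun j _ ↦ hA _ j

lemma finSuccEquiv_C {n : ℕ} (t : R) : finSuccEquiv R n (C t) = Polynomial.C (C t) :=
  (finSuccEquiv R n).commutes t

lemma finSuccEquiv_translate_single {n : ℕ} (t : R)
    (p : MvPolynomial (Fin (n + 1)) R) :
    finSuccEquiv R n (translate (Pi.single 0 t) p) =
      Polynomial.taylor (C t) (finSuccEquiv R n p) := by
  have h : (finSuccEquiv R n).toAlgHom.comp (bind₁ fun i ↦ X i + C ((Pi.single 0 t : _ → R) i)) =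
      ((Polynomial.taylorAlgHom (C t : MvPolynomial (Fin n) R)).restrictScalars R).comp
        (finSuccEquiv R n).toAlgHom := by
    refine algHom_ext fun i ↦ ?_
    cases i using Fin.cases <;> simp [finSuccEquiv_X_zero, finSuccEquiv_X_succ, finSuccEquiv_C]
  exact DFunLike.congr_fun h p

theorem exists_polynomial_of_exponential_polynomial {M n : ℕ} {ζ : K}
    (hζ : Function.Injective (ζ ^ · : ℕ → K)) {P : Fin M → MvPolynomial (Fin (n + 1)) K}
    (hP : ∃ l, P l ≠ 0) {d : ℕ} (hd : ∀ l, (P l).totalDegree ≤ d) :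
    ∃ Δ : MvPolynomial (Fin (n + 1)) K, Δ ≠ 0 ∧ Δ.totalDegree ≤ M * d ∧ ∀ x (Z : K), Z ≠ 0 →
      (∀ i < M, ∑ l, eval (x + Pi.single 0 (i : K)) (P l) * (ζ ^ i * Z) ^ (l : ℕ) = 0) →
        eval x Δ = 0 := by
  obtain ⟨N, hN, hNM, e, he⟩ := exists_embedding_range_iff_ne_zero hP
  let A : Matrix (Fin N) (Fin N) (MvPolynomial (Fin (n + 1)) K) :=
    Matrix.of fun i j ↦ translate (Pi.single 0 (i : K)) (P (e j)) * C ((ζ ^ (e j : ℕ)) ^ (i : ℕ))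
  have hshift : (finSuccEquiv K n).toRingHom.mapMatrix A =
      shiftMatrix (fun j ↦ finSuccEquiv K n (P (e j))) (fun j ↦ (e j : ℕ)) (C ζ) := by
    ext1 i j
    simp [A, shiftMatrix, finSuccEquiv_translate_single, finSuccEquiv_C]
  refine ⟨A.det, fun hdet ↦ ?_, ?_, fun x Z hZ hzero ↦ ?_⟩
  · refine det_shiftMatrix_ne_zero (fun j ↦ ?_) ?_
      (hshift ▸ (RingHom.map_det _ A).symm.trans (by rw [hdet, map_zero]))
    · exact (map_ne_zero_iff _ (finSuccEquiv K n).injective).mpr ((he _).mp ⟨j, rfl⟩)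
    · intro j j' hj
      simp only [← map_pow] at hj
      exact e.injective (Fin.val_injective (hζ (C_injective _ _ hj)))
  · refine (totalDegree_det_le fun i j ↦ (totalDegree_mul _ _).trans ?_).trans
      (Nat.mul_le_mul_right d hNM)
    rw [totalDegree_C, add_zero]
    exact (totalDegree_translate_le _ _).trans (hd _)
  · rw [RingHom.map_det]
    refine det_eq_zero_of_sum_mul_pow_eq_zero hN (fun j ↦ (e j : ℕ)) hZ fun i ↦ ?_
    rw [← hzero i (i.2.trans_le hNM)]
    refine Fintype.sum_of_injective e e.injective _ _ (fun l hl ↦ ?_) fun j ↦ ?_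
    · simp [not_not.mp (mt (he l).mpr hl)]
    · simp [A, eval_translate]
      ring

end MultivariateShift

section LineGeometry

open MvPolynomial

variable {K : Type*} [Field K] {v a : Fin 2 → K}

lemma exists_eq_add_smul_of_eval_linePoly_eq_zero (hv : v ≠ 0) {x : Fin 2 → K}
    (hx : eval x (linePoly v a) = 0) : ∃ u : K, x = a + u • v := by
  rw [eval_linePoly] at hx
  by_cases h0 : v 0 = 0
  · have h1 : v 1 ≠ 0 := fun h1 ↦ hv (funext fun i ↦ by fin_cases i <;> assumption)
    have hx0 : x 0 - a 0 = 0 := by simpa [h0, h1] using hx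
    refine ⟨(x 1 - a 1) / v 1, funext fun i ↦ ?_⟩
    fin_cases i
    · simpa [h0] using sub_eq_zero.mp hx0
    · simp [h1]
  · refine ⟨(x 0 - a 0) / v 0, funext fun i ↦ ?_⟩
    fin_cases i
    · simp [h0]
    · simp only [Fin.mk_one, Pi.add_apply, Pi.smul_apply, smul_eq_mul]
      field_simp
      linear_combination -hx

lemma eval_linePoly_eq_zero_of_parallel {w : Fin 2 → K} (hv : v ≠ 0) (hw : v 1 * w 0 = v 0 * w 1)
    {x : Fin 2 → K} (hx : eval x (linePoly v a) = 0) : eval x (linePoly w a) = 0 := by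
  obtain ⟨u, rfl⟩ := exists_eq_add_smul_of_eval_linePoly_eq_zero hv hx
  simp only [eval_linePoly, Pi.add_apply, Pi.smul_apply, smul_eq_mul]
  linear_combination -u * hw

/-- The restriction of a bivariate polynomial to the line through `a` with direction `v`. -/
noncomputable def lineRestrict (v a : Fin 2 → K) : MvPolynomial (Fin 2) K →ₐ[K] Polynomial K :=
  aeval fun i ↦ Polynomial.C (a i) + Polynomial.C (v i) * Polynomial.X

lemma eval_lineRestrict (u : K) (f : MvPolynomial (Fin 2) K) :
    (lineRestrict v a f).eval u = eval (a + u • v) f := by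
  have h : (Polynomial.aeval u).comp (lineRestrict v a) = aeval (a + u • v) :=
    algHom_ext fun i ↦ by simp [lineRestrict, mul_comm u]
  simpa [aeval_eq_eval, Polynomial.coe_aeval_eq_eval] using DFunLike.congr_fun h f

lemma natDegree_lineRestrict_le (f : MvPolynomial (Fin 2) K) :
    (lineRestrict v a f).natDegree ≤ f.totalDegree := by
  simpa [lineRestrict] using aeval_natDegree_le f le_rfl
    (fun i ↦ Polynomial.C (a i) + Polynomial.C (v i) * Polynomial.X) (n := 1)
    fun i ↦ by compute_degree

lemma lineRestrict_ne_zero [CharZero K] {f : MvPolynomial (Fin 2) K} (hv : v ≠ 0)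
    (hf : ¬ linePoly v a ∣ f) : lineRestrict v a f ≠ 0 := fun h ↦
  hf (linePoly_dvd_of_forall_eval_eq_zero hv fun k ↦ by
    rw [← eval_lineRestrict, h, Polynomial.eval_zero])

end LineGeometry

section Box

/-- The integer points of `[-R, R] × [-S, S] × [-T, T]`. -/
noncomputable def box (R S T : ℕ) : Finset (ℤ × ℤ × ℤ) :=
  Finset.Icc (-(R : ℤ)) R ×ˢ Finset.Icc (-(S : ℤ)) S ×ˢ Finset.Icc (-(T : ℤ)) T

lemma mem_box {R S T : ℕ} {x : ℤ × ℤ × ℤ} :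
    x ∈ box R S T ↔ |x.1| ≤ R ∧ |x.2.1| ≤ S ∧ |x.2.2| ≤ T := by
  simp [box, abs_le]

lemma card_box (R S T : ℕ) : #(box R S T) = (2 * R + 1) * ((2 * S + 1) * (2 * T + 1)) := by
  simp only [box, Finset.card_product, Int.card_Icc]
  congr 1
  · lia
  · congr 1 <;> lia

lemma box_sub_box_subset (R S T : ℕ) : box R S T - box R S T ⊆ box (2 * R) (2 * S) (2 * T) := by
  intro z hz
  obtain ⟨x, hx, y, hy, rfl⟩ := Finset.mem_sub.mp hz
  simp only [mem_box, Prod.fst_sub, Prod.snd_sub] at *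
  push_cast
  exact ⟨(abs_sub _ _).trans (by linarith), (abs_sub _ _).trans (by linarith),
    (abs_sub _ _).trans (by linarith)⟩

/-- The homomorphism `(r, s, t) ↦ (r + t n, s - t m)`. -/
noncomputable def latticePoint (n m : ℤ) : ℤ × ℤ × ℤ →+ (Fin 2 → ℝ) where
  toFun x := ![x.1 + x.2.2 * n, x.2.1 - x.2.2 * m]
  map_zero' := by simp
  map_add' x y := by
    ext i
    fin_cases i <;> simp <;> ring

variable {n m : ℤ} {R S T : ℕ}

lemma latticePoint_apply_zero (x : ℤ × ℤ × ℤ) : latticePoint n m x 0 = x.1 + x.2.2 * n := rfl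

lemma latticePoint_apply_one (x : ℤ × ℤ × ℤ) : latticePoint n m x 1 = x.2.1 - x.2.2 * m := rfl

lemma latticePoint_injOn_box (hn : 2 * (R : ℤ) < n) :
    Set.InjOn (latticePoint n m) (box R S T : Set (ℤ × ℤ × ℤ)) := by
  intro x hx y hy h
  obtain ⟨hx₁, -, -⟩ := mem_box.mp hx
  obtain ⟨hy₁, -, -⟩ := mem_box.mp hy
  have h₀ : x.1 + x.2.2 * n = y.1 + y.2.2 * n := by
    exact_mod_cast (latticePoint_apply_zero x).symm.trans
      ((congrFun h 0).trans (latticePoint_apply_zero y))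
  have h₁ : x.2.1 - x.2.2 * m = y.2.1 - y.2.2 * m := by
    exact_mod_cast (latticePoint_apply_one x).symm.trans
      ((congrFun h 1).trans (latticePoint_apply_one y))
  have ht : x.2.2 - y.2.2 = 0 := by
    by_contra! hne
    have hle : |(x.2.2 - y.2.2) * n| ≤ 2 * R := by
      rw [show (x.2.2 - y.2.2) * n = y.1 - x.1 by linarith]
      exact (abs_sub _ _).trans (by linarith)
    rw [abs_mul] at hle
    nlinarith [Int.one_le_abs hne, le_abs_self n, abs_nonneg n]
  have ht' : x.2.2 = y.2.2 := by linarith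
  rw [ht'] at h₀ h₁
  exact Prod.ext (by linarith) (Prod.ext (by linarith) ht')

lemma exists_pair_eq_abs_sub_lt {β : Type*} {Y : Finset β} {t f : β → ℤ} {T B D : ℕ} (hD : 0 < D)
    (ht : ∀ y ∈ Y, |t y| ≤ T) (hf : ∀ y ∈ Y, |f y| ≤ B)
    (hcard : (2 * T + 1) * (2 * B / D + 1) < #Y) :
    ∃ y ∈ Y, ∃ y' ∈ Y, y ≠ y' ∧ t y = t y' ∧ |f y' - f y| < D := by
  have hD' : (0 : ℤ) < D := mod_cast hD
  obtain ⟨y, hy, y', hy', hne, heq⟩ := Finset.exists_ne_map_eq_of_card_lt_of_maps_to (s := Y)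
    (t := Finset.Icc (-(T : ℤ)) T ×ˢ Finset.Icc (0 : ℤ) ((2 * B / D : ℕ) : ℤ))
    (f := fun y ↦ (t y, (f y + B) / D))
    (by
      rw [Finset.card_product, Int.card_Icc, Int.card_Icc]
      convert hcard using 2 <;> lia)
    fun y hy ↦ by
      have hfy := abs_le.mp (hf y hy)
      simp only [Finset.mem_coe, Finset.mem_product, Finset.mem_Icc]
      refine ⟨abs_le.mp (ht y hy), Int.ediv_nonneg (by linarith) hD'.le, ?_⟩
      push_cast
      exact Int.ediv_le_ediv hD' (by linarith)
  obtain ⟨heq₁, heq₂⟩ := Prod.ext_iff.mp heq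
  refine ⟨y, hy, y', hy', hne, heq₁, ?_⟩
  have hy_div := Int.mul_ediv_add_emod (f y + B) D
  have hy'_div := Int.mul_ediv_add_emod (f y' + B) D
  simp only at heq₂
  rw [heq₂] at hy_div
  rw [abs_lt]
  constructor <;>
    linarith [Int.emod_nonneg (f y + B) hD'.ne', Int.emod_nonneg (f y' + B) hD'.ne',
      Int.emod_lt_of_pos (f y + B) hD', Int.emod_lt_of_pos (f y' + B) hD']

lemma abs_le_abs_of_mul_eq_mul {a b : ℝ} {p q : ℤ} (ha : a ≠ 0) (hab : |b| ≤ |a|)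
    (h : b * p = a * q) : |q| ≤ |p| := by
  have : |a| * |(q : ℝ)| ≤ |a| * |(p : ℝ)| := by
    rw [← abs_mul, ← h, abs_mul]
    gcongr
  exact_mod_cast le_of_mul_le_mul_left this (abs_pos.mpr ha)

lemma card_le_or_exists_direction {B D : ℕ} (hD : 0 < D) (hR : R ≤ B) (hS : S ≤ B)
    {v a : Fin 2 → ℝ} (hv : v ≠ 0) {Y : Finset (ℤ × ℤ × ℤ)} (hY : Y ⊆ box R S T)
    (hline : ∀ y ∈ Y, MvPolynomial.eval (latticePoint n m y) (linePoly v a) = 0) :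
    #Y ≤ (2 * T + 1) * (2 * B / D + 1) ∨
      ∃ p q : ℤ, (p ≠ 0 ∨ q ≠ 0) ∧ |p| < D ∧ |q| < D ∧ v 1 * p = v 0 * q := by
  rw [or_iff_not_imp_left, not_le]
  intro hcard
  have hbox (y) (hy : y ∈ Y) := mem_box.mp (hY hy)
  have hdiff : ∀ y ∈ Y, ∀ y' ∈ Y, y.2.2 = y'.2.2 →
      v 1 * ((y'.1 - y.1 : ℤ) : ℝ) = v 0 * ((y'.2.1 - y.2.1 : ℤ) : ℝ) := by
    intro y hy y' hy' ht
    have h := hline y hy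
    have h' := hline y' hy'
    simp only [eval_linePoly, latticePoint_apply_zero, latticePoint_apply_one] at h h'
    rw [← ht] at h'
    push_cast
    linarith
  have hnonzero (y y' : ℤ × ℤ × ℤ) (hne : y ≠ y') (ht : y.2.2 = y'.2.2) :
      y'.1 - y.1 ≠ 0 ∨ y'.2.1 - y.2.1 ≠ 0 := by
    by_contra! h
    exact hne (Prod.ext (by lia) (Prod.ext (by lia) ht))
  have hv' : ¬(v 0 = 0 ∧ v 1 = 0) := fun h ↦
    hv (funext fun i ↦ by fin_cases i; exacts [h.1, h.2])
  rcases le_total |v 1| |v 0| with hle | hle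
  · have h0 : v 0 ≠ 0 := fun h ↦ hv' ⟨h, by simpa [h] using hle⟩
    obtain ⟨y, hy, y', hy', hne, ht, hlt⟩ := exists_pair_eq_abs_sub_lt (f := fun y ↦ y.1) hD
      (fun y hy ↦ (hbox y hy).2.2) (fun y hy ↦ (hbox y hy).1.trans (mod_cast hR)) hcard
    have hd := hdiff y hy y' hy' ht
    exact ⟨_, _, hnonzero y y' hne ht, hlt, (abs_le_abs_of_mul_eq_mul h0 hle hd).trans_lt hlt, hd⟩
  · have h1 : v 1 ≠ 0 := fun h ↦ hv' ⟨by simpa [h] using hle, h⟩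
    obtain ⟨y, hy, y', hy', hne, ht, hlt⟩ := exists_pair_eq_abs_sub_lt (f := fun y ↦ y.2.1) hD
      (fun y hy ↦ (hbox y hy).2.2) (fun y hy ↦ (hbox y hy).2.1.trans (mod_cast hS)) hcard
    have hd := hdiff y hy y' hy' ht
    exact ⟨_, _, hnonzero y y' hne ht, (abs_le_abs_of_mul_eq_mul h1 hle hd.symm).trans_lt hlt,
      hlt, hd⟩

lemma eq_of_mem_box_of_line {B D : ℕ} (hR : R ≤ B) (hS : S ≤ B) {p q : ℤ}
    (hp : |p| < D) (hq : |q| < D) (hδ : 4 * (D : ℤ) * B < |q * n + p * m|)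
    {y y' : ℤ × ℤ × ℤ} (hy : y ∈ box R S T) (hy' : y' ∈ box R S T) {a : Fin 2 → ℝ}
    (h : MvPolynomial.eval (latticePoint n m y) (linePoly ![(p : ℝ), q] a) = 0)
    (h' : MvPolynomial.eval (latticePoint n m y') (linePoly ![(p : ℝ), q] a) = 0) :
    q * (y'.1 - y.1) = p * (y'.2.1 - y.2.1) ∧ y.2.2 = y'.2.2 := by
  obtain ⟨hb₁, hb₂, -⟩ := mem_box.mp hy
  obtain ⟨hb₁', hb₂', -⟩ := mem_box.mp hy'
  simp only [eval_linePoly, latticePoint_apply_zero, latticePoint_apply_one, Matrix.cons_val_zero,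
    Matrix.cons_val_one] at h h'
  have hdiff : q * (y'.1 - y.1) + (y'.2.2 - y.2.2) * (q * n + p * m) = p * (y'.2.1 - y.2.1) := by
    have : (q : ℝ) * (y'.1 - y.1) + (y'.2.2 - y.2.2) * (q * n + p * m) =
        p * (y'.2.1 - y.2.1) := by linarith
    exact_mod_cast this
  suffices ht : y'.2.2 - y.2.2 = 0 by
    rw [ht, zero_mul, add_zero] at hdiff
    exact ⟨hdiff, by linarith⟩
  by_contra hne
  have hle₁ : |y'.1 - y.1| ≤ 2 * B := (abs_sub _ _).trans (by lia)
  have hle₂ : |y'.2.1 - y.2.1| ≤ 2 * B := (abs_sub _ _).trans (by lia)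
  have hle : |q * n + p * m| ≤ D * (2 * B) + D * (2 * B) := calc
    |q * n + p * m| ≤ |(y'.2.2 - y.2.2) * (q * n + p * m)| := by
        rw [abs_mul]
        exact le_mul_of_one_le_left (abs_nonneg _) (Int.one_le_abs hne)
    _ = |p * (y'.2.1 - y.2.1) - q * (y'.1 - y.1)| := by rw [← hdiff, add_sub_cancel_left]
    _ ≤ |p| * |y'.2.1 - y.2.1| + |q| * |y'.1 - y.1| := by
        simpa only [abs_mul] using abs_sub (p * (y'.2.1 - y.2.1)) (q * (y'.1 - y.1))
    _ ≤ D * (2 * B) + D * (2 * B) := by gcongr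
  linarith

lemma card_le_of_forall_eval_linePoly_eq_zero {B D : ℕ} (hD : 0 < D) (hR : R ≤ B) (hS : S ≤ B)
    (hT : D ≤ 2 * T + 1)
    (hδ : ∀ p q : ℤ, (p ≠ 0 ∨ q ≠ 0) → |p| < D → |q| < D → 4 * (D : ℤ) * B < |q * n + p * m|)
    {v a : Fin 2 → ℝ} (hv : v ≠ 0) {Y : Finset (ℤ × ℤ × ℤ)} (hY : Y ⊆ box R S T)
    (hline : ∀ y ∈ Y, MvPolynomial.eval (latticePoint n m y) (linePoly v a) = 0) :
    #Y ≤ (2 * T + 1) * (2 * B / D + 1) := by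
  rcases card_le_or_exists_direction hD hR hS hv hY hline with h | ⟨p, q, hpq, hp, hq, hvpq⟩
  · exact h
  have hsame (y) (hy : y ∈ Y) (y') (hy' : y' ∈ Y) :
      q * (y'.1 - y.1) = p * (y'.2.1 - y.2.1) ∧ y.2.2 = y'.2.2 :=
    eq_of_mem_box_of_line hR hS hp hq (hδ p q hpq hp hq) (hY hy) (hY hy')
      (eval_linePoly_eq_zero_of_parallel hv hvpq (hline y hy))
      (eval_linePoly_eq_zero_of_parallel hv hvpq (hline y' hy'))
  have hcard : #Y ≤ #(Finset.Icc (-(B : ℤ)) B) := by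
    by_cases hp0 : p = 0
    · have hq0 : q ≠ 0 := hpq.resolve_left (not_not_intro hp0)
      refine Finset.card_le_card_of_injOn (fun y ↦ y.2.1)
        (fun y hy ↦ ?_) fun y hy y' hy' h ↦ ?_
      · exact Finset.mem_Icc.mpr (abs_le.mp ((mem_box.mp (hY hy)).2.1.trans (mod_cast hS)))
      · obtain ⟨hy₁, hy₂⟩ := hsame y hy y' hy'
        have := (mul_eq_zero.mp (hy₁.trans (by rw [hp0, zero_mul]))).resolve_left hq0
        exact Prod.ext (by linarith) (Prod.ext h hy₂)
    · refine Finset.card_le_card_of_injOn (fun y ↦ y.1) (fun y hy ↦ ?_) fun y hy y' hy' h ↦ ?_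
      · exact Finset.mem_Icc.mpr (abs_le.mp ((mem_box.mp (hY hy)).1.trans (mod_cast hR)))
      · obtain ⟨hy₁, hy₂⟩ := hsame y hy y' hy'
        have := (mul_eq_zero.mp (hy₁.symm.trans
          (by rw [show y.1 = y'.1 from h, sub_self, mul_zero]))).resolve_left hp0
        exact Prod.ext h (Prod.ext (by linarith) hy₂)
  calc #Y ≤ 2 * B + 1 := hcard.trans_eq (by rw [Int.card_Icc]; lia)
    _ ≤ D * (2 * B / D + 1) := Nat.lt_mul_div_succ (2 * B) hD
    _ ≤ (2 * T + 1) * (2 * B / D + 1) := Nat.mul_le_mul_right _ hT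

end Box

section ZeroEstimate

open MvPolynomial

/-- The value `α ^ r * γ ^ s * η ^ t` of a monomial with exponents `(r, s, t)`. -/
noncomputable def monomialValue (α γ η : ℝ) (x : ℤ × ℤ × ℤ) : ℝ :=
  α ^ x.1 * γ ^ x.2.1 * η ^ x.2.2

lemma monomialValue_pos {α γ η : ℝ} (hα : 0 < α) (hγ : 0 < γ) (hη : 0 < η) (x : ℤ × ℤ × ℤ) :
    0 < monomialValue α γ η x := by
  unfold monomialValue
  positivity

variable {n m : ℤ} {α γ η : ℝ} {M K R S T B D E : ℕ} {P : Fin M → MvPolynomial (Fin 2) ℝ}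

lemma sum_eval_add_smul_eq_zero (hα : α ≠ 0) (hγ : γ ≠ 0)
    (hP : ∀ x ∈ box (R + M * E) (S + M * E) T,
      ∑ l, eval (latticePoint n m x) (P l) * monomialValue α γ η x ^ (l : ℕ) = 0)
    {x : ℤ × ℤ × ℤ} (hx : x ∈ box R S T) {p q : ℤ} (hp : |p| ≤ E) (hq : |q| ≤ E) {i : ℕ}
    (hi : i < M) :
    ∑ l, eval (latticePoint n m x + (i : ℝ) • ![(p : ℝ), q]) (P l) *
      ((α ^ p * γ ^ q) ^ i * monomialValue α γ η x) ^ (l : ℕ) = 0 := by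
  obtain ⟨hx₁, hx₂, hx₃⟩ := mem_box.mp hx
  have hle (z : ℤ) (hz : |z| ≤ E) : |(i : ℤ) * z| ≤ M * E := by
    rw [abs_mul, Nat.abs_cast]
    gcongr
  have hmem : (x.1 + i * p, x.2.1 + i * q, x.2.2) ∈ box (R + M * E) (S + M * E) T := by
    rw [mem_box]
    push_cast
    exact ⟨(abs_add_le _ _).trans (add_le_add hx₁ (hle p hp)),
      (abs_add_le _ _).trans (add_le_add hx₂ (hle q hq)), hx₃⟩
  have hpoint : latticePoint n m (x.1 + i * p, x.2.1 + i * q, x.2.2) =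
      latticePoint n m x + (i : ℝ) • ![(p : ℝ), q] := by
    ext k
    fin_cases k <;> simp [latticePoint] <;> ring
  have hvalue : monomialValue α γ η (x.1 + i * p, x.2.1 + i * q, x.2.2) =
      (α ^ p * γ ^ q) ^ i * monomialValue α γ η x := by
    simp only [monomialValue]
    rw [zpow_add₀ hα, zpow_add₀ hγ, mul_comm (i : ℤ) p, mul_comm (i : ℤ) q, zpow_mul, zpow_mul,
      zpow_natCast, zpow_natCast, mul_pow]
    ring
  rw [← hpoint, ← hvalue]
  exact hP _ hmem

lemma sum_eval_add_single_eq_zero (hα : α ≠ 0) (hγ : γ ≠ 0) (hE : E ≠ 0)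
    (hP : ∀ x ∈ box (R + M * E) (S + M * E) T,
      ∑ l, eval (latticePoint n m x) (P l) * monomialValue α γ η x ^ (l : ℕ) = 0)
    {x : ℤ × ℤ × ℤ} (hx : x ∈ box R S T) {i : ℕ} (hi : i < M) :
    ∑ l, eval (latticePoint n m x + Pi.single 0 (i : ℝ)) (P l) *
      (α ^ i * monomialValue α γ η x) ^ (l : ℕ) = 0 := by
  have hsingle : (i : ℝ) • ![(1 : ℝ), 0] = Pi.single 0 (i : ℝ) := by
    ext k
    fin_cases k <;> simp
  simpa [hsingle] using sum_eval_add_smul_eq_zero (p := 1) (q := 0) hα hγ hP hx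
    (by simpa using Nat.one_le_iff_ne_zero.mpr hE) (by simp) hi

lemma card_le_of_not_linePoly_dvd (hα : 0 < α) (hγ : 0 < γ) (hη : 0 < η)
    (hind : ∀ p q : ℤ, α ^ p * γ ^ q = 1 → p = 0 ∧ q = 0) (hE : 0 < E) (hR : R ≤ B) (hS : S ≤ B)
    (hK : ∀ l, (P l).totalDegree ≤ K)
    (hP : ∀ x ∈ box (R + M * E) (S + M * E) T,
      ∑ l, eval (latticePoint n m x) (P l) * monomialValue α γ η x ^ (l : ℕ) = 0)
    {v a : Fin 2 → ℝ} (hv : v ≠ 0) {l₀ : Fin M} (hl₀ : ¬linePoly v a ∣ P l₀)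
    {X : Finset (Fin 2 → ℝ)} (hX : X ⊆ (box R S T).image (latticePoint n m))
    (hline : ∀ x ∈ X, eval x (linePoly v a) = 0) :
    #X ≤ max ((2 * T + 1) * (2 * B / E + 1)) (M * K) := by
  classical
  obtain ⟨Y, hY, rfl⟩ := Finset.subset_image_iff.mp hX
  rw [Finset.forall_mem_image] at hline
  rcases card_le_or_exists_direction hE hR hS hv hY @hline with h | ⟨p, q, hpq, hp, hq, hvpq⟩
  · exact Finset.card_image_le.trans (h.trans (le_max_left _ _))
  set w : Fin 2 → ℝ := ![(p : ℝ), q] with hw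
  have hw0 : w ≠ 0 := fun h ↦ by
    have h₀ := congrFun h 0
    have h₁ := congrFun h 1
    simp only [hw, Matrix.cons_val_zero, Matrix.cons_val_one, Pi.zero_apply,
      Int.cast_eq_zero] at h₀ h₁
    exact hpq.elim (· h₀) (· h₁)
  have hdvd : linePoly v a ∣ linePoly w a := linePoly_dvd_of_forall_eval_eq_zero hv fun k ↦
    eval_linePoly_eq_zero_of_parallel hv hvpq (by simp; ring)
  have hinj : Function.Injective fun u : ℝ ↦ a + u • w :=
    (add_right_injective a).comp (smul_left_injective ℝ hw0)
  set U := (Y.image (latticePoint n m)).preimage _ hinj.injOn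
  have hXU : Y.image (latticePoint n m) ⊆ U.image fun u ↦ a + u • w := fun x hx ↦ by
    obtain ⟨y, hy, rfl⟩ := Finset.mem_image.mp hx
    obtain ⟨u, hu⟩ := exists_eq_add_smul_of_eval_linePoly_eq_zero hw0
      (eval_linePoly_eq_zero_of_parallel hv hvpq (hline hy))
    exact Finset.mem_image.mpr ⟨u, Finset.mem_preimage.mpr (hu ▸ hx), hu.symm⟩
  have hpow : α ^ p * γ ^ q ≠ 1 := fun h ↦
    hpq.elim (fun hp ↦ hp (hind p q h).1) fun hq ↦ hq (hind p q h).2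
  refine ((Finset.card_le_card hXU).trans Finset.card_image_le).trans
    (le_trans ?_ (le_max_right _ _))
  refine card_le_of_exponential_polynomial_eq_zero (ζ := α ^ p * γ ^ q)
    (Q := fun l ↦ lineRestrict w a (P l)) (pow_right_injective₀ (by positivity) hpow)
    ⟨l₀, lineRestrict_ne_zero hw0 fun h ↦ hl₀ (hdvd.trans h)⟩
    (fun l ↦ (natDegree_lineRestrict_le _).trans (hK l)) fun u hu ↦ ?_
  obtain ⟨y, hy, hyu⟩ := Finset.mem_image.mp (Finset.mem_preimage.mp hu)
  refine ⟨monomialValue α γ η y, (monomialValue_pos hα hγ hη y).ne', fun i hi ↦ ?_⟩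
  rw [← sum_eval_add_smul_eq_zero hα.ne' hγ.ne' hP (hY hy) hp.le hq.le hi]
  simp only [eval_lineRestrict, hyu, add_smul, add_assoc, hw]

lemma card_filter_exists_linePoly_dvd_box_le (hD : 0 < D) (hR : R ≤ B)
    (hS : S ≤ B) (hT : D ≤ 2 * T + 1)
    (hδ : ∀ p q : ℤ, (p ≠ 0 ∨ q ≠ 0) → |p| < D → |q| < D → 4 * (D : ℤ) * B < |q * n + p * m|)
    {Q : MvPolynomial (Fin 2) ℝ} (hQ : Q ≠ 0)
    [DecidablePred fun x ↦ ∃ v ≠ 0, linePoly v x ∣ Q] :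
    #{x ∈ (box R S T).image (latticePoint n m) | ∃ v ≠ 0, linePoly v x ∣ Q} ≤
      (2 * T + 1) * (2 * B / D + 1) * Q.totalDegree := by
  classical
  convert card_filter_exists_linePoly_dvd_le hQ fun v hv a _ ↦ ?_
  obtain ⟨Y, hY, hYX⟩ := Finset.subset_image_iff.mp (Finset.filter_subset
    (fun x ↦ eval x (linePoly v a) = 0) ((box R S T).image (latticePoint n m)))
  rw [← hYX]
  refine Finset.card_image_le.trans (card_le_of_forall_eval_linePoly_eq_zero (a := a)
    hD hR hS hT hδ hv hY fun y hy ↦ ?_)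
  have hmem := Finset.mem_image_of_mem (latticePoint n m) hy
  rw [hYX] at hmem
  exact (Finset.mem_filter.mp hmem).2

lemma card_image_box_sub_le :
    #((box R S T).image (latticePoint n m) - (box R S T).image (latticePoint n m)) ≤
      (4 * R + 1) * ((4 * S + 1) * (4 * T + 1)) := by
  have himage : (box R S T - box R S T).image (latticePoint n m) =
      (box R S T).image (latticePoint n m) - (box R S T).image (latticePoint n m) :=
    Finset.image_image₂_distrib (map_sub (latticePoint n m))
  rw [← himage]
  refine Finset.card_image_le.trans ((Finset.card_le_card (box_sub_box_subset R S T)).trans ?_)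
  rw [card_box]
  exact le_of_eq (by ring)

theorem exists_mem_box_sum_ne_zero (hα : 0 < α) (hγ : 0 < γ) (hη : 0 < η)
    (hind : ∀ p q : ℤ, α ^ p * γ ^ q = 1 → p = 0 ∧ q = 0) {c C : ℕ} (hD : 0 < D) (hE : 0 < E)
    (hR : R ≤ B) (hS : S ≤ B) (hT : D ≤ 2 * T + 1) (hn : 2 * (R : ℤ) < n)
    (hδ : ∀ p q : ℤ, (p ≠ 0 ∨ q ≠ 0) → |p| < D → |q| < D → 4 * (D : ℤ) * B < |q * n + p * m|)
    (hc : (4 * R + 1) * ((4 * S + 1) * (4 * T + 1)) ≤ c ^ 2) (hcC : c < C)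
    (hC : max ((2 * T + 1) * (2 * B / E + 1)) (M * K) ≤ C)
    (hcard : C * (M * K) + (2 * T + 1) * (2 * B / D + 1) * K <
      (2 * R + 1) * ((2 * S + 1) * (2 * T + 1)))
    (hP : ∃ l, P l ≠ 0) (hK : ∀ l, (P l).totalDegree ≤ K) :
    ∃ x ∈ box (R + M * E) (S + M * E) T,
      ∑ l, eval (latticePoint n m x) (P l) * monomialValue α γ η x ^ (l : ℕ) ≠ 0 := by
  classical
  by_contra! hvan
  have hα1 : α ≠ 1 := fun h ↦ one_ne_zero (hind 1 0 (by simp [h])).1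
  obtain ⟨Δ, hΔ, hΔdeg, hΔzero⟩ :=
    exists_polynomial_of_exponential_polynomial (pow_right_injective₀ hα hα1) hP hK
  obtain ⟨l₀, hl₀⟩ := hP
  set X := (box R S T).image (latticePoint n m)
  have hXcard : #X = (2 * R + 1) * ((2 * S + 1) * (2 * T + 1)) := by
    rw [Finset.card_image_of_injOn (latticePoint_injOn_box hn), card_box]
  set X' := X.filter fun x ↦ ∃ v ≠ 0, linePoly v x ∣ P l₀
  have hX' : #X' ≤ (2 * T + 1) * (2 * B / D + 1) * K :=
    (card_filter_exists_linePoly_dvd_box_le hD hR hS hT hδ hl₀).trans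
      (Nat.mul_le_mul_left _ (hK l₀))
  have hΔX : ∀ x ∈ X, eval x Δ = 0 := Finset.forall_mem_image.mpr fun y hy ↦
    hΔzero _ _ (monomialValue_pos hα hγ hη y).ne' fun i hi ↦
      sum_eval_add_single_eq_zero hα.ne' hγ.ne' hE.ne' hvan hy hi
  have hdiff : #(X \ X' - X \ X') ≤ c ^ 2 :=
    (Finset.card_le_card (Finset.sub_subset_sub Finset.sdiff_subset Finset.sdiff_subset)).trans
      (card_image_box_sub_le.trans hc)
  have hcount := card_filter_eval_eq_zero_le hΔ hdiff hcC fun v _ hv a ha ↦ by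
    obtain ⟨haX, haX'⟩ := Finset.mem_sdiff.mp ha
    refine le_trans (card_le_of_not_linePoly_dvd hα hγ hη hind hE hR hS hK hvan hv
      (l₀ := l₀) (a := a) ?_ ?_ fun x hx ↦ (Finset.mem_filter.mp hx).2) hC
    · exact fun h ↦ haX' (Finset.mem_filter.mpr ⟨haX, v, hv, h⟩)
    · exact (Finset.filter_subset _ _).trans Finset.sdiff_subset
  rw [Finset.filter_true_of_mem fun x hx ↦ hΔX x (Finset.mem_sdiff.mp hx).1] at hcount
  have hle := Finset.le_card_sdiff X' X
  have := Nat.mul_le_mul_left C hΔdeg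
  omega

end ZeroEstimate

/-! ### The auxiliary function -/

section Pigeonhole

lemma mul_add_mul_max_neg_mem_Icc {A p X : ℝ} (hp : p ∈ Set.Icc 0 X) :
    A * p + X * max (-A) 0 ∈ Set.Icc 0 (X * |A|) := by
  obtain ⟨hp₀, hpX⟩ := hp
  rcases le_total 0 A with h | h
  · rw [max_eq_right (by linarith), abs_of_nonneg h]
    constructor <;> nlinarith
  · rw [max_eq_left (by linarith), abs_of_nonpos h]
    constructor <;> nlinarith

theorem exists_int_forall_abs_sum_mul_lt {ι κ : Type*} [Fintype ι] [Fintype κ] {A : κ → ι → ℝ}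
    {X : ℕ} {N : κ → ℕ} {ε : κ → ℝ} (hε : ∀ k, 0 < ε k) (hA : ∀ k, X * ∑ i, |A k i| < N k * ε k)
    (hN : ∏ k, N k < (X + 1) ^ Fintype.card ι) :
    ∃ p : ι → ℤ, p ≠ 0 ∧ (∀ i, |p i| ≤ X) ∧ ∀ k, |∑ i, A k i * p i| < ε k := by
  classical
  let f (p : ι → ℕ) (k : κ) : ℝ := ∑ i, (A k i * p i + X * max (-A k i) 0)
  have hterm (p) (hp : p ∈ Fintype.piFinset fun _ : ι ↦ Finset.range (X + 1)) (k i) :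
      A k i * p i + X * max (-A k i) 0 ∈ Set.Icc 0 (X * |A k i|) :=
    mul_add_mul_max_neg_mem_Icc ⟨Nat.cast_nonneg _, mod_cast Nat.lt_succ_iff.mp
      (Finset.mem_range.mp (Fintype.mem_piFinset.mp hp i))⟩
  obtain ⟨p, hp, q, hq, hne, heq⟩ := Finset.exists_ne_map_eq_of_card_lt_of_maps_to
    (s := Fintype.piFinset fun _ : ι ↦ Finset.range (X + 1))
    (t := Fintype.piFinset fun k : κ ↦ Finset.Ico 0 (N k : ℤ))
    (f := fun p k ↦ ⌊f p k / ε k⌋) (by simpa [Fintype.card_piFinset] using hN) fun p hp ↦ by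
      refine Finset.mem_coe.mpr (Fintype.mem_piFinset.mpr fun k ↦ Finset.mem_Ico.mpr ⟨?_, ?_⟩)
      · exact Int.floor_nonneg.mpr
          (div_nonneg (Finset.sum_nonneg fun i _ ↦ (hterm p hp k i).1) (hε k).le)
      · rw [Int.floor_lt, Int.cast_natCast, div_lt_iff₀ (hε k)]
        refine lt_of_le_of_lt ?_ (hA k)
        rw [Finset.mul_sum]
        exact Finset.sum_le_sum fun i _ ↦ (hterm p hp k i).2
  refine ⟨fun i ↦ p i - q i, fun h ↦ hne ?_, fun i ↦ ?_, fun k ↦ ?_⟩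
  · exact funext fun i ↦ Int.ofNat_inj.mp (sub_eq_zero.mp (congrFun h i))
  · exact Int.abs_sub_lt_of_lt_lt (Finset.mem_range.mp (Fintype.mem_piFinset.mp hq i))
      (Finset.mem_range.mp (Fintype.mem_piFinset.mp hp i)) |> Int.lt_add_one_iff.mp
  · have hsub : ∑ i, A k i * ((p i - q i : ℤ) : ℝ) = f p k - f q k := by
      rw [← Finset.sum_sub_distrib]
      refine Finset.sum_congr rfl fun i _ ↦ ?_
      push_cast
      ring
    have hlt : |f p k / ε k - f q k / ε k| < 1 :=
      Int.abs_sub_lt_one_of_floor_eq_floor (congrFun heq k)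
    rw [hsub]
    rwa [← sub_div, abs_div, abs_of_pos (hε k), div_lt_one (hε k)] at hlt

lemma two_mul_sum_range_sub (J : ℕ) : 2 * ∑ j ∈ Finset.range J, (J - j) = J * (J + 1) := by
  have h := Finset.sum_flip (fun j : ℕ ↦ j) (n := J)
  rw [Finset.sum_range_succ, Nat.sub_self, add_zero] at h
  rw [h, mul_comm, Finset.sum_range_id_mul_two, Nat.add_sub_cancel, mul_comm]

lemma abs_sum_mul_le_of_approx {ι κ : Type*} [Fintype ι] [Fintype κ] {p f : ι → ℝ}
    {c : κ → ι → ℝ} {φ s : κ → ℝ} {X ε η : ℝ} (hp : ∀ u, |p u| ≤ X) (hφ : ∀ k, |φ k| ≤ s k)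
    (hsmall : ∀ k, |∑ u, s k * c k u * p u| ≤ ε) (hf : ∀ u, |f u - ∑ k, c k u * φ k| ≤ η) :
    |∑ u, p u * f u| ≤ Fintype.card κ * ε + Fintype.card ι * (X * η) := by
  have hmain (k : κ) : |φ k * ∑ u, c k u * p u| ≤ ε := by
    calc |φ k * ∑ u, c k u * p u| ≤ |s k * ∑ u, c k u * p u| := by
          rw [abs_mul, abs_mul]
          exact mul_le_mul_of_nonneg_right ((hφ k).trans (le_abs_self _)) (abs_nonneg _)
      _ ≤ ε := by simpa only [Finset.mul_sum, mul_assoc] using hsmall k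
  have hrem (u : ι) : |p u * (f u - ∑ k, c k u * φ k)| ≤ X * η := by
    rw [abs_mul]
    exact mul_le_mul (hp u) (hf u) (abs_nonneg _) ((abs_nonneg _).trans (hp u))
  have hswap : ∑ k, φ k * ∑ u, c k u * p u = ∑ u, p u * ∑ k, c k u * φ k := by
    simp only [Finset.mul_sum]
    rw [Finset.sum_comm]
    exact Finset.sum_congr rfl fun u _ ↦ Finset.sum_congr rfl fun k _ ↦ by ring
  have hsplit : ∑ u, p u * f u =
      ∑ k, φ k * ∑ u, c k u * p u + ∑ u, p u * (f u - ∑ k, c k u * φ k) := by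
    simp only [hswap, mul_sub, Finset.sum_sub_distrib, add_sub_cancel]
  rw [hsplit, ← nsmul_eq_mul, ← nsmul_eq_mul, ← Finset.card_univ, ← Finset.card_univ]
  exact (abs_add_le _ _).trans (add_le_add
    ((Finset.abs_sum_le_sum_abs _ _).trans (Finset.sum_le_card_nsmul _ _ _ fun k _ ↦ hmain k))
    ((Finset.abs_sum_le_sum_abs _ _).trans (Finset.sum_le_card_nsmul _ _ _ fun u _ ↦ hrem u)))

lemma prod_pow_sub_lt {K J x ρ d : ℕ} (hρ : 0 < ρ) (hd : d ≠ 0)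
    (hcard : K * (J * (J + 1)) ≤ 2 * (x * d)) :
    ∏ k : Fin K × Fin J, ρ ^ (J - (k.2 : ℕ)) < (ρ ^ x + 1) ^ d := by
  have hsum := two_mul_sum_range_sub J
  have hexp : K * ∑ j ∈ Finset.range J, (J - j) ≤ x * d := by nlinarith
  calc ∏ k : Fin K × Fin J, ρ ^ (J - (k.2 : ℕ)) = ρ ^ (K * ∑ j ∈ Finset.range J, (J - j)) := by
        rw [Finset.prod_pow_eq_pow_sum, Fintype.sum_prod_type]
        simp [Finset.sum_range]
    _ ≤ (ρ ^ x) ^ d := by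
      rw [← pow_mul]
      exact Nat.pow_le_pow_right hρ hexp
    _ < (ρ ^ x + 1) ^ d := Nat.pow_lt_pow_left (Nat.lt_succ_self _) hd

/- The coefficient of index `(a, j)` is of size `H / ρ ^ j`, so it only has to be made small to
relative precision `ρ ^ (J - j)`; these precisions multiply to `ρ ^ (K * J * (J + 1) / 2)`. -/
theorem exists_int_forall_abs_sum_mul_le_of_approx {ι Z : Type*} [Fintype ι] [Nonempty ι]
    {K J x ρ : ℕ} {H : ℝ} (hρ : 0 < ρ) (hH : 0 < H) {f : ι → Z → ℝ}
    {c : Fin K × Fin J → ι → ℝ} {φ : Fin K × Fin J → Z → ℝ} {s : Fin K × Fin J → ℝ}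
    (hφ : ∀ k z, |φ k z| ≤ s k) (hc : ∀ k u, |s k * c k u| ≤ H / ρ ^ (k.2 : ℕ))
    (hf : ∀ u z, |f u z - ∑ k, c k u * φ k z| ≤ H / ρ ^ J)
    (hcard : K * (J * (J + 1)) ≤ 2 * (x * Fintype.card ι)) :
    ∃ p : ι → ℤ, p ≠ 0 ∧ (∀ u, |p u| ≤ (ρ : ℤ) ^ x) ∧ ∀ z, |∑ u, p u * f u z| ≤
      (K * J + 1) * (2 * (ρ ^ x * (Fintype.card ι * (H / ρ ^ J)))) := by
  set ε : ℝ := 2 * (ρ ^ x * (Fintype.card ι * (H / ρ ^ J))) with hε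
  have hε₀ : 0 < ε := by positivity
  have hA (k : Fin K × Fin J) :
      ((ρ ^ x : ℕ) : ℝ) * ∑ u, |s k * c k u| < ((ρ ^ (J - (k.2 : ℕ)) : ℕ) : ℝ) * ε := by
    have hpow : (ρ : ℝ) ^ J = ρ ^ (J - (k.2 : ℕ)) * ρ ^ (k.2 : ℕ) := by
      rw [← pow_add, Nat.sub_add_cancel k.2.2.le]
    have hsum : ∑ u, |s k * c k u| ≤ Fintype.card ι * (H / ρ ^ (k.2 : ℕ)) :=
      (Finset.sum_le_card_nsmul _ _ _ fun u _ ↦ hc k u).trans_eq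
        (by rw [Finset.card_univ, nsmul_eq_mul])
    calc ((ρ ^ x : ℕ) : ℝ) * ∑ u, |s k * c k u|
        ≤ ρ ^ x * (Fintype.card ι * (H / ρ ^ (k.2 : ℕ))) := by push_cast; gcongr
      _ < 2 * (ρ ^ x * (Fintype.card ι * (H / ρ ^ (k.2 : ℕ)))) :=
        lt_two_mul_self (by positivity)
      _ = ((ρ ^ (J - (k.2 : ℕ)) : ℕ) : ℝ) * ε := by rw [hε, hpow]; push_cast; field_simp
  obtain ⟨p, hp₀, hpX, hpε⟩ := exists_int_forall_abs_sum_mul_lt (A := fun k u ↦ s k * c k u)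
    (fun _ ↦ hε₀) hA (prod_pow_sub_lt hρ Fintype.card_ne_zero hcard)
  have hpX' (u : ι) : |(p u : ℝ)| ≤ ρ ^ x := by
    rw [← Int.cast_abs]
    exact_mod_cast hpX u
  refine ⟨p, hp₀, fun u ↦ mod_cast hpX u, fun z ↦ ?_⟩
  refine (abs_sum_mul_le_of_approx hpX' (hφ · z) (fun k ↦ (hpε k).le) (hf · z)).trans ?_
  have : 0 ≤ ρ ^ x * (Fintype.card ι * (H / ρ ^ J)) := by positivity
  rw [Fintype.card_prod, Fintype.card_fin, Fintype.card_fin, Nat.cast_mul, add_one_mul]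
  linarith

end Pigeonhole

section Series

open scoped Nat

lemma abs_sub_sum_range_le_of_hasSum {a b : ℕ → ℝ} {A B ρ : ℝ} (hρ : 1 ≤ ρ) (ha : HasSum a A)
    (hb : HasSum b B) (hab : ∀ j, ρ ^ j * |a j| ≤ b j) (J : ℕ) :
    |A - ∑ j ∈ Finset.range J, a j| ≤ B / ρ ^ J := by
  have hb₀ (j : ℕ) : 0 ≤ b j := le_trans (by positivity) (hab j)
  have htail := ((hasSum_nat_add_iff' J).mpr hb).div_const (ρ ^ J)
  have hle := tsum_of_norm_bounded (f := fun j ↦ a (j + J)) htail fun j ↦ by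
    rw [Real.norm_eq_abs, le_div_iff₀' (by positivity)]
    refine le_trans ?_ (hab (j + J))
    gcongr
    exact Nat.le_add_left J j
  rw [((hasSum_nat_add_iff' J).mpr ha).tsum_eq, Real.norm_eq_abs] at hle
  refine hle.trans ?_
  gcongr
  exact sub_le_self _ (Finset.sum_nonneg fun j _ ↦ hb₀ j)

/-- The coefficient of `w ^ j` in the power series of `w ^ e * exp (s * w)`. -/
noncomputable def expCoeff (s : ℝ) (e j : ℕ) : ℝ :=
  if e ≤ j then s ^ (j - e) / (j - e)! else 0

lemma hasSum_pow_mul_expCoeff (s : ℝ) (e : ℕ) (w : ℝ) :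
    HasSum (fun j ↦ w ^ j * expCoeff s e j) (w ^ e * Real.exp (s * w)) := by
  have hexp : HasSum (fun j : ℕ ↦ (s * w) ^ j / j !) (Real.exp (s * w)) := by
    rw [Real.exp_eq_exp_ℝ]
    exact NormedSpace.expSeries_div_hasSum_exp _
  have hzero : ∑ j ∈ Finset.range e, w ^ j * expCoeff s e j = 0 :=
    Finset.sum_eq_zero fun j hj ↦ by
      rw [expCoeff, if_neg (Finset.mem_range.mp hj).not_ge, mul_zero]
  rw [← hasSum_nat_add_iff' e, hzero, sub_zero]
  refine (hexp.mul_left (w ^ e)).congr_fun fun j ↦ ?_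
  rw [expCoeff, if_pos (Nat.le_add_left e j), Nat.add_sub_cancel, pow_add, mul_pow]
  ring

lemma expCoeff_nonneg {s : ℝ} (hs : 0 ≤ s) (e j : ℕ) : 0 ≤ expCoeff s e j := by
  unfold expCoeff
  split_ifs <;> positivity

lemma abs_expCoeff_le {s L : ℝ} (hs : |s| ≤ L) (e j : ℕ) : |expCoeff s e j| ≤ expCoeff L e j := by
  unfold expCoeff
  split_ifs
  · rw [abs_div, abs_pow, Nat.abs_cast]
    gcongr
  · rw [abs_zero]

variable {s L w W ρ : ℝ}

lemma pow_mul_abs_pow_mul_expCoeff_le (hρ : 0 ≤ ρ) (hs : |s| ≤ L) (hw : |w| ≤ W) (e j : ℕ) :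
    ρ ^ j * |w ^ j * expCoeff s e j| ≤ (ρ * W) ^ j * expCoeff L e j := by
  have hW : 0 ≤ W := (abs_nonneg w).trans hw
  rw [abs_mul, abs_pow, mul_pow, mul_assoc]
  have := abs_expCoeff_le hs e j
  gcongr

lemma abs_pow_mul_expCoeff_le (hρ : 0 < ρ) (hs : |s| ≤ L) (hw : |w| ≤ W) (e j : ℕ) :
    |w ^ j * expCoeff s e j| ≤ (ρ * W) ^ e * Real.exp (L * (ρ * W)) / ρ ^ j := by
  rw [le_div_iff₀' (by positivity)]
  have hL : 0 ≤ L := (abs_nonneg s).trans hs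
  have hW : 0 ≤ W := (abs_nonneg w).trans hw
  exact (pow_mul_abs_pow_mul_expCoeff_le hρ.le hs hw e j).trans
    (le_hasSum (hasSum_pow_mul_expCoeff L e (ρ * W)) j fun i _ ↦
      mul_nonneg (by positivity) (expCoeff_nonneg hL e i))

lemma abs_pow_mul_exp_sub_sum_range_le (hρ : 1 ≤ ρ) (hs : |s| ≤ L) (hw : |w| ≤ W) (e J : ℕ) :
    |w ^ e * Real.exp (s * w) - ∑ j ∈ Finset.range J, w ^ j * expCoeff s e j| ≤
      (ρ * W) ^ e * Real.exp (L * (ρ * W)) / ρ ^ J :=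
  abs_sub_sum_range_le_of_hasSum hρ (hasSum_pow_mul_expCoeff s e w)
    (hasSum_pow_mul_expCoeff L e (ρ * W))
    (pow_mul_abs_pow_mul_expCoeff_le (zero_le_one.trans hρ) hs hw e) J

end Series

section Substitution

variable {l₁ l₂ : ℝ} {K k₁ k₂ : ℕ}

/-- The coefficient of `z₁ ^ a * w ^ (k₁ + k₂ - a)` when `z₂` is eliminated from `z₁ ^ k₁ * z₂ ^ k₂`
by means of `w = l₁ * z₁ + l₂ * z₂`. -/
noncomputable def substCoeff (l₁ l₂ : ℝ) (k₁ k₂ a : ℕ) : ℝ :=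
  if k₁ ≤ a then k₂.choose (a - k₁) * (-l₁) ^ (a - k₁) / l₂ ^ k₂ else 0

lemma sum_substCoeff_mul (hl₂ : l₂ ≠ 0) (hK : k₁ + k₂ < K) {z₁ z₂ w : ℝ}
    (hw : w = l₁ * z₁ + l₂ * z₂) :
    ∑ a ∈ Finset.range K, substCoeff l₁ l₂ k₁ k₂ a * (z₁ ^ a * w ^ (k₁ + k₂ - a)) =
      z₁ ^ k₁ * z₂ ^ k₂ := by
  obtain ⟨d, rfl⟩ := Nat.exists_eq_add_of_lt hK
  have hlow : ∑ a ∈ Finset.range k₁,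
      substCoeff l₁ l₂ k₁ k₂ a * (z₁ ^ a * w ^ (k₁ + k₂ - a)) = 0 :=
    Finset.sum_eq_zero fun a ha ↦ by
      rw [substCoeff, if_neg (Finset.mem_range.mp ha).not_ge, zero_mul]
  have hhigh : ∑ a ∈ Finset.range d, substCoeff l₁ l₂ k₁ k₂ (k₁ + (k₂ + 1 + a)) *
      (z₁ ^ (k₁ + (k₂ + 1 + a)) * w ^ (k₁ + k₂ - (k₁ + (k₂ + 1 + a)))) = 0 :=
    Finset.sum_eq_zero fun a _ ↦ by
      rw [substCoeff, if_pos (by lia), Nat.choose_eq_zero_of_lt (by lia)]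
      simp
  have hz₂ : z₂ = (-l₁ * z₁ + w) / l₂ := by rw [hw]; field_simp; ring
  rw [show k₁ + k₂ + d + 1 = k₁ + ((k₂ + 1) + d) by ring, Finset.sum_range_add,
    Finset.sum_range_add, hlow, hhigh, zero_add, add_zero, hz₂, div_pow, add_pow, Finset.sum_div,
    Finset.mul_sum]
  refine Finset.sum_congr rfl fun i _ ↦ ?_
  rw [substCoeff, if_pos (Nat.le_add_right _ _), Nat.add_sub_cancel_left, Nat.add_sub_add_left,
    pow_add, mul_pow]
  ring

lemma abs_substCoeff (h₁ : 0 ≤ l₁) (h₂ : 0 ≤ l₂) (k₁ k₂ a : ℕ) :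
    |substCoeff l₁ l₂ k₁ k₂ a| = substCoeff (-l₁) l₂ k₁ k₂ a := by
  unfold substCoeff
  split_ifs
  · rw [abs_div, abs_mul, abs_pow, abs_neg, abs_of_nonneg h₁, abs_of_nonneg (pow_nonneg h₂ _),
      Nat.abs_cast, neg_neg]
  · rw [abs_zero]

lemma sum_abs_substCoeff_mul_le (h₁ : 0 ≤ l₁) (h₂ : 0 < l₂) (hK : k₁ + k₂ < K) {B D b : ℝ}
    (hB : 0 ≤ B) (hD : 0 ≤ D) (hb : 1 ≤ b) (hBb : B ≤ b) (hDb : (D + l₁ * B) / l₂ ≤ b) :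
    ∑ a ∈ Finset.range K, |substCoeff l₁ l₂ k₁ k₂ a| * (B ^ a * D ^ (k₁ + k₂ - a)) ≤ b ^ K := by
  simp only [abs_substCoeff h₁ h₂.le]
  rw [sum_substCoeff_mul (z₂ := (D + l₁ * B) / l₂) h₂.ne' hK (by field_simp; ring)]
  calc B ^ k₁ * ((D + l₁ * B) / l₂) ^ k₂ ≤ b ^ k₁ * b ^ k₂ := by gcongr
    _ = b ^ (k₁ + k₂) := (pow_add b k₁ k₂).symm
    _ ≤ b ^ K := pow_le_pow_right₀ hb hK.le

end Substitution

section AuxiliaryFunction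

variable {l₁ l₂ B b s L W ρ o C : ℝ} {K J k₁ k₂ : ℕ}

lemma abs_mul_substCoeff_mul_expCoeff_le (hk : k₁ + k₂ < K) (hs : |s| ≤ L) (ho : |o| ≤ C)
    (hW : 0 ≤ W) (hB : 0 ≤ B) (hl₁ : 0 ≤ l₁) (hl₂ : 0 < l₂) (hρ : 0 < ρ) (hb : 1 ≤ b) (hBb : B ≤ b)
    (hWb : (ρ * W + l₁ * B) / l₂ ≤ b) {a : ℕ} (ha : a < K) (j : ℕ) :
    |B ^ a * W ^ j * (o * (substCoeff l₁ l₂ k₁ k₂ a * expCoeff s (k₁ + k₂ - a) j))| ≤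
      C * b ^ K * Real.exp (L * (ρ * W)) / ρ ^ j := by
  have hC : 0 ≤ C := (abs_nonneg o).trans ho
  have hexp := abs_pow_mul_expCoeff_le hρ hs (abs_of_nonneg hW).le (k₁ + k₂ - a) j
  have hsub : |substCoeff l₁ l₂ k₁ k₂ a| * (B ^ a * (ρ * W) ^ (k₁ + k₂ - a)) ≤ b ^ K :=
    (Finset.single_le_sum (fun i _ ↦ by positivity) (Finset.mem_range.mpr ha)).trans
      (sum_abs_substCoeff_mul_le hl₁ hl₂ hk hB (by positivity) hb hBb hWb)
  calc |B ^ a * W ^ j * (o * (substCoeff l₁ l₂ k₁ k₂ a * expCoeff s (k₁ + k₂ - a) j))|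
      = |o| * (|substCoeff l₁ l₂ k₁ k₂ a| * B ^ a * |W ^ j * expCoeff s (k₁ + k₂ - a) j|) := by
        simp only [abs_mul, abs_of_nonneg (pow_nonneg hB a)]
        ring
    _ ≤ C * (|substCoeff l₁ l₂ k₁ k₂ a| * B ^ a *
          ((ρ * W) ^ (k₁ + k₂ - a) * Real.exp (L * (ρ * W)) / ρ ^ j)) := by gcongr
    _ = C * (|substCoeff l₁ l₂ k₁ k₂ a| * (B ^ a * (ρ * W) ^ (k₁ + k₂ - a))) *
          (Real.exp (L * (ρ * W)) / ρ ^ j) := by ring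
    _ ≤ C * b ^ K * (Real.exp (L * (ρ * W)) / ρ ^ j) := by gcongr
    _ = C * b ^ K * Real.exp (L * (ρ * W)) / ρ ^ j := (mul_div_assoc _ _ _).symm

lemma abs_mul_exp_sub_sum_le (hk : k₁ + k₂ < K) (hs : |s| ≤ L) (ho : |o| ≤ C)
    (hB : 0 ≤ B) (hl₁ : 0 ≤ l₁) (hl₂ : 0 < l₂) (hρ : 1 ≤ ρ) (hb : 1 ≤ b) (hBb : B ≤ b)
    (hWb : (ρ * W + l₁ * B) / l₂ ≤ b) {z₁ z₂ w : ℝ} (hz₁ : |z₁| ≤ B) (hw : |w| ≤ W)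
    (hwz : w = l₁ * z₁ + l₂ * z₂) :
    |o * (z₁ ^ k₁ * z₂ ^ k₂ * Real.exp (s * w)) - ∑ k : Fin K × Fin J,
      o * (substCoeff l₁ l₂ k₁ k₂ k.1 * expCoeff s (k₁ + k₂ - k.1) k.2) *
        (z₁ ^ (k.1 : ℕ) * w ^ (k.2 : ℕ))| ≤ C * b ^ K * Real.exp (L * (ρ * W)) / ρ ^ J := by
  have hC : 0 ≤ C := (abs_nonneg o).trans ho
  have hW : 0 ≤ W := (abs_nonneg w).trans hw
  let tail (a : ℕ) : ℝ := w ^ (k₁ + k₂ - a) * Real.exp (s * w) -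
    ∑ j ∈ Finset.range J, w ^ j * expCoeff s (k₁ + k₂ - a) j
  have hterm (a : ℕ) : |substCoeff l₁ l₂ k₁ k₂ a * (z₁ ^ a * tail a)| ≤
      |substCoeff l₁ l₂ k₁ k₂ a| * (B ^ a * (ρ * W) ^ (k₁ + k₂ - a)) *
        (Real.exp (L * (ρ * W)) / ρ ^ J) := by
    have htail := abs_pow_mul_exp_sub_sum_range_le hρ hs hw (k₁ + k₂ - a) J
    rw [abs_mul, abs_mul, abs_pow, mul_assoc, mul_assoc, ← mul_div_assoc]
    gcongr
  have hsplit : o * (z₁ ^ k₁ * z₂ ^ k₂ * Real.exp (s * w)) - ∑ k : Fin K × Fin J,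
      o * (substCoeff l₁ l₂ k₁ k₂ k.1 * expCoeff s (k₁ + k₂ - k.1) k.2) *
        (z₁ ^ (k.1 : ℕ) * w ^ (k.2 : ℕ)) =
      o * ∑ a ∈ Finset.range K, substCoeff l₁ l₂ k₁ k₂ a * (z₁ ^ a * tail a) := by
    rw [← sum_substCoeff_mul hl₂.ne' hk hwz, Fintype.sum_prod_type, Finset.sum_range,
      Finset.sum_range, Finset.sum_mul, Finset.mul_sum, Finset.mul_sum, ← Finset.sum_sub_distrib]
    refine Finset.sum_congr rfl fun a _ ↦ ?_
    simp only [tail, Finset.sum_range, mul_sub, Finset.mul_sum]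
    congr 1
    · ring
    · exact Finset.sum_congr rfl fun j _ ↦ by ring
  rw [hsplit, abs_mul, mul_assoc C, mul_div_assoc]
  refine mul_le_mul ho ?_ (abs_nonneg _) hC
  refine (Finset.abs_sum_le_sum_abs _ _).trans ((Finset.sum_le_sum fun a _ ↦ hterm a).trans ?_)
  rw [← Finset.sum_mul, mul_div_assoc]
  gcongr
  exact sum_abs_substCoeff_mul_le hl₁ hl₂ hk hB (by positivity) hb hBb hWb

theorem exists_int_forall_abs_sum_exp_le {ι : Type*} [Fintype ι] [Nonempty ι] {k₁ k₂ : ι → ℕ}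
    {s o : ι → ℝ} {x ρ : ℕ} (hk : ∀ u, k₁ u + k₂ u < K) (hs : ∀ u, |s u| ≤ L)
    (ho : ∀ u, |o u| ≤ C) (hC : 0 < C) (hcard : K * (J * (J + 1)) ≤ 2 * (x * Fintype.card ι))
    (hW : 0 ≤ W) (hB : 0 ≤ B) (hl₁ : 0 ≤ l₁) (hl₂ : 0 < l₂) (hρ : 1 ≤ ρ) (hb : 1 ≤ b) (hBb : B ≤ b)
    (hWb : (ρ * W + l₁ * B) / l₂ ≤ b) :
    ∃ p : ι → ℤ, p ≠ 0 ∧ (∀ u, |p u| ≤ (ρ : ℤ) ^ x) ∧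
      ∀ z₁ z₂ w : ℝ, |z₁| ≤ B → |w| ≤ W → w = l₁ * z₁ + l₂ * z₂ →
        |∑ u, p u * (o u * (z₁ ^ k₁ u * z₂ ^ k₂ u * Real.exp (s u * w)))| ≤ (K * J + 1) *
          (2 * (ρ ^ x * (Fintype.card ι * (C * b ^ K * Real.exp (L * (ρ * W)) / ρ ^ J)))) := by
  have hρ' : (1 : ℝ) ≤ ρ := mod_cast hρ
  obtain ⟨p, hp₀, hpX, hp⟩ := exists_int_forall_abs_sum_mul_le_of_approx (K := K) (J := J)
    (Z := {z : ℝ × ℝ × ℝ // |z.1| ≤ B ∧ |z.2.2| ≤ W ∧ z.2.2 = l₁ * z.1 + l₂ * z.2.1})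
    (H := C * b ^ K * Real.exp (L * (ρ * W))) hρ (by positivity)
    (f := fun u z ↦ o u * (z.1.1 ^ k₁ u * z.1.2.1 ^ k₂ u * Real.exp (s u * z.1.2.2)))
    (c := fun k u ↦
      o u * (substCoeff l₁ l₂ (k₁ u) (k₂ u) k.1 * expCoeff (s u) (k₁ u + k₂ u - k.1) k.2))
    (φ := fun k z ↦ z.1.1 ^ (k.1 : ℕ) * z.1.2.2 ^ (k.2 : ℕ))
    (s := fun k ↦ B ^ (k.1 : ℕ) * W ^ (k.2 : ℕ))
    (fun k z ↦ by
      have := z.2.1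
      have := z.2.2.1
      rw [abs_mul, abs_pow, abs_pow]
      gcongr)
    (fun k u ↦ abs_mul_substCoeff_mul_expCoeff_le (hk u) (hs u) (ho u) hW hB hl₁ hl₂
      (one_pos.trans_le hρ') hb hBb hWb k.1.2 k.2)
    (fun u z ↦ abs_mul_exp_sub_sum_le (hk u) (hs u) (ho u) hB hl₁ hl₂ hρ' hb hBb hWb
      z.2.1 z.2.2.1 z.2.2.2) hcard
  exact ⟨p, hp₀, hpX, fun z₁ z₂ w hz₁ hw hwz ↦ hp ⟨(z₁, z₂, w), hz₁, hw, hwz⟩⟩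

end AuxiliaryFunction

/-! ### Values of the auxiliary function -/

section Liouville

open NumberField Module

variable {F : Type*} [Field F] [NumberField F]

lemma one_le_norm_mul_house_pow {y : 𝓞 F} (hy : y ≠ 0) (σ : F →+* ℂ) {d : ℕ}
    (hd : finrank ℚ F ≤ d + 1) : 1 ≤ ‖σ y‖ * house (y : F) ^ d := by
  have hnorm : (1 : ℝ) ≤ ‖Algebra.norm ℚ (y : F)‖ := by
    rw [← Algebra.coe_norm_int, Int.norm_cast_rat, Int.norm_eq_abs]
    exact_mod_cast Int.one_le_abs (Algebra.norm_ne_zero_iff.mpr hy)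
  have hhouse := one_le_house_of_isIntegral y.isIntegral_coe (RingOfIntegers.coe_ne_zero_iff.mpr hy)
  calc (1 : ℝ) ≤ ‖Algebra.norm ℚ (y : F)‖ := hnorm
    _ ≤ ‖σ y‖ * house (y : F) ^ (finrank ℚ F - 1) := norm_norm_le_norm_mul_house_pow _ σ
    _ ≤ ‖σ y‖ * house (y : F) ^ d := by gcongr; omega

lemma abs_le_house (φ : F →+* ℝ) (y : F) : |φ y| ≤ house y := by
  simpa using norm_embedding_le_house y (Complex.ofRealHom.comp φ)

lemma one_le_abs_mul_house_pow {y : 𝓞 F} (hy : y ≠ 0) (φ : F →+* ℝ) {d : ℕ}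
    (hd : finrank ℚ F ≤ d + 1) : 1 ≤ |φ y| * house (y : F) ^ d := by
  simpa using one_le_norm_mul_house_pow hy (Complex.ofRealHom.comp φ) hd

lemma house_zpow_le {ε : F} {A : ℝ} (hA : 1 ≤ A) (h : house ε ≤ A) (h' : house ε⁻¹ ≤ A) {k : ℤ}
    {N : ℕ} (hk : |k| ≤ N) : house (ε ^ k) ≤ A ^ N := by
  have key {x : F} (hx : house x ≤ A) {j : ℕ} (hj : j ≤ N) : house (x ^ j) ≤ A ^ N :=
    calc house (x ^ j) ≤ house x ^ j := house_pow_le x j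
      _ ≤ A ^ j := pow_le_pow_left₀ (house_nonneg x) hx j
      _ ≤ A ^ N := pow_le_pow_right₀ hA hj
  obtain ⟨j, rfl | rfl⟩ := k.eq_nat_or_neg
  · rw [zpow_natCast]
    exact key h (by simpa using hk)
  · rw [zpow_neg, zpow_natCast, ← inv_pow]
    exact key h' (by simpa using hk)

end Liouville

section UnitFrame

open NumberField Module

/-- The arithmetic data on which the linear-forms estimate rests: a number field of degree at most
`6` with a real embedding, two multiplicatively independent units which dominate all their
conjugates and the conjugates of their inverses, and six `ℚ`-linearly independent integers of
small house. -/
structure UnitFrame (F : Type*) [Field F] [NumberField F] where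
  emb : F →+* ℝ
  α : (𝓞 F)ˣ
  γ : (𝓞 F)ˣ
  ω : Fin 6 → 𝓞 F
  finrank_le : finrank ℚ F ≤ 6
  one_lt_emb_α : 1 < emb α
  one_lt_emb_γ : 1 < emb γ
  house_α_le : house (α : F) ≤ emb α
  house_inv_α_le : house (α : F)⁻¹ ≤ emb α
  house_γ_le : house (γ : F) ≤ emb γ
  house_inv_γ_le : house (γ : F)⁻¹ ≤ emb γ
  house_ω_le : ∀ i, house (ω i : F) ≤ 3
  linearIndependent_ω : ∀ c : Fin 6 → ℤ, ∑ i, (c i : ℝ) * emb (ω i) = 0 → c = 0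
  zpow_independent : ∀ p q : ℤ, emb α ^ p * emb γ ^ q = 1 → p = 0 ∧ q = 0

/-- The index set of the auxiliary function: a monomial of degree less than `K` in two variables, a
frequency between `-L` and `L`, and a coordinate with respect to the six integers `ω i`. -/
abbrev AuxIndex (K L : ℕ) := (Σ k : Fin K, Fin (k.1 + 1)) × Fin (2 * L + 1) × Fin 6

namespace AuxIndex

variable {K L : ℕ}

/-- The exponent of the first variable. -/
def deg₁ (u : AuxIndex K L) : ℕ := u.1.2

/-- The exponent of the second variable. -/
def deg₂ (u : AuxIndex K L) : ℕ := u.1.1 - u.1.2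

/-- The frequency, normalised to lie between `-L` and `L`. -/
def freq (u : AuxIndex K L) : ℤ := u.2.1 - L

/-- The index of the integer `ω i`. -/
def coord (u : AuxIndex K L) : Fin 6 := u.2.2

lemma deg₁_add_deg₂_lt (u : AuxIndex K L) : u.deg₁ + u.deg₂ < K := by
  have := u.1.1.2
  have := u.1.2.2
  simp only [deg₁, deg₂]
  omega

lemma abs_freq_le (u : AuxIndex K L) : |u.freq| ≤ L := by
  have := u.2.1.2
  rw [freq, abs_le]
  omega

lemma abs_cast_freq_le (u : AuxIndex K L) : |(u.freq : ℝ)| ≤ L := mod_cast u.abs_freq_le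

lemma card (K L : ℕ) : Fintype.card (AuxIndex K L) = 3 * (2 * L + 1) * (K * (K + 1)) := by
  have hsum : (∑ k : Fin K, (k.1 + 1)) * 2 = K * (K + 1) := by
    have h := Finset.sum_range_id_mul_two (K + 1)
    rwa [Finset.sum_range_succ', add_zero, Nat.add_sub_cancel, mul_comm (K + 1),
      ← Fin.sum_univ_eq_sum_range (· + 1)] at h
  rw [Fintype.card_prod, Fintype.card_prod, Fintype.card_sigma]
  simp only [Fintype.card_fin]
  linear_combination (6 * L + 3) * hsum

end AuxIndex

namespace UnitFrame

variable {F : Type*} [Field F] [NumberField F] (D : UnitFrame F) {K L : ℕ}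

lemma abs_emb_ω_le (i : Fin 6) : |D.emb (D.ω i)| ≤ 3 :=
  (abs_le_house D.emb _).trans (D.house_ω_le i)

/-- The value `∑ p_u ω_u z₁ ^ i z₂ ^ j v ^ k` of the auxiliary function with integer coefficients
`p`. The third argument is independent of the first two, so that the function can be compared at
`v = α ^ r * γ ^ s * η ^ t` and at the nearby point `v = α ^ z₁ * γ ^ z₂`. -/
noncomputable def auxValue (p : AuxIndex K L → ℤ) (z₁ z₂ v : ℝ) : ℝ :=
  ∑ u, p u * (D.emb (D.ω u.coord) * (z₁ ^ u.deg₁ * z₂ ^ u.deg₂ * v ^ u.freq))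

/-- A term of the auxiliary function at `α ^ r * γ ^ s * (e₁ / e₂) ^ t`, multiplied by
`(e₁ * e₂) ^ N` to make it integral. -/
noncomputable def clearedTerm (e₁ e₂ : 𝓞 F) (N : ℕ) (z₁ z₂ r s t : ℤ) (u : AuxIndex K L) : 𝓞 F :=
  D.ω u.coord * (z₁ ^ u.deg₁ * z₂ ^ u.deg₂ * (((D.α ^ (r * u.freq) * D.γ ^ (s * u.freq) : (𝓞 F)ˣ) :
    𝓞 F) * (e₁ ^ (N + t * u.freq).toNat * e₂ ^ (N - t * u.freq).toNat)))

lemma pow_toNat_mul_pow_toNat {x y : ℝ} (hx : x ≠ 0) (hy : y ≠ 0) {N : ℕ} {t : ℤ} (ht : |t| ≤ N) :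
    x ^ (N + t).toNat * y ^ (N - t).toNat = (x * y) ^ N * (x / y) ^ t := by
  obtain ⟨h₁, h₂⟩ := abs_le.mp ht
  rw [← zpow_natCast x, ← zpow_natCast y, Int.toNat_of_nonneg (by linarith),
    Int.toNat_of_nonneg (by linarith), zpow_add₀ hx, zpow_sub₀ hy, div_zpow, zpow_natCast,
    zpow_natCast, mul_pow]
  ring

lemma pow_mul_pow_le {y₁ y₂ b : ℝ} (hy₁ : 0 ≤ y₁) (hy₂ : 0 ≤ y₂) (hb : 1 ≤ b) (h₁ : y₁ ≤ b)
    (h₂ : y₂ ≤ b) {i j K : ℕ} (hK : i + j ≤ K) : y₁ ^ i * y₂ ^ j ≤ b ^ K :=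
  calc y₁ ^ i * y₂ ^ j ≤ b ^ i * b ^ j := by gcongr
    _ = b ^ (i + j) := (pow_add b i j).symm
    _ ≤ b ^ K := pow_le_pow_right₀ hb hK

variable {e₁ e₂ : 𝓞 F} {N R S T x : ℕ} {z₁ z₂ r s t : ℤ} {H b G : ℝ} {p : AuxIndex K L → ℤ}

lemma emb_clearedTerm (h₁ : e₁ ≠ 0) (h₂ : e₂ ≠ 0) {u : AuxIndex K L} (hN : |t * u.freq| ≤ N) :
    D.emb (D.clearedTerm e₁ e₂ N z₁ z₂ r s t u : 𝓞 F) =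
      D.emb (D.ω u.coord) * (z₁ ^ u.deg₁ * z₂ ^ u.deg₂ *
        (D.emb D.α ^ r * D.emb D.γ ^ s * (D.emb e₁ / D.emb e₂) ^ t) ^ u.freq) *
          (D.emb e₁ * D.emb e₂) ^ N := by
  have hne {e : 𝓞 F} (he : e ≠ 0) : D.emb e ≠ 0 :=
    (map_ne_zero D.emb).mpr (RingOfIntegers.coe_ne_zero_iff.mpr he)
  have hpow := pow_toNat_mul_pow_toNat (hne h₁) (hne h₂) hN
  simp only [clearedTerm, map_mul, map_pow, map_intCast, Units.val_mul, Units.coe_zpow, map_zpow₀,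
    hpow, mul_zpow, ← zpow_mul]
  ring

lemma house_clearedTerm_le (hH₁ : house (e₁ : F) ≤ H) (hH₂ : house (e₂ : F) ≤ H) (hb : 1 ≤ b)
    (hz₁ : |(z₁ : ℝ)| ≤ b) (hz₂ : |(z₂ : ℝ)| ≤ b) (hr : |r| ≤ R) (hs : |s| ≤ S) (ht : |t| ≤ T)
    (u : AuxIndex K L) :
    house (D.clearedTerm e₁ e₂ (T * L) z₁ z₂ r s t u : F) ≤ 3 * (b ^ K *
      (D.emb D.α ^ (R * L) * D.emb D.γ ^ (S * L) * H ^ (2 * (T * L)))) := by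
  have hbd {a : ℤ} {A : ℕ} (ha : |a| ≤ A) : |a * u.freq| ≤ (A * L : ℕ) := by
    rw [abs_mul, Nat.cast_mul]
    exact mul_le_mul ha u.abs_freq_le (abs_nonneg _) (by positivity)
  obtain ⟨ht₁, ht₂⟩ := abs_le.mp (hbd ht)
  have hH : 0 ≤ H := (house_nonneg _).trans hH₁
  have he : house ((e₁ : F) ^ (↑(T * L) + t * u.freq).toNat * (e₂ : F) ^ (↑(T * L) -
      t * u.freq).toNat) ≤ H ^ (2 * (T * L)) := by
    have hexp : 2 * (T * L) = (↑(T * L) + t * u.freq).toNat + (↑(T * L) - t * u.freq).toNat := by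
      omega
    rw [hexp, pow_add]
    exact (house_mul_le _ _).trans (mul_le_mul
      ((house_pow_le _ _).trans (pow_le_pow_left₀ (house_nonneg _) hH₁ _))
      ((house_pow_le _ _).trans (pow_le_pow_left₀ (house_nonneg _) hH₂ _))
      (house_nonneg _) (by positivity))
  have hunit : house ((D.α : F) ^ (r * u.freq) * (D.γ : F) ^ (s * u.freq)) ≤
      D.emb D.α ^ (R * L) * D.emb D.γ ^ (S * L) :=
    (house_mul_le _ _).trans (mul_le_mul
      (house_zpow_le D.one_lt_emb_α.le D.house_α_le D.house_inv_α_le (hbd hr))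
      (house_zpow_le D.one_lt_emb_γ.le D.house_γ_le D.house_inv_γ_le (hbd hs))
      (house_nonneg _) (pow_nonneg (one_pos.trans D.one_lt_emb_α).le _))
  have hz : house ((z₁ : F) ^ u.deg₁ * (z₂ : F) ^ u.deg₂) ≤ b ^ K := by
    rw [← Int.cast_pow, ← Int.cast_pow, ← Int.cast_mul, house_intCast]
    push_cast
    rw [abs_mul, abs_pow, abs_pow]
    exact pow_mul_pow_le (abs_nonneg _) (abs_nonneg _) hb hz₁ hz₂ u.deg₁_add_deg₂_lt.le
  have hG := (house_nonneg _).trans hunit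
  simp only [clearedTerm, map_mul, map_pow, map_intCast, Units.val_mul, Units.coe_zpow]
  refine (house_mul_le _ _).trans (mul_le_mul (D.house_ω_le _) ?_ (house_nonneg _) (by norm_num))
  refine (house_mul_le _ _).trans (mul_le_mul hz ?_ (house_nonneg _) (by positivity))
  exact (house_mul_le _ _).trans (mul_le_mul hunit he (house_nonneg _) hG)

/-- A bound for all conjugates of the values of the auxiliary function, up to powers of units. -/
noncomputable def auxHeight (K L x : ℕ) (b : ℝ) : ℝ :=
  Fintype.card (AuxIndex K L) * (20 ^ x * (3 * b ^ K))

lemma auxHeight_nonneg (hb : 0 ≤ b) : 0 ≤ auxHeight K L x b := by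
  unfold auxHeight
  positivity

/-- The algebraic integer of which `auxValue p` at a lattice point is the real value, up to the
denominator `(e₁ * e₂) ^ N`. -/
noncomputable def clearedValue (p : AuxIndex K L → ℤ) (e₁ e₂ : 𝓞 F) (N : ℕ) (z₁ z₂ r s t : ℤ) :
    𝓞 F :=
  ∑ u, p u * D.clearedTerm e₁ e₂ N z₁ z₂ r s t u

lemma emb_clearedValue (h₁ : e₁ ≠ 0) (h₂ : e₂ ≠ 0) (ht : |t| ≤ T) :
    D.emb (D.clearedValue p e₁ e₂ (T * L) z₁ z₂ r s t : 𝓞 F) =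
      D.auxValue p z₁ z₂ (D.emb D.α ^ r * D.emb D.γ ^ s * (D.emb e₁ / D.emb e₂) ^ t) *
        (D.emb e₁ * D.emb e₂) ^ (T * L) := by
  simp only [clearedValue, auxValue, map_sum, map_mul, map_intCast, Finset.sum_mul]
  refine Finset.sum_congr rfl fun u _ ↦ ?_
  have hN : |t * u.freq| ≤ (T * L : ℕ) := by
    rw [abs_mul, Nat.cast_mul]
    exact mul_le_mul ht u.abs_freq_le (abs_nonneg _) (by positivity)
  rw [D.emb_clearedTerm h₁ h₂ hN]
  ring

lemma house_clearedValue_le (hp : ∀ u, |p u| ≤ 20 ^ x) (hH₁ : house (e₁ : F) ≤ H)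
    (hH₂ : house (e₂ : F) ≤ H) (hb : 1 ≤ b) (hz₁ : |(z₁ : ℝ)| ≤ b) (hz₂ : |(z₂ : ℝ)| ≤ b)
    (hr : |r| ≤ R) (hs : |s| ≤ S) (ht : |t| ≤ T)
    (hG : D.emb D.α ^ (R * L) * D.emb D.γ ^ (S * L) ≤ G) :
    house (D.clearedValue p e₁ e₂ (T * L) z₁ z₂ r s t : F) ≤
      auxHeight K L x b * G * H ^ (2 * (T * L)) := by
  have hH : 0 ≤ H := (house_nonneg _).trans hH₁
  have hterm (u : AuxIndex K L) :
      house ((p u : F) * (D.clearedTerm e₁ e₂ (T * L) z₁ z₂ r s t u : F)) ≤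
        20 ^ x * (3 * (b ^ K * (G * H ^ (2 * (T * L))))) := by
    refine (house_mul_le _ _).trans (mul_le_mul ?_ ?_ (house_nonneg _) (by positivity))
    · rw [house_intCast]
      exact_mod_cast hp u
    · refine (D.house_clearedTerm_le hH₁ hH₂ hb hz₁ hz₂ hr hs ht u).trans ?_
      gcongr
  simp only [clearedValue, map_sum, map_mul, map_intCast]
  refine (house_sum_le_sum_house _ _).trans ((Finset.sum_le_sum fun u _ ↦ hterm u).trans_eq ?_)
  rw [Finset.sum_const, Finset.card_univ, nsmul_eq_mul, auxHeight]
  ring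

lemma one_le_abs_auxValue_mul (h₁ : e₁ ≠ 0) (h₂ : e₂ ≠ 0) (hp : ∀ u, |p u| ≤ 20 ^ x)
    (hH₁ : house (e₁ : F) ≤ H) (hH₂ : house (e₂ : F) ≤ H) (hb : 1 ≤ b) (hz₁ : |(z₁ : ℝ)| ≤ b)
    (hz₂ : |(z₂ : ℝ)| ≤ b) (hr : |r| ≤ R) (hs : |s| ≤ S) (ht : |t| ≤ T)
    (hG : D.emb D.α ^ (R * L) * D.emb D.γ ^ (S * L) ≤ G)
    (hne : D.auxValue p z₁ z₂ (D.emb D.α ^ r * D.emb D.γ ^ s * (D.emb e₁ / D.emb e₂) ^ t) ≠ 0) :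
    1 ≤ |D.auxValue p z₁ z₂ (D.emb D.α ^ r * D.emb D.γ ^ s * (D.emb e₁ / D.emb e₂) ^ t)| *
      H ^ (2 * (T * L)) * (auxHeight K L x b * G * H ^ (2 * (T * L))) ^ 5 := by
  have hH : 0 ≤ H := (house_nonneg _).trans hH₁
  have hemb := D.emb_clearedValue (p := p) (z₁ := z₁) (z₂ := z₂) (r := r) (s := s) h₁ h₂ ht
  have hne' : D.clearedValue p e₁ e₂ (T * L) z₁ z₂ r s t ≠ 0 := by
    intro h
    simp [h, hne, h₁, h₂] at hemb
  have hden : |D.emb e₁ * D.emb e₂| ^ (T * L) ≤ H ^ (2 * (T * L)) := by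
    rw [pow_mul H, sq H, abs_mul]
    gcongr
    · exact (abs_le_house _ _).trans hH₁
    · exact (abs_le_house _ _).trans hH₂
  have hhouse := D.house_clearedValue_le hp hH₁ hH₂ hb hz₁ hz₂ hr hs ht hG
  refine (one_le_abs_mul_house_pow hne' D.emb D.finrank_le).trans ?_
  rw [hemb, abs_mul, abs_pow]
  have := house_nonneg (D.clearedValue p e₁ e₂ (T * L) z₁ z₂ r s t : F)
  gcongr

end UnitFrame

end UnitFrame

section LogForm

/-- The linear form `n log α - m log γ - log η`. -/
noncomputable def logForm (α γ η : ℝ) (n m : ℤ) : ℝ :=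
  n * Real.log α - m * Real.log γ - Real.log η

variable {α γ η W B b : ℝ} {n m : ℤ} {R S T : ℕ} {x : ℤ × ℤ × ℤ}

lemma log_mul_latticePoint_sub (α γ η : ℝ) (n m : ℤ) (x : ℤ × ℤ × ℤ) :
    Real.log α * latticePoint n m x 0 + Real.log γ * latticePoint n m x 1 -
        x.2.2 * logForm α γ η n m =
      x.1 * Real.log α + x.2.1 * Real.log γ + x.2.2 * Real.log η := by
  rw [latticePoint_apply_zero, latticePoint_apply_one, logForm]
  ring

lemma exp_intCast_mul (k : ℤ) (y : ℝ) : Real.exp (k * y) = Real.exp y ^ k := by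
  rw [mul_comm, Real.exp_mul, Real.rpow_intCast]

lemma monomialValue_eq_exp (hα : 0 < α) (hγ : 0 < γ) (hη : 0 < η) (n m : ℤ) (x : ℤ × ℤ × ℤ) :
    monomialValue α γ η x = Real.exp (Real.log α * latticePoint n m x 0 +
      Real.log γ * latticePoint n m x 1 - x.2.2 * logForm α γ η n m) := by
  simp only [log_mul_latticePoint_sub, Real.exp_add, exp_intCast_mul, Real.exp_log hα,
    Real.exp_log hγ, Real.exp_log hη, monomialValue]

lemma abs_log_mul_latticePoint_le (hα : 1 ≤ α) (hγ : 1 ≤ γ) {Λ : ℝ} (hΛ : |logForm α γ η n m| ≤ Λ)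
    (hx : x ∈ box R S T) (hW : R * Real.log α + S * Real.log γ + T * |Real.log η| + T * Λ ≤ W) :
    |Real.log α * latticePoint n m x 0 + Real.log γ * latticePoint n m x 1| ≤ W ∧
      |Real.log α * latticePoint n m x 0 + Real.log γ * latticePoint n m x 1 -
        x.2.2 * logForm α γ η n m| ≤ W := by
  obtain ⟨hr, hs, ht⟩ := mem_box.mp hx
  have hr' : |(x.1 : ℝ)| ≤ R := mod_cast hr
  have hs' : |(x.2.1 : ℝ)| ≤ S := mod_cast hs
  have ht' : |(x.2.2 : ℝ)| ≤ T := mod_cast ht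
  have hmain : |Real.log α * latticePoint n m x 0 + Real.log γ * latticePoint n m x 1 -
      x.2.2 * logForm α γ η n m| ≤ R * Real.log α + S * Real.log γ + T * |Real.log η| := by
    rw [log_mul_latticePoint_sub]
    refine (abs_add_three _ _ _).trans ?_
    rw [abs_mul, abs_mul, abs_mul, abs_of_nonneg (Real.log_nonneg hα),
      abs_of_nonneg (Real.log_nonneg hγ)]
    have := Real.log_nonneg hα
    have := Real.log_nonneg hγ
    gcongr
  have herr : |x.2.2 * logForm α γ η n m| ≤ T * Λ := by
    rw [abs_mul]
    gcongr
  refine ⟨?_, by linarith [(abs_nonneg _).trans herr]⟩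
  have := abs_sub_abs_le_abs_sub (Real.log α * latticePoint n m x 0 +
    Real.log γ * latticePoint n m x 1) (x.2.2 * logForm α γ η n m)
  linarith

lemma abs_latticePoint_zero_le (hn : 0 ≤ n) (hx : x ∈ box R S T) (hB : R + T * n ≤ B) :
    |latticePoint n m x 0| ≤ B := by
  obtain ⟨hr, -, ht⟩ := mem_box.mp hx
  have hr' : |(x.1 : ℝ)| ≤ R := mod_cast hr
  have ht' : |(x.2.2 : ℝ)| ≤ T := mod_cast ht
  have hn' : (0 : ℝ) ≤ n := mod_cast hn
  rw [latticePoint_apply_zero]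
  refine (abs_add_le _ _).trans (le_trans ?_ hB)
  rw [abs_mul, abs_of_nonneg hn']
  gcongr

lemma abs_le_of_abs_mul_add_mul_le {l₁ l₂ z₁ z₂ : ℝ} (hl₁ : 0 ≤ l₁) (hl₂ : 0 < l₂)
    (h : |l₁ * z₁ + l₂ * z₂| ≤ W) (hz₁ : |z₁| ≤ B) (hb : (W + l₁ * B) / l₂ ≤ b) : |z₂| ≤ b := by
  refine le_trans ?_ hb
  rw [le_div_iff₀ hl₂, mul_comm]
  calc l₂ * |z₂| = |l₂ * z₂| := by rw [abs_mul, abs_of_pos hl₂]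
    _ = |(l₁ * z₁ + l₂ * z₂) - l₁ * z₁| := by ring_nf
    _ ≤ |l₁ * z₁ + l₂ * z₂| + |l₁ * z₁| := abs_sub _ _
    _ ≤ W + l₁ * B := by
      rw [abs_mul l₁ z₁, abs_of_nonneg hl₁]
      gcongr

lemma abs_exp_sub_exp_le {s t C : ℝ} (hs : s ≤ C) (ht : t ≤ C) :
    |Real.exp s - Real.exp t| ≤ Real.exp C * |s - t| := by
  wlog h : t ≤ s generalizing s t
  · rw [abs_sub_comm, abs_sub_comm s]
    exact this ht hs (le_of_not_ge h)
  have hexp : Real.exp t = Real.exp s * Real.exp (t - s) := by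
    rw [← Real.exp_add, add_sub_cancel]
  rw [abs_of_nonneg (sub_nonneg.mpr (Real.exp_le_exp.mpr h)), abs_of_nonneg (sub_nonneg.mpr h)]
  calc Real.exp s - Real.exp t = Real.exp s * (1 - Real.exp (t - s)) := by rw [hexp]; ring
    _ ≤ Real.exp C * (s - t) := by
      refine mul_le_mul (Real.exp_le_exp.mpr hs) ?_ ?_ (Real.exp_pos C).le
      · linarith [Real.add_one_le_exp (t - s)]
      · exact sub_nonneg.mpr (Real.exp_le_one_iff.mpr (by linarith))

end LogForm

namespace UnitFrame

open MvPolynomial NumberField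

variable {F : Type*} [Field F] [NumberField F] (D : UnitFrame F) {K L x : ℕ}
  {p : AuxIndex K L → ℤ}

section Comparison

variable {z₁ z₂ v w b W B : ℝ}

lemma abs_auxValue_exp_sub_le (hp : ∀ u, |p u| ≤ 20 ^ x) (hb : 1 ≤ b) (hz₁ : |z₁| ≤ b)
    (hz₂ : |z₂| ≤ b) (hv : |v| ≤ W) (hw : |w| ≤ W) :
    |D.auxValue p z₁ z₂ (Real.exp v) - D.auxValue p z₁ z₂ (Real.exp w)| ≤
      auxHeight K L x b * (Real.exp (L * W) * (L * |v - w|)) := by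
  have hfreq (u : AuxIndex K L) {y : ℝ} (hy : |y| ≤ W) : u.freq * y ≤ L * W := by
    refine (le_abs_self _).trans ?_
    rw [abs_mul]
    exact mul_le_mul u.abs_cast_freq_le hy (abs_nonneg _) (by positivity)
  have hexp (u : AuxIndex K L) :
      |Real.exp (u.freq * v) - Real.exp (u.freq * w)| ≤ Real.exp (L * W) * (L * |v - w|) := by
    refine (abs_exp_sub_exp_le (hfreq u hv) (hfreq u hw)).trans ?_
    rw [← mul_sub, abs_mul]
    have := u.abs_cast_freq_le
    gcongr
  have hterm (u : AuxIndex K L) :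
      |p u * (D.emb (D.ω u.coord) * (z₁ ^ u.deg₁ * z₂ ^ u.deg₂ * Real.exp v ^ u.freq)) -
        p u * (D.emb (D.ω u.coord) * (z₁ ^ u.deg₁ * z₂ ^ u.deg₂ * Real.exp w ^ u.freq))| ≤
      20 ^ x * (3 * (b ^ K * (Real.exp (L * W) * (L * |v - w|)))) := by
    have hpu : |(p u : ℝ)| ≤ 20 ^ x := mod_cast hp u
    have hz := pow_mul_pow_le (abs_nonneg _) (abs_nonneg _) hb hz₁ hz₂ u.deg₁_add_deg₂_lt.le
    have := D.abs_emb_ω_le u.coord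
    have := hexp u
    rw [← mul_sub, ← mul_sub, ← mul_sub, ← exp_intCast_mul, ← exp_intCast_mul, abs_mul, abs_mul,
      abs_mul, abs_mul, abs_pow, abs_pow]
    gcongr
  rw [auxValue, auxValue, ← Finset.sum_sub_distrib]
  refine (Finset.abs_sum_le_sum_abs _ _).trans
    ((Finset.sum_le_sum fun u _ ↦ hterm u).trans_eq ?_)
  rw [Finset.sum_const, Finset.card_univ, nsmul_eq_mul, auxHeight]
  ring

lemma exists_forall_abs_auxValue_exp_le {J : ℕ} (hK : 0 < K)
    (hJ : J * (J + 1) ≤ 6 * x * (2 * L + 1) * (K + 1)) (hW : 0 ≤ W) (hB : 0 ≤ B) (hb : 1 ≤ b)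
    (hBb : B ≤ b)
    (hWb : (20 * W + Real.log (D.emb D.α) * B) / Real.log (D.emb D.γ) ≤ b) :
    ∃ p : AuxIndex K L → ℤ, p ≠ 0 ∧ (∀ u, |p u| ≤ 20 ^ x) ∧ ∀ z₁ z₂ : ℝ, |z₁| ≤ B →
      |Real.log (D.emb D.α) * z₁ + Real.log (D.emb D.γ) * z₂| ≤ W →
      |D.auxValue p z₁ z₂
          (Real.exp (Real.log (D.emb D.α) * z₁ + Real.log (D.emb D.γ) * z₂))| ≤
        (K * J + 1) * (2 * (auxHeight K L x b * (Real.exp (20 * (L * W)) / 20 ^ J))) := by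
  have : Nonempty (AuxIndex K L) := ⟨⟨⟨0, hK⟩, 0⟩, 0, 0⟩
  have hcard : K * (J * (J + 1)) ≤ 2 * (x * Fintype.card (AuxIndex K L)) := by
    rw [AuxIndex.card]
    exact (Nat.mul_le_mul_left K hJ).trans_eq (by ring)
  obtain ⟨p, hp₀, hp, hsmall⟩ := exists_int_forall_abs_sum_exp_le (ρ := 20)
    AuxIndex.deg₁_add_deg₂_lt AuxIndex.abs_cast_freq_le (fun u ↦ D.abs_emb_ω_le u.coord)
    three_pos hcard hW hB (Real.log_nonneg D.one_lt_emb_α.le) (Real.log_pos D.one_lt_emb_γ)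
    (by norm_num) hb hBb (by exact_mod_cast hWb)
  refine ⟨p, hp₀, hp, fun z₁ z₂ hz₁ hw ↦ ?_⟩
  simp only [auxValue, ← exp_intCast_mul]
  refine (hsmall z₁ z₂ _ hz₁ hw rfl).trans_eq ?_
  rw [auxHeight, mul_left_comm (20 : ℝ)]
  push_cast
  ring

end Comparison

/-- The coefficient of `v ^ l` in `v ^ L` times the auxiliary function, as a polynomial in the
variables `z₁` and `z₂`. -/
noncomputable def auxPoly (p : AuxIndex K L → ℤ) (l : Fin (2 * L + 1)) : MvPolynomial (Fin 2) ℝ :=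
  ∑ k : (Σ k : Fin K, Fin (k.1 + 1)), monomial
    (Finsupp.single 0 (k.2 : ℕ) + Finsupp.single 1 (k.1 - k.2 : ℕ))
    (∑ i, p (k, l, i) * D.emb (D.ω i))

lemma exists_auxPoly_ne_zero (hp : p ≠ 0) : ∃ l, D.auxPoly p l ≠ 0 := by
  classical
  by_contra! hzero
  refine hp (funext fun ⟨k, l, i⟩ ↦ ?_)
  have hinj {k k' : Σ k : Fin K, Fin (k.1 + 1)}
      (h : (Finsupp.single 0 (k.2 : ℕ) + Finsupp.single 1 (k.1 - k.2 : ℕ) : Fin 2 →₀ ℕ) =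
        Finsupp.single 0 (k'.2 : ℕ) + Finsupp.single 1 (k'.1 - k'.2 : ℕ)) : k = k' := by
    have h₀ := DFunLike.congr_fun h 0
    have h₁ := DFunLike.congr_fun h 1
    obtain ⟨⟨k, hk⟩, ⟨j, hj⟩⟩ := k
    obtain ⟨⟨k', hk'⟩, ⟨j', hj'⟩⟩ := k'
    simp only [Finsupp.add_apply, Finsupp.single_apply, if_pos, zero_add, add_zero,
      one_ne_zero, zero_ne_one, if_false] at h₀ h₁ hj hj'
    obtain rfl : k = k' := by omega
    obtain rfl : j = j' := h₀
    rfl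
  have hcoeff := congrArg (coeff (Finsupp.single 0 (k.2 : ℕ) + Finsupp.single 1 (k.1 - k.2 : ℕ)))
    (hzero l)
  rw [auxPoly, coeff_sum, coeff_zero, Finset.sum_eq_single k
    (fun k' _ hne ↦ by rw [coeff_monomial, if_neg fun h ↦ hne (hinj h)]) (by simp),
    coeff_monomial, if_pos rfl] at hcoeff
  exact congrFun (D.linearIndependent_ω _ hcoeff) i

lemma totalDegree_auxPoly_le (p : AuxIndex K L → ℤ) (l : Fin (2 * L + 1)) :
    (D.auxPoly p l).totalDegree ≤ K := by
  refine (totalDegree_finsetSum _ _).trans (Finset.sup_le fun k _ ↦ ?_)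
  refine (totalDegree_monomial_le _ _).trans ?_
  rw [Finsupp.sum_add_index' (fun _ ↦ rfl) (fun _ _ _ ↦ rfl), Finsupp.sum_single_index rfl,
    Finsupp.sum_single_index rfl]
  have := k.1.2
  have := k.2.2
  simp only [id]
  omega

lemma sum_eval_auxPoly (p : AuxIndex K L → ℤ) (z : Fin 2 → ℝ) {v : ℝ} (hv : v ≠ 0) :
    ∑ l, eval z (D.auxPoly p l) * v ^ (l : ℕ) = v ^ L * D.auxValue p (z 0) (z 1) v := by
  simp only [auxValue, auxPoly, Fintype.sum_prod_type, Finset.mul_sum, map_sum, eval_monomial,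
    Finset.sum_mul]
  rw [Finset.sum_comm]
  refine Finset.sum_congr rfl fun k _ ↦ Finset.sum_congr rfl fun l _ ↦
    Finset.sum_congr rfl fun i _ ↦ ?_
  rw [Finsupp.prod_add_index' (by simp) (by simp [pow_add])]
  simp only [Finsupp.prod_single_index, pow_zero, AuxIndex.deg₁, AuxIndex.deg₂, AuxIndex.freq,
    AuxIndex.coord, zpow_sub₀ hv, zpow_natCast]
  field_simp

section LowerBound

variable {J R S T B E c C : ℕ} {n m : ℤ} {e₁ e₂ : 𝓞 F} {b B₁ H W : ℝ}

lemma exists_auxValue_ne_zero (hp : p ≠ 0) {η : ℝ} (hη : 0 < η) {M : ℕ} (hM : M = 2 * L + 1)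
    {A : ℕ} (hA : 0 < A) (hE : 0 < E) (hR : R ≤ B) (hS : S ≤ B) (hT : A ≤ 2 * T + 1)
    (hn : 2 * (R : ℤ) < n)
    (hδ : ∀ p q : ℤ, (p ≠ 0 ∨ q ≠ 0) → |p| < A → |q| < A → 4 * (A : ℤ) * B < |q * n + p * m|)
    (hc : (4 * R + 1) * ((4 * S + 1) * (4 * T + 1)) ≤ c ^ 2) (hcC : c < C)
    (hC : max ((2 * T + 1) * (2 * B / E + 1)) (M * K) ≤ C)
    (hcard : C * (M * K) + (2 * T + 1) * (2 * B / A + 1) * K <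
      (2 * R + 1) * ((2 * S + 1) * (2 * T + 1))) :
    ∃ y ∈ box (R + M * E) (S + M * E) T, D.auxValue p (latticePoint n m y 0) (latticePoint n m y 1)
      (monomialValue (D.emb D.α) (D.emb D.γ) η y) ≠ 0 := by
  subst hM
  have hα := one_pos.trans D.one_lt_emb_α
  have hγ := one_pos.trans D.one_lt_emb_γ
  obtain ⟨y, hy, hne⟩ := exists_mem_box_sum_ne_zero hα hγ hη D.zpow_independent hA hE hR hS hT hn
    hδ hc hcC hC hcard (D.exists_auxPoly_ne_zero hp) (D.totalDegree_auxPoly_le p)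
  rw [sum_eval_auxPoly _ _ _ (monomialValue_pos hα hγ hη y).ne'] at hne
  exact ⟨y, hy, right_ne_zero_of_mul hne⟩

lemma abs_auxValue_monomialValue_le (hp : ∀ u, |p u| ≤ 20 ^ x) {η Λ ε : ℝ} (hη : 0 < η)
    (hΛ : |logForm (D.emb D.α) (D.emb D.γ) η n m| ≤ Λ) {y : ℤ × ℤ × ℤ} (hy : y ∈ box R S T)
    (hW : R * Real.log (D.emb D.α) + S * Real.log (D.emb D.γ) + T * |Real.log η| + T * Λ ≤ W)
    (hz : |latticePoint n m y 0| ≤ B₁) (hb : 1 ≤ b) (hz₁ : |latticePoint n m y 0| ≤ b)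
    (hz₂ : |latticePoint n m y 1| ≤ b)
    (hε : ∀ z₁ z₂ : ℝ, |z₁| ≤ B₁ →
      |Real.log (D.emb D.α) * z₁ + Real.log (D.emb D.γ) * z₂| ≤ W → |D.auxValue p z₁ z₂
        (Real.exp (Real.log (D.emb D.α) * z₁ + Real.log (D.emb D.γ) * z₂))| ≤ ε) :
    |D.auxValue p (latticePoint n m y 0) (latticePoint n m y 1)
      (monomialValue (D.emb D.α) (D.emb D.γ) η y)| ≤
        ε + auxHeight K L x b * (Real.exp (L * W) * (L * (T * Λ))) := by
  obtain ⟨hw, hv⟩ := abs_log_mul_latticePoint_le D.one_lt_emb_α.le D.one_lt_emb_γ.le hΛ hy hW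
  have hclose := D.abs_auxValue_exp_sub_le hp hb hz₁ hz₂ hv hw
  rw [sub_sub_cancel_left, abs_neg, abs_mul, ← monomialValue_eq_exp
    (one_pos.trans D.one_lt_emb_α) (one_pos.trans D.one_lt_emb_γ) hη] at hclose
  have ht : |(y.2.2 : ℝ)| ≤ T := mod_cast (mem_box.mp hy).2.2
  have hle : auxHeight K L x b * (Real.exp (L * W) * (L * (|(y.2.2 : ℝ)| *
      |logForm (D.emb D.α) (D.emb D.γ) η n m|))) ≤
        auxHeight K L x b * (Real.exp (L * W) * (L * (T * Λ))) := by
    have := auxHeight_nonneg (K := K) (L := L) (x := x) (zero_le_one.trans hb)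
    gcongr
  have htri := abs_sub_abs_le_abs_sub (D.auxValue p (latticePoint n m y 0) (latticePoint n m y 1)
    (monomialValue (D.emb D.α) (D.emb D.γ) η y)) (D.auxValue p (latticePoint n m y 0)
      (latticePoint n m y 1) (Real.exp (Real.log (D.emb D.α) * latticePoint n m y 0 +
        Real.log (D.emb D.γ) * latticePoint n m y 1)))
  linarith [hε _ _ hz hw]

lemma pow_mul_pow_le_exp {u v : ℝ} (hu : 0 < u) (hv : 0 < v)
    (h : R * Real.log u + S * Real.log v ≤ W) : u ^ (R * L) * v ^ (S * L) ≤ Real.exp (L * W) := by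
  rw [← Real.exp_log hu, ← Real.exp_log hv, ← Real.exp_nat_mul, ← Real.exp_nat_mul, ← Real.exp_add,
    Real.exp_le_exp, Nat.cast_mul, Nat.cast_mul]
  calc R * L * Real.log u + S * L * Real.log v = L * (R * Real.log u + S * Real.log v) := by ring
    _ ≤ L * W := by gcongr

lemma one_le_abs_auxValue_monomialValue_mul (he₁ : 0 < D.emb e₁) (he₂ : 0 < D.emb e₂)
    (hp : ∀ u, |p u| ≤ 20 ^ x) (hH₁ : house (e₁ : F) ≤ H) (hH₂ : house (e₂ : F) ≤ H) (hb : 1 ≤ b)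
    {y : ℤ × ℤ × ℤ} (hy : y ∈ box R S T) (hz₁ : |latticePoint n m y 0| ≤ b)
    (hz₂ : |latticePoint n m y 1| ≤ b)
    (hW : R * Real.log (D.emb D.α) + S * Real.log (D.emb D.γ) ≤ W)
    (hne : D.auxValue p (latticePoint n m y 0) (latticePoint n m y 1)
      (monomialValue (D.emb D.α) (D.emb D.γ) (D.emb e₁ / D.emb e₂) y) ≠ 0) :
    1 ≤ |D.auxValue p (latticePoint n m y 0) (latticePoint n m y 1)
      (monomialValue (D.emb D.α) (D.emb D.γ) (D.emb e₁ / D.emb e₂) y)| * H ^ (2 * (T * L)) *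
        (auxHeight K L x b * Real.exp (L * W) * H ^ (2 * (T * L))) ^ 5 := by
  have hne₀ {e : 𝓞 F} (he : 0 < D.emb e) : e ≠ 0 := by
    rintro rfl
    simp at he
  have hpt₀ : latticePoint n m y 0 = (y.1 + y.2.2 * n : ℤ) := by
    rw [latticePoint_apply_zero]
    push_cast
    rfl
  have hpt₁ : latticePoint n m y 1 = (y.2.1 - y.2.2 * m : ℤ) := by
    rw [latticePoint_apply_one]
    push_cast
    rfl
  rw [hpt₀] at hz₁ hne ⊢
  rw [hpt₁] at hz₂ hne ⊢
  obtain ⟨hr, hs, ht⟩ := mem_box.mp hy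
  exact D.one_le_abs_auxValue_mul (hne₀ he₁) (hne₀ he₂) hp hH₁ hH₂ hb hz₁ hz₂ hr hs ht
    (pow_mul_pow_le_exp (one_pos.trans D.one_lt_emb_α) (one_pos.trans D.one_lt_emb_γ) hW) hne

/-- If the linear form were too small, the auxiliary function would take small values on the box.
By the zero estimate one of these values does not vanish, and its conjugates are bounded. -/
theorem one_le_linearForm_bound (he₁ : 0 < D.emb e₁) (he₂ : 0 < D.emb e₂)
    (hH₁ : house (e₁ : F) ≤ H) (hH₂ : house (e₂ : F) ≤ H) (hK : 0 < K) {A : ℕ} (hA : 0 < A)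
    (hE : 0 < E) (hR : R ≤ B) (hS : S ≤ B) (hT : A ≤ 2 * T + 1) (hn : 2 * (R : ℤ) < n)
    (hδ : ∀ p q : ℤ, (p ≠ 0 ∨ q ≠ 0) → |p| < A → |q| < A → 4 * (A : ℤ) * B < |q * n + p * m|)
    (hc : (4 * R + 1) * ((4 * S + 1) * (4 * T + 1)) ≤ c ^ 2) (hcC : c < C)
    (hC : max ((2 * T + 1) * (2 * B / E + 1)) ((2 * L + 1) * K) ≤ C)
    (hcard : C * ((2 * L + 1) * K) + (2 * T + 1) * (2 * B / A + 1) * K <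
      (2 * R + 1) * ((2 * S + 1) * (2 * T + 1)))
    (hJ : J * (J + 1) ≤ 6 * x * (2 * L + 1) * (K + 1)) {Λ : ℝ}
    (hΛ : |logForm (D.emb D.α) (D.emb D.γ) (D.emb e₁ / D.emb e₂) n m| ≤ Λ)
    (hW : (R + (2 * L + 1) * E : ℕ) * Real.log (D.emb D.α) +
      (S + (2 * L + 1) * E : ℕ) * Real.log (D.emb D.γ) +
        T * |Real.log (D.emb e₁ / D.emb e₂)| + T * Λ ≤ W)
    (hB₁ : (R + (2 * L + 1) * E : ℕ) + T * n ≤ B₁) (hb : 1 ≤ b) (hBb : B₁ ≤ b)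
    (hWb : (20 * W + Real.log (D.emb D.α) * B₁) / Real.log (D.emb D.γ) ≤ b) :
    1 ≤ ((K * J + 1) * (2 * (auxHeight K L x b * (Real.exp (20 * (L * W)) / 20 ^ J))) +
      auxHeight K L x b * (Real.exp (L * W) * (L * (T * Λ)))) * H ^ (2 * (T * L)) *
        (auxHeight K L x b * Real.exp (L * W) * H ^ (2 * (T * L))) ^ 5 := by
  have hΛ₀ : 0 ≤ Λ := (abs_nonneg _).trans hΛ
  have hlogα := Real.log_pos D.one_lt_emb_α
  have hlogγ := Real.log_pos D.one_lt_emb_γ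
  have hη : 0 < D.emb e₁ / D.emb e₂ := div_pos he₁ he₂
  have hn₀ : 0 ≤ n := by omega
  have : (0 : ℝ) ≤ n := mod_cast hn₀
  have hW₀ : 0 ≤ W := le_trans (by positivity) hW
  have hB₀ : 0 ≤ B₁ := le_trans (by positivity) hB₁
  have hWb' : (W + Real.log (D.emb D.α) * B₁) / Real.log (D.emb D.γ) ≤ b := by
    refine le_trans ?_ hWb
    gcongr
    linarith
  obtain ⟨p, hp₀, hp, hsmall⟩ :=
    D.exists_forall_abs_auxValue_exp_le hK hJ hW₀ hB₀ hb hBb hWb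
  obtain ⟨y, hy, hne⟩ := D.exists_auxValue_ne_zero (n := n) (m := m) hp₀ hη rfl hA hE hR hS hT hn
    hδ hc hcC hC hcard
  have hz := abs_latticePoint_zero_le (m := m) hn₀ hy hB₁
  have hz₁ := hz.trans hBb
  have hz₂ := abs_le_of_abs_mul_add_mul_le hlogα.le hlogγ (abs_log_mul_latticePoint_le
    D.one_lt_emb_α.le D.one_lt_emb_γ.le hΛ hy hW).1 hz hWb'
  have hle := D.abs_auxValue_monomialValue_le hp hη hΛ hy hW hz hb hz₁ hz₂ hsmall
  have hW' : (R + (2 * L + 1) * E : ℕ) * Real.log (D.emb D.α) +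
      (S + (2 * L + 1) * E : ℕ) * Real.log (D.emb D.γ) ≤ W := by
    refine le_trans ?_ hW
    rw [add_assoc (_ + _)]
    exact le_add_of_nonneg_right (by positivity)
  have hH : 0 ≤ H := (house_nonneg _).trans hH₁
  have := auxHeight_nonneg (K := K) (L := L) (x := x) (zero_le_one.trans hb)
  refine (D.one_le_abs_auxValue_monomialValue_mul he₁ he₂ hp hH₁ hH₂ hb hy hz₁ hz₂ hW' hne).trans ?_
  gcongr

end LowerBound

end UnitFrame

/-! ### Choice of parameters -/

section Parameters

variable {L h : ℕ}

lemma card_doubled_box_le (hL : 0 < L) (hh : 0 < h) :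
    (4 * (9000 * L ^ 2 * h) + 1) * ((4 * (16200 * L ^ 2 * h) + 1) * (4 * (7500 * L ^ 2) + 1)) ≤
      (8400000 * L ^ 3 * h) ^ 2 := by
  have hu : 0 < L ^ 2 * h := by positivity
  have hv : 0 < L ^ 2 := by positivity
  calc _ ≤ (36001 * (L ^ 2 * h)) * ((64801 * (L ^ 2 * h)) * (30001 * L ^ 2)) := by
        gcongr <;> linarith
    _ = 36001 * 64801 * 30001 * (L ^ 3 * h) ^ 2 := by ring
    _ ≤ 8400000 ^ 2 * (L ^ 3 * h) ^ 2 := by gcongr; norm_num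
    _ = _ := by ring

lemma card_progressions_le (hL : 0 < L) (hh : 0 < h) :
    (2 * (7500 * L ^ 2) + 1) * (2 * (16200 * L ^ 2 * h) / (100 * L) + 1) ≤
      8400000 * L ^ 3 * h + 1 := by
  have hdiv : 2 * (16200 * L ^ 2 * h) / (100 * L) ≤ 324 * L * h :=
    Nat.div_le_of_le_mul (by linarith)
  have hLh : 0 < L * h := by positivity
  have hv : 0 < L ^ 2 := by positivity
  calc _ ≤ (15001 * L ^ 2) * (325 * (L * h)) := by gcongr <;> linarith
    _ = 4875325 * (L ^ 3 * h) := by ring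
    _ ≤ _ := by linarith [Nat.zero_le (L ^ 3 * h)]

lemma totalDegree_bound_le (hL : 0 < L) :
    (2 * L + 1) * (450000 * L ^ 2 * h) ≤ 8400000 * L ^ 3 * h + 1 := by
  calc _ ≤ (3 * L) * (450000 * L ^ 2 * h) := by gcongr; linarith
    _ = 1350000 * (L ^ 3 * h) := by ring
    _ ≤ _ := by linarith [Nat.zero_le (L ^ 3 * h)]

lemma card_zeros_lt (hL : 1000 ≤ L) (hh : 0 < h) :
    (8400000 * L ^ 3 * h + 1) * ((2 * L + 1) * (450000 * L ^ 2 * h)) +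
        (2 * (7500 * L ^ 2) + 1) * (2 * (16200 * L ^ 2 * h) / 250 + 1) * (450000 * L ^ 2 * h) <
      (2 * (9000 * L ^ 2 * h) + 1) *
        ((2 * (16200 * L ^ 2 * h) + 1) * (2 * (7500 * L ^ 2) + 1)) := by
  have hv : 1000000 ≤ L ^ 2 := by nlinarith
  have hu : 1000000 ≤ L ^ 2 * h := hv.trans (Nat.le_mul_of_pos_right _ hh)
  have hw : 1000 * (L ^ 2 * h) ≤ L ^ 3 * h := by
    rw [pow_succ' L 2, mul_assoc]
    gcongr
  have : 0 < L ^ 3 * h := by linarith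
  have hdiv : 2 * (16200 * L ^ 2 * h) / 250 + 1 ≤ 130 * (L ^ 2 * h) := by
    rw [mul_assoc]
    omega
  have h₁ : (8400000 * L ^ 3 * h + 1) * ((2 * L + 1) * (450000 * L ^ 2 * h)) ≤
      (8400001 * (L ^ 3 * h)) * (900450 * (L ^ 3 * h)) :=
    Nat.mul_le_mul (by linarith) (by linarith)
  have h₂ : (2 * (7500 * L ^ 2) + 1) * (2 * (16200 * L ^ 2 * h) / 250 + 1) *
      (450000 * L ^ 2 * h) ≤ (15001 * L ^ 2) * (130 * (L ^ 2 * h)) * (450000 * L ^ 2 * h) := by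
    gcongr
    linarith
  calc _ ≤ _ := add_le_add h₁ h₂
    _ = (8400001 * 900450 + 15001 * 130 * 450000) * (L ^ 3 * h) ^ 2 := by ring
    _ < 18000 * 32400 * 15000 * (L ^ 3 * h) ^ 2 := by gcongr; norm_num
    _ = (2 * (9000 * L ^ 2 * h)) * ((2 * (16200 * L ^ 2 * h)) * (2 * (7500 * L ^ 2))) := by ring
    _ ≤ _ := by gcongr <;> exact Nat.le_succ _

lemma vanishing_conditions_le (hL : 0 < L) (hh : 0 < h) :
    449000 * L ^ 3 * h * (449000 * L ^ 3 * h + 1) ≤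
      6 * (37500 * L ^ 3 * h) * (2 * L + 1) * (450000 * L ^ 2 * h + 1) := by
  have hw : 0 < L ^ 3 * h := by positivity
  calc _ ≤ (449000 * L ^ 3 * h) * (449001 * (L ^ 3 * h)) := by gcongr; linarith
    _ = 449000 * 449001 * (L ^ 3 * h) ^ 2 := by ring
    _ ≤ 6 * 37500 * 2 * 450000 * (L ^ 3 * h) ^ 2 := by gcongr ?_ * _; norm_num
    _ = 6 * (37500 * L ^ 3 * h) * (2 * L) * (450000 * L ^ 2 * h) := by ring
    _ ≤ _ := by gcongr <;> exact Nat.le_succ _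

end Parameters

section Ratio

/-- `243 / 142` and `166 / 97` are Farey neighbours on either side of `m / n`, so `(p, q)` is an
integral combination of `(142, -243)` and `(-97, 166)`. If its coefficients have opposite signs,
then `|q| ≥ 243 + 166`. -/
lemma lt_abs_mul_add_mul {n m D p q : ℤ} (hD : 0 ≤ D) (h₁ : D < 142 * m - 243 * n)
    (h₂ : D < 166 * n - 97 * m) (hpq : p ≠ 0 ∨ q ≠ 0) (hq : |q| < 250) :
    D < |q * n + p * m| := by
  obtain ⟨x, y, rfl, rfl⟩ : ∃ x y : ℤ, p = 142 * x - 97 * y ∧ q = 166 * y - 243 * x :=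
    ⟨166 * p + 97 * q, 243 * p + 142 * q, by ring, by ring⟩
  have hcomb : (166 * y - 243 * x) * n + (142 * x - 97 * y) * m =
      x * (142 * m - 243 * n) + y * (166 * n - 97 * m) := by ring
  rw [hcomb, lt_abs]
  rw [abs_lt] at hq
  rcases lt_trichotomy x 0 with hx | rfl | hx
  · have : y ≤ 0 := by omega
    right
    nlinarith
  · rcases lt_trichotomy y 0 with hy | rfl | hy
    · right
      nlinarith
    · simp at hpq
    · left
      nlinarith
  · have : 0 ≤ y := by omega
    left
    nlinarith

lemma mem_Icc_of_abs_mul_sub_mul_le {l₁ l₂ n m r s c : ℝ} (hn : 0 ≤ n) (hl₂ : 0 < l₂)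
    (hr : r * l₂ ≤ l₁) (hs : l₁ ≤ s * l₂) (h : |n * l₁ - m * l₂| ≤ c) :
    m ∈ Set.Icc (r * n - c / l₂) (s * n + c / l₂) := by
  have hc : c / l₂ * l₂ = c := div_mul_cancel₀ _ hl₂.ne'
  obtain ⟨hlo, hhi⟩ := abs_le.mp h
  have := mul_le_mul_of_nonneg_left hr hn
  have := mul_le_mul_of_nonneg_left hs hn
  constructor <;> refine le_of_mul_le_mul_right ?_ hl₂ <;> linarith

lemma lt_farey_forms {l₁ l₂ η : ℝ} (hγ : 0.28 < l₂) (hr : 1.711277 * l₂ ≤ l₁)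
    (hs : l₁ ≤ 1.7113 * l₂) {u h : ℕ} (hh : 0 < h) (hu : 1000000 * h ≤ u) (hη : |η| ≤ h / 100)
    {n m : ℤ} (hn : 13500000000 * (u : ℤ) ≤ n) (hΛ : |n * l₁ - m * l₂ - η| ≤ 1) :
    16200000 * (u : ℤ) < 142 * m - 243 * n ∧ 16200000 * (u : ℤ) < 166 * n - 97 * m := by
  have hh' : (1 : ℝ) ≤ h := mod_cast hh
  have hu' : 1000000 * (h : ℝ) ≤ u := mod_cast hu
  have hn' : 13500000000 * (u : ℝ) ≤ n := mod_cast hn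
  have hlin : |n * l₁ - m * l₂| ≤ h / 100 + 1 := by
    linarith [abs_sub_abs_le_abs_sub (n * l₁ - m * l₂) η]
  have hdiv : (h / 100 + 1) / l₂ ≤ h + 10 := by
    rw [div_le_iff₀ (by linarith)]
    nlinarith
  obtain ⟨hlo, hhi⟩ := mem_Icc_of_abs_mul_sub_mul_le (by linarith) (by linarith) hr hs hlin
  have h₁ : 16200000 * (u : ℝ) < 142 * m - 243 * n := by linarith
  have h₂ : 16200000 * (u : ℝ) < 166 * n - 97 * m := by linarith
  exact ⟨mod_cast h₁, mod_cast h₂⟩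

end Ratio

section Exponentials

lemma mul_pow_le_exp {E : ℝ} (hE : 1000000000 ≤ E) : (10 : ℝ) ^ 104 * E ^ 24 ≤ Real.exp E := by
  have hexp : E / 100 ≤ Real.exp (E / 100) := by linarith [Real.add_one_le_exp (E / 100)]
  calc (10 : ℝ) ^ 104 * E ^ 24 ≤ (10 ^ 7) ^ 76 / 100 ^ 24 * E ^ 24 := by gcongr; norm_num
    _ = (10 ^ 7) ^ 76 * (E / 100) ^ 24 := by ring
    _ ≤ (E / 100) ^ 76 * (E / 100) ^ 24 := by gcongr; linarith
    _ = (E / 100) ^ 100 := by rw [← pow_add]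
    _ ≤ Real.exp (E / 100) ^ 100 := by gcongr
    _ = Real.exp E := by rw [← Real.exp_nat_mul]; congr 1; push_cast; ring

lemma mul_sq_le_exp_div {L : ℝ} (hL : 1050 ≤ L) : 15000 * L ^ 2 ≤ Real.exp (L / 42) := by
  obtain ⟨s, rfl⟩ : ∃ s, L = 42 * (25 + s) := ⟨L / 42 - 25, by ring⟩
  have hs : 0 ≤ s := by linarith
  have hexp25 : (70000000000 : ℝ) ≤ Real.exp 1 ^ 25 := by
    calc (70000000000 : ℝ) ≤ 2.7182818283 ^ 25 := by norm_num
      _ ≤ _ := by gcongr; exact Real.exp_one_gt_d9.le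
  calc 15000 * (42 * (25 + s)) ^ 2 ≤ 70000000000 * (1 + s + s ^ 2 / 2) := by
        nlinarith [sq_nonneg s]
    _ ≤ Real.exp 1 ^ 25 * Real.exp s := by gcongr; exact Real.quadratic_le_exp_of_nonneg hs
    _ = Real.exp (42 * (25 + s) / 42) := by
      rw [← Real.exp_nat_mul, ← Real.exp_add]
      congr 1
      push_cast
      ring

lemma log_twenty_mem_Ioo : Real.log 20 ∈ Set.Ioo 2.9957 2.99574 := by
  have h : Real.log 20 = 2 * Real.log 2 + Real.log 5 := by
    rw [show (20 : ℝ) = 2 ^ 2 * 5 by norm_num, Real.log_mul (by norm_num) (by norm_num),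
      Real.log_pow]
    push_cast
    ring
  rw [h]
  constructor <;> linarith [Real.log_two_gt_d9, Real.log_two_lt_d9, Real.log_five_gt_d9,
    Real.log_five_lt_d9]

lemma pow_six_mul_le_exp_div {M P E : ℝ} (hE : 1000000000 ≤ E) (hM : 0 ≤ M)
    (hME : M ≤ 10 ^ 14 * E ^ 3) (hPE : P ≤ 10 ^ 14 * E ^ 2) :
    M ^ 6 * P ≤ Real.exp E / 4 := by
  have : 0 < E := by linarith
  have hE₄ : 1 ≤ E ^ 4 := one_le_pow₀ (by linarith)
  calc M ^ 6 * P ≤ M ^ 6 * (10 ^ 14 * E ^ 2) := by gcongr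
    _ ≤ (10 ^ 14 * E ^ 3) ^ 6 * (10 ^ 14 * E ^ 2) := by gcongr
    _ = 10 ^ 98 * E ^ 20 * 1 := by ring
    _ ≤ 10 ^ 98 * E ^ 20 * (10 ^ 5 * E ^ 4) := by gcongr; linarith
    _ ≤ 10 ^ 104 * E ^ 24 / 4 := by
      have : 0 ≤ E ^ 24 := by positivity
      linarith
    _ ≤ Real.exp E / 4 := by gcongr; exact mul_pow_le_exp hE

lemma exp_factors_eq (M P₁ P₂ q w t J V : ℝ) :
    (P₁ * (2 * (M * Real.exp q * (Real.exp (20 * w) / Real.exp J))) +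
        M * Real.exp q * (Real.exp w * (P₂ * Real.exp (-V)))) * Real.exp (2 * t) *
      (M * Real.exp q * Real.exp w * Real.exp (2 * t)) ^ 5 =
    M ^ 6 * (2 * P₁) * Real.exp (6 * q + 25 * w + 12 * t - J) +
      M ^ 6 * P₂ * Real.exp (6 * q + 6 * w + 12 * t - V) := by
  have h₁ : Real.exp (6 * q + 25 * w + 12 * t - J) =
      Real.exp q ^ 6 * Real.exp (20 * w) * Real.exp w ^ 5 * Real.exp (2 * t) ^ 6 /
        Real.exp J := by
    simp only [← Real.exp_nat_mul, ← Real.exp_add, ← Real.exp_sub]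
    congr 1
    push_cast
    ring
  have h₂ : Real.exp (6 * q + 6 * w + 12 * t - V) =
      Real.exp q ^ 6 * Real.exp w ^ 6 * Real.exp (2 * t) ^ 6 * Real.exp (-V) := by
    simp only [← Real.exp_nat_mul, ← Real.exp_add]
    congr 1
    push_cast
    ring
  rw [h₁, h₂]
  ring

lemma exp_factors_lt_one {M P₁ P₂ q w t J V E : ℝ} (hE : 1000000000 ≤ E) (hM : 0 ≤ M)
    (hME : M ≤ 10 ^ 14 * E ^ 3) (hP₁ : P₁ ≤ 10 ^ 13 * E ^ 2) (hP₂ : P₂ ≤ 10 ^ 13 * E ^ 2)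
    (hJ : 6 * q + 25 * w + 12 * t - J ≤ -2 * E) (hV : 6 * q + 6 * w + 12 * t - V ≤ -2 * E) :
    (P₁ * (2 * (M * Real.exp q * (Real.exp (20 * w) / Real.exp J))) +
        M * Real.exp q * (Real.exp w * (P₂ * Real.exp (-V)))) * Real.exp (2 * t) *
      (M * Real.exp q * Real.exp w * Real.exp (2 * t)) ^ 5 < 1 := by
  have hE₂ : 0 ≤ E ^ 2 := sq_nonneg E
  rw [exp_factors_eq]
  calc _ ≤ Real.exp E / 4 * Real.exp (-2 * E) + Real.exp E / 4 * Real.exp (-2 * E) := by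
        gcongr <;> exact pow_six_mul_le_exp_div hE hM hME (by linarith)
    _ = Real.exp (-E) / 2 := by
      rw [show -E = E + -2 * E by ring, Real.exp_add]
      ring
    _ < 1 := by linarith [Real.exp_le_one_iff.mpr (show -E ≤ 0 by linarith)]

end Exponentials

section ExplicitBound

open NumberField Module

variable {F : Type*} [Field F] [NumberField F]

section Conditions

variable {L h : ℕ} {l₁ l₂ Λ : ℝ}

lemma log_weights_le (hL : 1050 ≤ L) (hh : 0 < h) (hα : l₁ < 0.482) (hγ : l₂ < 0.282) {η : ℝ}
    (hη : |η| ≤ h / 100) (hΛ : 7500 * (L : ℝ) ^ 2 * Λ ≤ 1) :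
    (9000 * L ^ 2 * h + (2 * L + 1) * (100 * L) : ℕ) * l₁ +
        (16200 * L ^ 2 * h + (2 * L + 1) * (100 * L) : ℕ) * l₂ + (7500 * L ^ 2 : ℕ) * |η| +
      (7500 * L ^ 2 : ℕ) * Λ ≤ 9225 * ((L : ℝ) ^ 2 * h) := by
  have hL' : (1050 : ℝ) ≤ L := mod_cast hL
  have hh' : (1 : ℝ) ≤ h := mod_cast hh
  have hv : 1050 * (L : ℝ) ≤ L ^ 2 := by nlinarith
  have hu : (L : ℝ) ^ 2 ≤ L ^ 2 * h := le_mul_of_one_le_right (by positivity) hh'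
  have hα' : (9000 * L ^ 2 * h + (2 * L + 1) * (100 * L) : ℕ) * l₁ ≤
      (9000 * L ^ 2 * h + (2 * L + 1) * (100 * L) : ℕ) * 0.482 := by gcongr
  have hγ' : (16200 * L ^ 2 * h + (2 * L + 1) * (100 * L) : ℕ) * l₂ ≤
      (16200 * L ^ 2 * h + (2 * L + 1) * (100 * L) : ℕ) * 0.282 := by gcongr
  have hη' : (7500 * L ^ 2 : ℕ) * |η| ≤ 75 * ((L : ℝ) ^ 2 * h) := by
    calc (7500 * L ^ 2 : ℕ) * |η| ≤ 7500 * (L : ℝ) ^ 2 * (h / 100) := by push_cast; gcongr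
      _ = _ := by ring
  push_cast at *
  linarith

/-- The first coordinates of the points used stay below `exp (5L / 42)` because
`n ≤ exp (2L / 21)`. -/
lemma coordinate_bounds_le_exp (hL : 1050 ≤ L) (hh : 0 < h) (hα : l₁ < 0.482) (hγ : 0.28 < l₂)
    {n : ℤ} (hn : 0 < n) (hLn : 10.5 * Real.log n ≤ L)
    (hbig : 13500000000 * ((L : ℤ) ^ 2 * h) ≤ n) :
    (9000 * L ^ 2 * h + (2 * L + 1) * (100 * L) : ℕ) + (7500 * L ^ 2 : ℕ) * (n : ℝ) ≤
        Real.exp (5 * L / 42) ∧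
      (20 * (9225 * ((L : ℝ) ^ 2 * h)) + l₁ * ((9000 * L ^ 2 * h + (2 * L + 1) * (100 * L) : ℕ) +
        (7500 * L ^ 2 : ℕ) * (n : ℝ))) / l₂ ≤ Real.exp (5 * L / 42) := by
  have hL' : (1050 : ℝ) ≤ L := mod_cast hL
  have hh' : (1 : ℝ) ≤ h := mod_cast hh
  have hn' : (0 : ℝ) < n := mod_cast hn
  have hbig' : 13500000000 * ((L : ℝ) ^ 2 * h) ≤ n := mod_cast hbig
  have hv : 1050 * (L : ℝ) ≤ L ^ 2 := by nlinarith
  have hu : (L : ℝ) ^ 2 ≤ L ^ 2 * h := le_mul_of_one_le_right (by positivity) hh'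
  have hnv : 1000 * (n : ℝ) ≤ L ^ 2 * n := by gcongr; linarith
  have hexp : 15000 * (L : ℝ) ^ 2 * n ≤ Real.exp (5 * L / 42) := by
    calc 15000 * (L : ℝ) ^ 2 * n ≤ Real.exp (L / 42) * Real.exp (2 * L / 21) := by
          gcongr
          · exact mul_sq_le_exp_div hL'
          · rw [← Real.log_le_iff_le_exp hn']
            linarith
      _ = Real.exp (5 * L / 42) := by rw [← Real.exp_add]; congr 1; ring
  have hB : (9000 * L ^ 2 * h + (2 * L + 1) * (100 * L) : ℕ) + (7500 * L ^ 2 : ℕ) * (n : ℝ) ≤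
      7501 * (L ^ 2 * n) := by
    push_cast
    linarith
  refine ⟨by linarith, ?_⟩
  rw [div_le_iff₀ (by linarith)]
  calc _ ≤ 20 * (9225 * ((L : ℝ) ^ 2 * h)) + 0.482 * (7501 * (L ^ 2 * n)) := by gcongr
    _ ≤ 15000 * (L : ℝ) ^ 2 * n * 0.28 := by linarith
    _ ≤ _ := by gcongr

lemma mul_sq_mul_exp_neg_le_one (hL : 0 < L) (hh : 0 < h) :
    7500 * (L : ℝ) ^ 2 * Real.exp (-(1150000 * ((L : ℝ) ^ 3 * h))) ≤ 1 := by
  have hL' : (1 : ℝ) ≤ L := mod_cast hL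
  have hh' : (1 : ℝ) ≤ h := mod_cast hh
  rw [Real.exp_neg, ← div_eq_mul_inv, div_le_one (Real.exp_pos _)]
  have : (L : ℝ) ^ 2 ≤ L ^ 3 := pow_le_pow_right₀ hL' (by norm_num)
  have : (L : ℝ) ^ 3 ≤ L ^ 3 * h := le_mul_of_one_le_right (by positivity) hh'
  linarith [Real.add_one_le_exp (1150000 * ((L : ℝ) ^ 3 * h)), sq_nonneg (L : ℝ)]

lemma mul_mul_add_one_le {l u E : ℝ} (hl₁ : 1 ≤ l) (hu₁ : 1 ≤ u) (hl : l ≤ E) (hu : u ≤ E) :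
    9 * (2 * l + 1) * (450000 * u * (450000 * u + 1)) ≤ 10 ^ 14 * E ^ 3 :=
  calc 9 * (2 * l + 1) * (450000 * u * (450000 * u + 1))
      ≤ 9 * (3 * E) * (450000 * E * (450001 * E)) := by gcongr <;> linarith
    _ = 9 * 3 * 450000 * 450001 * E ^ 3 := by ring
    _ ≤ 10 ^ 14 * E ^ 3 := by
      have : 0 ≤ E := by linarith
      gcongr
      norm_num

lemma auxHeight_exp (K L x : ℕ) (β : ℝ) :
    UnitFrame.auxHeight K L x (Real.exp β) =
      9 * (2 * L + 1) * (K * (K + 1)) * Real.exp (x * Real.log 20 + K * β) := by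
  rw [UnitFrame.auxHeight, AuxIndex.card, Real.exp_add, Real.exp_nat_mul, Real.exp_nat_mul,
    Real.exp_log (by norm_num)]
  push_cast
  ring

lemma linearForm_bound_lt_one (hL : 1050 ≤ L) (hh : 0 < h) {a : ℝ}
    (ha : a = UnitFrame.auxHeight (450000 * L ^ 2 * h) L (37500 * L ^ 3 * h)
      (Real.exp (5 * L / 42))) :
    (((450000 * L ^ 2 * h : ℕ) * (449000 * L ^ 3 * h : ℕ) + 1) *
        (2 * (a * (Real.exp (20 * (L * (9225 * ((L : ℝ) ^ 2 * h)))) /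
          20 ^ (449000 * L ^ 3 * h)))) +
      a * (Real.exp (L * (9225 * ((L : ℝ) ^ 2 * h))) *
        (L * ((7500 * L ^ 2 : ℕ) * Real.exp (-(1150000 * ((L : ℝ) ^ 3 * h))))))) *
      Real.exp h ^ (2 * (7500 * L ^ 2 * L)) *
        (a * Real.exp (L * (9225 * ((L : ℝ) ^ 2 * h))) *
          Real.exp h ^ (2 * (7500 * L ^ 2 * L))) ^ 5 < 1 := by
  have hL' : (1050 : ℝ) ≤ L := mod_cast hL
  have hh' : (1 : ℝ) ≤ h := mod_cast hh
  obtain ⟨u, hu⟩ : ∃ u : ℝ, u = (L : ℝ) ^ 2 * h := ⟨_, rfl⟩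
  obtain ⟨E, hE⟩ : ∃ E : ℝ, E = (L : ℝ) ^ 3 * h := ⟨_, rfl⟩
  have hEu : E = L * u := by rw [hE, hu]; ring
  have hv : (1050 : ℝ) ^ 2 ≤ (L : ℝ) ^ 2 := by gcongr
  have hu₀ : 1050 ^ 2 ≤ u := by rw [hu]; nlinarith
  have hE₀ : 1000000000 ≤ E := by rw [hEu]; nlinarith
  have huE : 1050 * u ≤ E := by rw [hEu]; gcongr
  have hLE : L ≤ E := by rw [hEu]; exact le_mul_of_one_le_right (by linarith) (by linarith)
  have hE₂ : E ≤ E ^ 2 := le_self_pow₀ (by linarith) two_ne_zero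
  obtain ⟨hlog₁, hlog₂⟩ := log_twenty_mem_Ioo
  have hlog₁' := mul_le_mul_of_nonneg_left hlog₁.le (by linarith : 0 ≤ E)
  have hlog₂' := mul_le_mul_of_nonneg_left hlog₂.le (by linarith : 0 ≤ E)
  have hK : ((450000 * L ^ 2 * h : ℕ) : ℝ) = 450000 * u := by rw [hu]; push_cast; ring
  have hJ : ((449000 * L ^ 3 * h : ℕ) : ℝ) = 449000 * E := by rw [hE]; push_cast; ring
  have hx : ((37500 * L ^ 3 * h : ℕ) : ℝ) = 37500 * E := by rw [hE]; push_cast; ring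
  have hH : Real.exp h ^ (2 * (7500 * L ^ 2 * L)) = Real.exp (2 * (7500 * E)) := by
    rw [← Real.exp_nat_mul, hE]
    congr 1
    push_cast
    ring
  have h20 : (20 : ℝ) ^ (449000 * L ^ 3 * h) = Real.exp (449000 * E * Real.log 20) := by
    rw [← hJ, Real.exp_nat_mul, Real.exp_log (by norm_num)]
  have hW : (L : ℝ) * (9225 * u) = 9225 * E := by rw [hEu]; ring
  have hT (y : ℝ) : (L : ℝ) * ((7500 * L ^ 2 : ℕ) * y) = 7500 * (L : ℝ) ^ 3 * y := by
    push_cast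
    ring
  rw [ha, auxHeight_exp, hK, hJ, hx, hH, h20, ← hu, ← hE, hW, hT]
  refine exp_factors_lt_one hE₀ (by positivity) ?_ ?_ ?_ ?_ ?_
  · exact mul_mul_add_one_le (by linarith) (by linarith) hLE (by linarith)
  · calc 450000 * u * (449000 * E) + 1 ≤ 450000 * E * (449000 * E) + E ^ 2 := by
          gcongr <;> linarith
      _ ≤ 10 ^ 13 * E ^ 2 := by linarith
  · have : (L : ℝ) ^ 3 ≤ E := by rw [hE]; exact le_mul_of_one_le_right (by positivity) hh'
    linarith
  · linarith
  · linarith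

end Conditions

/-- `L` plays the role of `log n`, and `h` that of the logarithmic height of `e₁ / e₂`. -/
theorem UnitFrame.exp_neg_le_abs_logForm (D : UnitFrame F) {e₁ e₂ : 𝓞 F} {n m : ℤ} {L h : ℕ}
    (hα : Real.log (D.emb D.α) < 0.482)
    (hγ₀ : 0.28 < Real.log (D.emb D.γ)) (hγ : Real.log (D.emb D.γ) < 0.282)
    (hr : 1.711277 * Real.log (D.emb D.γ) ≤ Real.log (D.emb D.α))
    (hs : Real.log (D.emb D.α) ≤ 1.7113 * Real.log (D.emb D.γ))
    (he₁ : 0 < D.emb e₁) (he₂ : 0 < D.emb e₂) (hh : 0 < h)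
    (hH₁ : house (e₁ : F) ≤ Real.exp h) (hH₂ : house (e₂ : F) ≤ Real.exp h)
    (hη : |Real.log (D.emb e₁ / D.emb e₂)| ≤ h / 100) (hL : 1050 ≤ L) (hn : 0 < n)
    (hLn : 10.5 * Real.log n ≤ L) (hbig : 13500000000 * ((L : ℤ) ^ 2 * h) ≤ n) :
    Real.exp (-(1150000 * ((L : ℝ) ^ 3 * h))) ≤
      |logForm (D.emb D.α) (D.emb D.γ) (D.emb e₁ / D.emb e₂) n m| := by
  by_contra! hlt
  have hL₀ : 0 < L := by linarith
  have hΛ₁ : Real.exp (-(1150000 * ((L : ℝ) ^ 3 * h))) ≤ 1 :=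
    Real.exp_le_one_iff.mpr (neg_nonpos.mpr (by positivity))
  have hu : 1000000 * h ≤ L ^ 2 * h := by
    gcongr
    nlinarith
  obtain ⟨hfarey₁, hfarey₂⟩ := lt_farey_forms hγ₀ hr hs hh hu hη (mod_cast hbig) (hlt.le.trans hΛ₁)
  obtain ⟨hb, hWb⟩ := coordinate_bounds_le_exp hL hh hα hγ₀ hn hLn hbig
  have hδ (p q : ℤ) (hpq : p ≠ 0 ∨ q ≠ 0) (_ : |p| < (250 : ℕ)) (hq : |q| < (250 : ℕ)) :
      4 * ((250 : ℕ) : ℤ) * (16200 * L ^ 2 * h : ℕ) < |q * n + p * m| := by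
    have := lt_abs_mul_add_mul (by positivity) hfarey₁ hfarey₂ hpq hq
    push_cast at this ⊢
    linarith
  have hRn : 2 * ((9000 * L ^ 2 * h : ℕ) : ℤ) < n := by
    have : (0 : ℤ) < (L : ℤ) ^ 2 * h := by positivity
    push_cast
    linarith
  refine (linearForm_bound_lt_one hL hh rfl).not_ge
    (D.one_le_linearForm_bound (A := 250) (E := 100 * L) (B := 16200 * L ^ 2 * h)
      he₁ he₂ hH₁ hH₂ (by positivity) (by norm_num) (by positivity) (by gcongr; norm_num) le_rfl
      (by nlinarith) hRn hδ (card_doubled_box_le hL₀ hh) (Nat.lt_succ_self _)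
      (max_le (card_progressions_le hL₀ hh) (totalDegree_bound_le hL₀))
      (card_zeros_lt (by linarith) hh) (vanishing_conditions_le hL₀ hh) hlt.le
      (log_weights_le hL hh hα hγ hη (mul_sq_mul_exp_neg_le_one hL₀ hh)) le_rfl
      (Real.one_le_exp (by positivity)) hb hWb)

end ExplicitBound

/-! ### The field of the golden and the plastic ratio -/

section SelmerRoots

open Polynomial NumberField Module IntermediateField

lemma monic_X_pow_sub_X_sub_one (R : Type*) [CommRing R] [Nontrivial R] {n : ℕ} (hn : 1 < n) :
    (X ^ n - X - 1 : R[X]).Monic := by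
  rw [sub_sub, ← C_1]
  exact monic_X_pow_sub (by rw [degree_X_add_C]; exact_mod_cast hn)

lemma natDegree_X_pow_sub_X_sub_one (R : Type*) [CommRing R] [Nontrivial R] {n : ℕ} (hn : 1 < n) :
    (X ^ n - X - 1 : R[X]).natDegree = n := by
  rw [sub_sub, ← C_1, natDegree_sub_eq_left_of_natDegree_lt, natDegree_X_pow]
  rwa [natDegree_X_add_C, natDegree_X_pow]

lemma isIntegral_of_pow_eq_add_one {R : Type*} [CommRing R] {n : ℕ} (hn : 1 < n) {x : R}
    (h : x ^ n = x + 1) : IsIntegral ℤ x :=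
  ⟨X ^ n - X - 1, monic_X_pow_sub_X_sub_one ℤ hn, by simp [h]⟩

lemma minpoly_eq_of_pow_eq_add_one {K : Type*} [Field K] [Algebra ℚ K] {n : ℕ} (hn : 1 < n) {x : K}
    (h : x ^ n = x + 1) : minpoly ℚ x = X ^ n - X - 1 :=
  (minpoly.eq_of_irreducible_of_monic (X_pow_sub_X_sub_one_irreducible_rat hn.ne') (by simp [h])
    (monic_X_pow_sub_X_sub_one ℚ hn)).symm

lemma natDegree_minpoly_of_pow_eq_add_one {K : Type*} [Field K] [Algebra ℚ K] {n : ℕ} (hn : 1 < n)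
    {x : K} (h : x ^ n = x + 1) : (minpoly ℚ x).natDegree = n := by
  rw [minpoly_eq_of_pow_eq_add_one hn h, natDegree_X_pow_sub_X_sub_one ℚ hn]

lemma finrank_adjoin_of_pow_eq_add_one {K : Type*} [Field K] [Algebra ℚ K] {n : ℕ} (hn : 1 < n)
    {x : K} (h : x ^ n = x + 1) : finrank ℚ ℚ⟮x⟯ = n := by
  rw [adjoin.finrank (isIntegral_of_pow_eq_add_one hn h).tower_top,
    natDegree_minpoly_of_pow_eq_add_one hn h]

lemma linearIndependent_gen_pow {n : ℕ} (hn : 1 < n) {x : ℝ} (h : x ^ n = x + 1) :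
    LinearIndependent ℚ fun i : Fin n ↦ AdjoinSimple.gen ℚ x ^ (i : ℕ) := by
  have hdeg := natDegree_minpoly_of_pow_eq_add_one hn (x := AdjoinSimple.gen ℚ x) (Subtype.ext h)
  have hpow := linearIndependent_pow (K := ℚ) (AdjoinSimple.gen ℚ x)
  exact hpow.comp (Fin.cast hdeg.symm) (Fin.cast_injective _)

/-- The unit with value `x` when `x ^ (n + 1) = x + 1`, its inverse being `x ^ n - 1`. -/
def unitOfPowEqAddOne {R : Type*} [CommRing R] {n : ℕ} (x : R) (h : x ^ (n + 1) = x + 1) : Rˣ :=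
  Units.mkOfMulEqOne x (x ^ n - 1) (by linear_combination h)

section Norm

variable {K : Type*} [NormedField K] {z : K} {x : ℝ}

lemma norm_le_of_pow_eq_add_one {n : ℕ} (hx : 0 < x) (hxn : x ^ (n + 1) = x + 1)
    (h : z ^ (n + 1) = z + 1) : ‖z‖ ≤ x := by
  by_contra! hlt
  have hz : ‖z‖ ^ (n + 1) ≤ ‖z‖ + 1 := by
    rw [← norm_pow, h]
    exact (norm_add_le _ _).trans_eq (by rw [norm_one])
  have hpow : x ^ n ≤ ‖z‖ ^ n := pow_le_pow_left₀ hx.le hlt.le n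
  have : x * ‖z‖ * x ^ n ≤ x * ‖z‖ * ‖z‖ ^ n := by gcongr
  rw [pow_succ] at hxn hz
  nlinarith

lemma norm_inv_le_of_sq_eq_add_one (hx : 0 < x) (hxn : x ^ 2 = x + 1) (h : z ^ 2 = z + 1) :
    ‖z⁻¹‖ ≤ x := by
  rw [inv_eq_of_mul_eq_one_right (by linear_combination h : z * (z - 1) = 1), ← norm_neg]
  exact norm_le_of_pow_eq_add_one hx hxn (by linear_combination h)

end Norm

lemma norm_sq_of_pow_three_eq_add_one {z : ℂ} {x : ℝ} (hx : 0 < x) (hx₃ : x ^ 3 = x + 1)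
    (h : z ^ 3 = z + 1) (hzx : z ≠ x) : ‖z‖ ^ 2 = x⁻¹ := by
  have hx₃' : (x : ℂ) ^ 3 = x + 1 := mod_cast hx₃
  have hquad : z ^ 2 + x * z + ((x : ℂ) ^ 2 - 1) = 0 :=
    mul_left_cancel₀ (sub_ne_zero.mpr hzx) (by linear_combination h - hx₃')
  have hre := congrArg Complex.re hquad
  have him := congrArg Complex.im hquad
  simp only [pow_two, Complex.add_re, Complex.mul_re, Complex.sub_re, Complex.one_re,
    Complex.ofReal_re, Complex.ofReal_im, Complex.zero_re] at hre
  simp only [pow_two, Complex.add_im, Complex.mul_im, Complex.sub_im, Complex.one_im,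
    Complex.ofReal_re, Complex.ofReal_im, Complex.zero_im] at him
  have hxgt : 1.2 < x := by
    by_contra! hle
    nlinarith [mul_le_mul hle hle hx.le (by norm_num)]
  have hxinv : x⁻¹ = x ^ 2 - 1 := inv_eq_of_mul_eq_one_right (by linarith)
  rw [hxinv, ← Complex.normSq_eq_norm_sq, Complex.normSq_apply]
  have him' : z.im * (2 * z.re + x) = 0 := by linarith
  rcases mul_eq_zero.mp him' with hz | hz
  · rw [hz] at hre
    nlinarith [sq_nonneg (2 * z.re + x)]
  · rw [eq_neg_of_add_eq_zero_right hz] at hre ⊢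
    linarith

lemma norm_inv_le_of_pow_three_eq_add_one {z : ℂ} {x : ℝ} (hx : 0 < x) (hx₃ : x ^ 3 = x + 1)
    (h : z ^ 3 = z + 1) : ‖z⁻¹‖ ≤ x := by
  have hx₁ : 1 ≤ x := by
    by_contra! hlt
    nlinarith [pow_le_one₀ (n := 3) hx.le hlt.le]
  by_cases hzx : z = x
  · rw [hzx, norm_inv, Complex.norm_of_nonneg hx.le]
    exact (inv_le_one_of_one_le₀ hx₁).trans hx₁
  · refine le_of_sq_le_sq ?_ hx.le
    rw [norm_inv, inv_pow, norm_sq_of_pow_three_eq_add_one hx hx₃ h hzx, inv_inv]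
    exact le_self_pow₀ hx₁ two_ne_zero

section House

variable {F : Type*} [Field F] [NumberField F]

lemma house_le {y : F} {c : ℝ} (h : ∀ σ : F →+* ℂ, ‖σ y‖ ≤ c) : house y ≤ c :=
  (pi_norm_le_iff_of_nonempty _).mpr h

lemma map_pow_eq_add_one {σ : F →+* ℂ} {a : F} {n : ℕ} (h : a ^ n = a + 1) :
    σ a ^ n = σ a + 1 := by
  rw [← map_pow, h, map_add, map_one]

lemma house_le_of_pow_eq_add_one {a : F} {x : ℝ} {n : ℕ} (hx : 0 < x)
    (hxn : x ^ (n + 1) = x + 1) (h : a ^ (n + 1) = a + 1) : house a ≤ x :=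
  house_le fun _ ↦ norm_le_of_pow_eq_add_one hx hxn (map_pow_eq_add_one h)

lemma house_inv_le_of_sq_eq_add_one {a : F} {x : ℝ} (hx : 0 < x) (hx₂ : x ^ 2 = x + 1)
    (h : a ^ 2 = a + 1) : house a⁻¹ ≤ x :=
  house_le fun σ ↦ by
    rw [map_inv₀]
    exact norm_inv_le_of_sq_eq_add_one hx hx₂ (map_pow_eq_add_one h)

lemma house_inv_le_of_pow_three_eq_add_one {a : F} {x : ℝ} (hx : 0 < x) (hx₃ : x ^ 3 = x + 1)
    (h : a ^ 3 = a + 1) : house a⁻¹ ≤ x :=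
  house_le fun σ ↦ by
    rw [map_inv₀]
    exact norm_inv_le_of_pow_three_eq_add_one hx hx₃ (map_pow_eq_add_one h)

end House

end SelmerRoots

section Units

lemma eq_one_of_isIntegral_of_isIntegral_inv {r : ℚ} (hr : 0 < r) (h : IsIntegral ℤ r)
    (h' : IsIntegral ℤ r⁻¹) : r = 1 := by
  obtain ⟨s, hs⟩ := IsIntegrallyClosed.isIntegral_iff.mp h
  obtain ⟨t, ht⟩ := IsIntegrallyClosed.isIntegral_iff.mp h'
  simp only [algebraMap_int_eq, eq_intCast] at hs ht
  have hst : s * t = 1 := by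
    have : (s : ℚ) * t = 1 := by rw [hs, ht, mul_inv_cancel₀ hr.ne']
    exact_mod_cast this
  have hs₀ : 0 < s := by
    rw [← hs] at hr
    exact_mod_cast hr
  rw [← hs, Int.eq_one_of_mul_eq_one_right hs₀.le hst, Int.cast_one]

lemma isIntegral_zpow {K : Type*} [Field K] {x : K} (h : IsIntegral ℤ x) (h' : IsIntegral ℤ x⁻¹)
    (k : ℤ) : IsIntegral ℤ (x ^ k) := by
  obtain ⟨j, rfl | rfl⟩ := k.eq_nat_or_neg
  · simpa using h.pow j
  · simpa using h'.pow j

open IntermediateField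

lemma eq_zero_of_zpow_mem_bot {x : ℝ} (hx : 1 < x) (h : IsIntegral ℤ x) (h' : IsIntegral ℤ x⁻¹)
    {k : ℤ} (hk : x ^ k ∈ (⊥ : IntermediateField ℚ ℝ)) : k = 0 := by
  obtain ⟨r, hr⟩ := mem_bot.mp hk
  have h_isIntegral {s : ℚ} {k : ℤ} (hs : (algebraMap ℚ ℝ s) = x ^ k) : IsIntegral ℤ s := by
    have := isIntegral_zpow h h' k
    rwa [← hs, isIntegral_algebraMap_iff (algebraMap ℚ ℝ).injective] at this
  have hr₀ : 0 < r := by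
    have : 0 < algebraMap ℚ ℝ r := by rw [hr]; positivity
    simpa using this
  have hr₁ := eq_one_of_isIntegral_of_isIntegral_inv hr₀ (h_isIntegral hr)
    (h_isIntegral (k := -k) (by rw [map_inv₀, hr, zpow_neg]))
  rw [hr₁, map_one] at hr
  exact (zpow_eq_one_iff_right₀ (by linarith) hx.ne').mp hr.symm

lemma eq_zero_of_zpow_mul_zpow_eq_one {x y : ℝ} (hx : 1 < x) (hy : 1 < y) (h : IsIntegral ℤ x)
    (h' : IsIntegral ℤ x⁻¹) (hdisj : ℚ⟮x⟯ ⊓ ℚ⟮y⟯ = ⊥) {p q : ℤ} (hpq : x ^ p * y ^ q = 1) :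
    p = 0 ∧ q = 0 := by
  have hmem : x ^ p ∈ ℚ⟮x⟯ ⊓ ℚ⟮y⟯ := by
    refine ⟨zpow_mem (mem_adjoin_simple_self ℚ x) p, ?_⟩
    rw [eq_inv_of_mul_eq_one_left hpq]
    exact inv_mem (zpow_mem (mem_adjoin_simple_self ℚ y) q)
  have hp := eq_zero_of_zpow_mem_bot hx h h' (hdisj ▸ hmem)
  rw [hp, zpow_zero, one_mul] at hpq
  exact ⟨hp, (zpow_eq_one_iff_right₀ (by linarith) hy.ne').mp hpq⟩

end Units

section PlasticRatio

open Real

lemma exists_one_lt_pow_three_eq_add_one : ∃ y : ℝ, 1 < y ∧ y ^ 3 = y + 1 := by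
  have hcont : ContinuousOn (fun y : ℝ ↦ y ^ 3 - y - 1) (Set.Icc 1 2) := by fun_prop
  obtain ⟨y, hy, hroot⟩ := intermediate_value_Icc (by norm_num) hcont
    (show (0 : ℝ) ∈ _ by constructor <;> norm_num)
  refine ⟨y, lt_of_le_of_ne hy.1 ?_, by linarith⟩
  rintro rfl
  norm_num at hroot

/-- The plastic ratio: the real number `ρ` with `ρ ^ 3 = ρ + 1`, the growth rate of the Padovan
sequence. -/
noncomputable def plasticRatio : ℝ := exists_one_lt_pow_three_eq_add_one.choose

local notation "ρ" => plasticRatio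

open scoped goldenRatio

lemma one_lt_plasticRatio : 1 < ρ := exists_one_lt_pow_three_eq_add_one.choose_spec.1

lemma plasticRatio_pow_three : ρ ^ 3 = ρ + 1 := exists_one_lt_pow_three_eq_add_one.choose_spec.2

lemma lt_goldenRatio : 1.6180339887 < φ := by
  by_contra! h
  nlinarith [goldenRatio_sq, goldenRatio_pos]

lemma goldenRatio_lt : φ < 1.6180339888 := by
  by_contra! h
  nlinarith [goldenRatio_sq]

lemma lt_plasticRatio_iff {c : ℝ} (hc : 1 ≤ c) : c < ρ ↔ c ^ 3 < c + 1 := by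
  have hρ := one_lt_plasticRatio
  have key : (ρ - c) * (ρ ^ 2 + ρ * c + c ^ 2 - 1) = c + 1 - c ^ 3 := by
    linear_combination plasticRatio_pow_three
  have hpos : 0 < ρ ^ 2 + ρ * c + c ^ 2 - 1 := by nlinarith
  rw [← sub_pos, ← sub_pos (b := c ^ 3), ← key, mul_pos_iff_of_pos_right hpos]

lemma lt_plasticRatio : 1.3247179572 < ρ := (lt_plasticRatio_iff (by norm_num)).mpr (by norm_num)

lemma plasticRatio_lt : ρ < 1.3247179573 := by
  refine lt_of_le_of_ne (not_lt.mp fun h ↦ ?_) fun h ↦ ?_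
  · norm_num [lt_plasticRatio_iff] at h
  · have := plasticRatio_pow_three
    norm_num [h] at this

end PlasticRatio

section GoldenPlasticFrame

open Real NumberField Module IntermediateField
open scoped goldenRatio

local notation "ρ" => plasticRatio

lemma linearDisjoint_goldenRatio_plasticRatio : ℚ⟮φ⟯.LinearDisjoint ℚ⟮ρ⟯ :=
  LinearDisjoint.of_finrank_coprime <| by
    rw [finrank_adjoin_of_pow_eq_add_one one_lt_two goldenRatio_sq,
      finrank_adjoin_of_pow_eq_add_one (by norm_num) plasticRatio_pow_three]
    norm_num

/-- The number field generated by the golden ratio and the plastic ratio. -/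
noncomputable def goldenPlasticField : IntermediateField ℚ ℝ := ℚ⟮φ⟯ ⊔ ℚ⟮ρ⟯

lemma finrank_goldenPlasticField : finrank ℚ goldenPlasticField = 6 := by
  rw [goldenPlasticField, linearDisjoint_goldenRatio_plasticRatio.finrank_sup,
    finrank_adjoin_of_pow_eq_add_one one_lt_two goldenRatio_sq,
    finrank_adjoin_of_pow_eq_add_one (by norm_num) plasticRatio_pow_three]
  norm_num

namespace goldenPlasticField

instance instNumberField : NumberField goldenPlasticField where
  to_finiteDimensional := finite_of_finrank_pos (by rw [finrank_goldenPlasticField]; norm_num)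

/-- The golden ratio as an algebraic integer of `goldenPlasticField`. -/
noncomputable def golden : 𝓞 goldenPlasticField :=
  ⟨⟨φ, (le_sup_left : ℚ⟮φ⟯ ≤ goldenPlasticField) (mem_adjoin_simple_self ℚ φ)⟩,
    isIntegral_of_pow_eq_add_one one_lt_two (Subtype.ext goldenRatio_sq)⟩

/-- The plastic ratio as an algebraic integer of `goldenPlasticField`. -/
noncomputable def plastic : 𝓞 goldenPlasticField :=
  ⟨⟨ρ, (le_sup_right : ℚ⟮ρ⟯ ≤ goldenPlasticField) (mem_adjoin_simple_self ℚ ρ)⟩,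
    isIntegral_of_pow_eq_add_one (by norm_num : 1 < 3) (Subtype.ext plasticRatio_pow_three)⟩

lemma golden_sq : golden ^ (1 + 1) = golden + 1 :=
  RingOfIntegers.ext (Subtype.ext goldenRatio_sq)

lemma plastic_pow_three : plastic ^ (2 + 1) = plastic + 1 :=
  RingOfIntegers.ext (Subtype.ext plasticRatio_pow_three)

lemma house_golden_le : house (golden : goldenPlasticField) ≤ φ :=
  house_le_of_pow_eq_add_one goldenRatio_pos goldenRatio_sq (Subtype.ext goldenRatio_sq)

lemma house_plastic_le : house (plastic : goldenPlasticField) ≤ ρ :=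
  house_le_of_pow_eq_add_one (one_pos.trans one_lt_plasticRatio) plasticRatio_pow_three
    (Subtype.ext plasticRatio_pow_three)

lemma house_golden_pow_mul_plastic_pow_le (i : Fin 2) (j : Fin 3) :
    house ((golden : goldenPlasticField) ^ (i : ℕ) * (plastic : goldenPlasticField) ^ (j : ℕ)) ≤
      3 := by
  have hφ := goldenRatio_lt
  have hρ := plasticRatio_lt
  have hφ₁ := one_lt_goldenRatio
  have hρ₁ := one_lt_plasticRatio
  calc _ ≤ house (golden : goldenPlasticField) ^ (i : ℕ) *
        house (plastic : goldenPlasticField) ^ (j : ℕ) :=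
        (house_mul_le _ _).trans (mul_le_mul (house_pow_le _ _) (house_pow_le _ _)
          (house_nonneg _) (pow_nonneg (house_nonneg _) _))
    _ ≤ φ ^ (i : ℕ) * ρ ^ (j : ℕ) :=
        mul_le_mul (pow_le_pow_left₀ (house_nonneg _) house_golden_le _)
          (pow_le_pow_left₀ (house_nonneg _) house_plastic_le _)
          (pow_nonneg (house_nonneg _) _) (by positivity)
    _ ≤ φ ^ 1 * ρ ^ 2 := by gcongr <;> first | linarith | omega
    _ ≤ 3 := by nlinarith

/-- The basis `φ ^ i * ρ ^ j`, with `i < 2` and `j < 3`, of `goldenPlasticField`. -/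
noncomputable def basisElem (k : Fin 6) : 𝓞 goldenPlasticField :=
  golden ^ ((finProdFinEquiv (m := 2) (n := 3)).symm k).1.val *
    plastic ^ ((finProdFinEquiv (m := 2) (n := 3)).symm k).2.val

lemma linearIndependent_basisElem (c : Fin 6 → ℤ)
    (hc : ∑ k, (c k : ℝ) * algebraMap goldenPlasticField ℝ (basisElem k) = 0) : c = 0 := by
  have hind := (linearDisjoint_goldenRatio_plasticRatio.linearIndependent_mul
    (linearIndependent_gen_pow one_lt_two goldenRatio_sq)
    (linearIndependent_gen_pow (by norm_num) plasticRatio_pow_three)).comp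
      (finProdFinEquiv (m := 2) (n := 3)).symm (Equiv.injective _)
  have hzero := Fintype.linearIndependent_iff.mp hind (fun k ↦ (c k : ℚ)) <| by
    rw [← hc]
    refine Finset.sum_congr rfl fun k _ ↦ ?_
    rw [Rat.smul_def, Rat.cast_intCast]
    rfl
  exact funext fun k ↦ mod_cast hzero k

end goldenPlasticField

open goldenPlasticField

/-- The frame of the golden and the plastic ratio in the field they generate. -/
noncomputable def goldenPlasticFrame : UnitFrame goldenPlasticField where
  emb := algebraMap goldenPlasticField ℝ
  α := unitOfPowEqAddOne golden golden_sq
  γ := unitOfPowEqAddOne plastic plastic_pow_three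
  ω := basisElem
  finrank_le := finrank_goldenPlasticField.le
  one_lt_emb_α := one_lt_goldenRatio
  one_lt_emb_γ := one_lt_plasticRatio
  house_α_le := house_golden_le
  house_inv_α_le :=
    house_inv_le_of_sq_eq_add_one goldenRatio_pos goldenRatio_sq (Subtype.ext goldenRatio_sq)
  house_γ_le := house_plastic_le
  house_inv_γ_le := house_inv_le_of_pow_three_eq_add_one (one_pos.trans one_lt_plasticRatio)
    plasticRatio_pow_three (Subtype.ext plasticRatio_pow_three)
  house_ω_le _ := house_golden_pow_mul_plastic_pow_le _ _
  linearIndependent_ω := linearIndependent_basisElem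
  zpow_independent _ _ h :=
    have hφ : IsIntegral ℤ φ := isIntegral_of_pow_eq_add_one one_lt_two goldenRatio_sq
    eq_zero_of_zpow_mul_zpow_eq_one one_lt_goldenRatio one_lt_plasticRatio hφ
      (by rw [inv_eq_of_mul_eq_one_right (by linarith [goldenRatio_sq] : φ * (φ - 1) = 1)]
          exact hφ.sub isIntegral_one)
      linearDisjoint_goldenRatio_plasticRatio.inf_eq_bot h

lemma emb_goldenPlasticFrame_α : goldenPlasticFrame.emb goldenPlasticFrame.α = φ := rfl

lemma emb_goldenPlasticFrame_γ : goldenPlasticFrame.emb goldenPlasticFrame.γ = ρ := rfl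

end GoldenPlasticFrame

/-! ### Binet's formulas -/

section LogBounds

open Real
open scoped goldenRatio

local notation "ρ" => plasticRatio

lemma log_lt_div_of_pow_lt {x : ℝ} {p q : ℕ} (hx : 0 < x) (hq : 0 < q)
    (h : x ^ q < 2.7182818283 ^ p) : log x < p / q := by
  rw [lt_div_iff₀' (mod_cast hq), ← log_pow, log_lt_iff_lt_exp (by positivity), ← exp_one_pow]
  exact h.trans_le (pow_le_pow_left₀ (by norm_num) exp_one_gt_d9.le p)

lemma div_lt_log_of_lt_pow {x : ℝ} {p q : ℕ} (hx : 0 < x) (hq : 0 < q)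
    (h : 2.7182818286 ^ p < x ^ q) : p / q < log x := by
  rw [div_lt_iff₀' (mod_cast hq), ← log_pow, lt_log_iff_exp_lt (by positivity), ← exp_one_pow]
  exact (pow_le_pow_left₀ (exp_pos 1).le exp_one_lt_d9.le p).trans_lt h

lemma goldenRatio_pow_le (k : ℕ) : φ ^ k ≤ 1.6180339888 ^ k :=
  pow_le_pow_left₀ goldenRatio_pos.le goldenRatio_lt.le k

lemma le_goldenRatio_pow (k : ℕ) : 1.6180339887 ^ k ≤ φ ^ k :=
  pow_le_pow_left₀ (by norm_num) lt_goldenRatio.le k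

lemma plasticRatio_pos : 0 < ρ := one_pos.trans one_lt_plasticRatio

lemma plasticRatio_pow_le (k : ℕ) : ρ ^ k ≤ 1.3247179573 ^ k :=
  pow_le_pow_left₀ plasticRatio_pos.le plasticRatio_lt.le k

lemma le_plasticRatio_pow (k : ℕ) : 1.3247179572 ^ k ≤ ρ ^ k :=
  pow_le_pow_left₀ (by norm_num) lt_plasticRatio.le k

set_option exponentiation.threshold 500 in
lemma log_goldenRatio_lt : log φ < 0.482 := by
  have := log_lt_div_of_pow_lt (p := 241) (q := 500) goldenRatio_pos (by norm_num)
    ((goldenRatio_pow_le 500).trans_lt (by norm_num))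
  norm_num at this ⊢
  exact this

lemma lt_log_plasticRatio : 0.28 < log ρ := by
  have := div_lt_log_of_lt_pow (p := 7) (q := 25) plasticRatio_pos (by norm_num)
    (lt_of_lt_of_le (by norm_num) (le_plasticRatio_pow 25))
  norm_num at this ⊢
  exact this

set_option exponentiation.threshold 500 in
lemma log_plasticRatio_lt : log ρ < 0.282 := by
  have := log_lt_div_of_pow_lt (p := 141) (q := 500) plasticRatio_pos (by norm_num)
    ((plasticRatio_pow_le 500).trans_lt (by norm_num))
  norm_num at this ⊢
  exact this

set_option exponentiation.threshold 900 in
lemma mul_log_plasticRatio_le : 1.711277 * log ρ ≤ log φ := by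
  have hpow : ρ ^ 895 < φ ^ 523 :=
    (plasticRatio_pow_le 895).trans_lt (lt_of_lt_of_le (by norm_num) (le_goldenRatio_pow 523))
  have hlog := log_lt_log (pow_pos plasticRatio_pos _) hpow
  simp only [log_pow, Nat.cast_ofNat] at hlog
  linarith [log_pos one_lt_plasticRatio]

set_option exponentiation.threshold 500 in
lemma log_goldenRatio_le_mul : log φ ≤ 1.7113 * log ρ := by
  have hpow : φ ^ 239 < ρ ^ 409 :=
    (goldenRatio_pow_le 239).trans_lt (lt_of_lt_of_le (by norm_num) (le_plasticRatio_pow 409))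
  have hlog := log_lt_log (pow_pos goldenRatio_pos _) hpow
  simp only [log_pow, Nat.cast_ofNat] at hlog
  linarith [log_pos one_lt_plasticRatio]

end LogBounds

section Binet

open Real
open scoped goldenRatio

local notation "ρ" => plasticRatio

lemma cast_lucasSeq : ∀ n : ℕ, (lucasSeq n : ℝ) = φ ^ n + ψ ^ n
  | 0 => by norm_num [lucasSeq]
  | 1 => by simp [lucasSeq]
  | n + 2 => by
    rw [lucasSeq, Nat.cast_add, cast_lucasSeq (n + 1), cast_lucasSeq n]
    linear_combination -φ ^ n * goldenRatio_sq - ψ ^ n * goldenConj_sq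

lemma abs_lucasSeq_sub_le (n : ℕ) : |(lucasSeq n : ℝ) - φ ^ n| ≤ 1 := by
  rw [cast_lucasSeq, add_sub_cancel_left, abs_pow]
  exact pow_le_one₀ (abs_nonneg _)
    (abs_le.mpr ⟨neg_one_lt_goldenConj.le, (goldenConj_neg.trans one_pos).le⟩)

lemma plasticRatio_sq_bounds : 1.75487 < ρ ^ 2 ∧ ρ ^ 2 < 1.75488 := by
  have h₁ := le_plasticRatio_pow 2
  have h₂ := plasticRatio_pow_le 2
  constructor <;> linarith

/-- The contribution of the real root `ρ` to the Binet formula for the Padovan numbers. -/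
noncomputable def padovanMain (k : ℕ) : ℝ := ρ ^ (k + 4) / (3 * ρ ^ 2 - 1)

lemma three_mul_plasticRatio_sq_sub_one_pos : 0 < 3 * ρ ^ 2 - 1 := by
  linarith [plasticRatio_sq_bounds.1]

lemma padovanMain_pos (k : ℕ) : 0 < padovanMain k :=
  div_pos (pow_pos plasticRatio_pos _) three_mul_plasticRatio_sq_sub_one_pos

lemma padovanMain_add (k j : ℕ) : padovanMain (k + j) = padovanMain k * ρ ^ j := by
  rw [padovanMain, padovanMain]
  ring

lemma le_padovanMain (k : ℕ) : 0.7 ≤ padovanMain k := by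
  rw [padovanMain, le_div_iff₀ three_mul_plasticRatio_sq_sub_one_pos]
  have h₄ : ρ ^ 4 ≤ ρ ^ (k + 4) := pow_le_pow_right₀ one_lt_plasticRatio.le (by omega)
  linarith [plasticRatio_sq_bounds.2, le_plasticRatio_pow 4]

/-- The contribution of the two non-real roots of `X ^ 3 - X - 1` to the Binet formula for the
Padovan numbers. -/
noncomputable def padovanError (k : ℕ) : ℝ := padovan k - padovanMain k

lemma padovanError_add_three (k : ℕ) :
    padovanError (k + 3) = padovanError (k + 1) + padovanError k := by
  simp only [padovanError, padovan, padovanMain_add, Nat.cast_add]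
  linear_combination -padovanMain k * plasticRatio_pow_three

lemma padovanMain_zero_mul : padovanMain 0 * (3 * ρ ^ 2 - 1) = ρ ^ 2 + ρ := by
  rw [padovanMain, div_mul_cancel₀ _ three_mul_plasticRatio_sq_sub_one_pos.ne']
  linear_combination ρ * plasticRatio_pow_three

/- `X ^ 3 - X - 1 = (X - ρ) * (X ^ 2 + ρ X + 1 / ρ)`, and only the roots of the second factor
contribute to the error. -/
lemma padovanError_add_two (k : ℕ) :
    ρ * padovanError (k + 2) + ρ ^ 2 * padovanError (k + 1) + padovanError k = 0 := by
  induction k with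
  | zero =>
    have := padovanMain_zero_mul
    simp only [padovanError, padovanMain_add, padovan, Nat.cast_one]
    linear_combination -ρ * this + (padovanMain 0 - 1) * plasticRatio_pow_three
  | succ k ih =>
    linear_combination ρ * padovanError_add_three k + ρ * ih -
      padovanError (k + 1) * plasticRatio_pow_three

lemma padovanError_zero_mem : padovanError 0 ∈ Set.Icc 0.2 0.3 := by
  have := padovanMain_zero_mul
  have := plasticRatio_sq_bounds
  have := lt_plasticRatio
  have := plasticRatio_lt
  have := padovanMain_pos 0
  simp only [padovanError, padovan, Nat.cast_one]
  constructor <;> nlinarith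

lemma padovanError_one_mem : padovanError 1 ∈ Set.Icc 0.03 0.05 := by
  have hmul : padovanMain 1 * (3 * ρ ^ 2 - 1) = ρ ^ 2 + ρ + 1 := by
    rw [show padovanMain 1 = padovanMain 0 * ρ ^ 1 from padovanMain_add 0 1]
    linear_combination ρ * padovanMain_zero_mul + plasticRatio_pow_three
  have := plasticRatio_sq_bounds
  have := lt_plasticRatio
  have := plasticRatio_lt
  have := padovanMain_pos 1
  simp only [padovanError, padovan, Nat.cast_one]
  constructor <;> nlinarith

/-- The quadratic form in consecutive errors that the recurrence scales by `1 / ρ`. -/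
noncomputable def padovanEnergy (k : ℕ) : ℝ :=
  ρ * padovanError (k + 1) ^ 2 + ρ ^ 2 * padovanError k * padovanError (k + 1) +
    padovanError k ^ 2

lemma plasticRatio_mul_padovanEnergy_succ (k : ℕ) :
    ρ * padovanEnergy (k + 1) = padovanEnergy k := by
  simp only [padovanEnergy]
  linear_combination (ρ * padovanError (k + 2) - padovanError k) * padovanError_add_two k

lemma mul_padovanError_sq_le (k : ℕ) : 0.4 * padovanError k ^ 2 ≤ padovanEnergy k := by
  have hρ := plasticRatio_pos
  have hdisc : 0.4 * ρ ≤ ρ - ρ ^ 4 / 4 := by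
    linarith [plasticRatio_pow_le 4, lt_plasticRatio]
  have hsquare : ρ * padovanEnergy k = (ρ * padovanError (k + 1) + ρ ^ 2 / 2 * padovanError k) ^ 2 +
      (ρ - ρ ^ 4 / 4) * padovanError k ^ 2 := by
    rw [padovanEnergy]
    ring
  refine le_of_mul_le_mul_left ?_ hρ
  rw [hsquare]
  nlinarith [sq_nonneg (ρ * padovanError (k + 1) + ρ ^ 2 / 2 * padovanError k),
    sq_nonneg (padovanError k)]

lemma padovanEnergy_le (k : ℕ) : padovanEnergy k ≤ 0.25 := by
  induction k with
  | zero =>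
    obtain ⟨h₀, h₀'⟩ := padovanError_zero_mem
    obtain ⟨h₁, h₁'⟩ := padovanError_one_mem
    have := plasticRatio_pos
    calc padovanEnergy 0 ≤ 1.4 * 0.05 ^ 2 + 1.8 * 0.3 * 0.05 + 0.3 ^ 2 := by
          rw [padovanEnergy]
          gcongr <;> linarith [plasticRatio_lt, plasticRatio_sq_bounds.2]
      _ ≤ 0.25 := by norm_num
  | succ k ih =>
    have hnonneg : 0 ≤ padovanEnergy (k + 1) :=
      le_trans (by positivity) (mul_padovanError_sq_le (k + 1))
    have := le_mul_of_one_le_left hnonneg one_lt_plasticRatio.le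
    rw [plasticRatio_mul_padovanEnergy_succ] at this
    exact this.trans ih

lemma abs_padovanError_le (k : ℕ) : |padovanError k| ≤ 1 := by
  rw [← sq_le_one_iff_abs_le_one]
  linarith [mul_padovanError_sq_le k, padovanEnergy_le k]

end Binet

/-! ### Heights and the descent -/

section Heights

open Real NumberField

namespace UnitFrame

variable {F : Type*} [Field F] [NumberField F] {D : UnitFrame F} {e : 𝓞 F} {H H' : ℝ}

/-- `D.HeightLE e H` bounds by `H` the size of a positive algebraic integer `e`, in the form the
lower bound for linear forms in logarithms requires: `H` bounds the logarithm of its house, and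
`H / 200` the logarithm of its value at the distinguished embedding. -/
structure HeightLE (D : UnitFrame F) (e : 𝓞 F) (H : ℝ) : Prop where
  emb_pos : 0 < D.emb e
  house_le : house (e : F) ≤ exp H
  abs_log_le : |log (D.emb e)| ≤ H / 200

lemma HeightLE.mono (h : D.HeightLE e H) (hH : H ≤ H') : D.HeightLE e H' where
  emb_pos := h.emb_pos
  house_le := h.house_le.trans (exp_le_exp.mpr hH)
  abs_log_le := h.abs_log_le.trans (by linarith)

lemma heightLE_one : D.HeightLE 1 0 where
  emb_pos := by simp
  house_le := by simpa using (house_intCast (K := F) 1).le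
  abs_log_le := by simp

end UnitFrame

variable {F : Type*} [Field F]

/-- The factor `1 - ε ^ (-k)` in `ε ^ n - ε ^ (n - k) = ε ^ n * (1 - ε ^ (-k))`. -/
def oneSubInvPow (ε : (𝓞 F)ˣ) (k : ℕ) : 𝓞 F := 1 - ((ε⁻¹ : (𝓞 F)ˣ) : 𝓞 F) ^ k

lemma coe_oneSubInvPow (ε : (𝓞 F)ˣ) (k : ℕ) :
    (oneSubInvPow ε k : F) = 1 - ((ε : F)⁻¹) ^ k := by
  simp [oneSubInvPow]

lemma map_oneSubInvPow (f : F →+* ℝ) (ε : (𝓞 F)ˣ) (k : ℕ) :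
    f (oneSubInvPow ε k) = 1 - (f ε ^ k)⁻¹ := by
  rw [coe_oneSubInvPow, map_sub, map_one, map_pow, map_inv₀, inv_pow]

variable [NumberField F]

lemma house_oneSubInvPow_le {ε : (𝓞 F)ˣ} {z : ℝ} (hz : 1 ≤ z) (h : house (ε : F)⁻¹ ≤ z) (k : ℕ) :
    house (oneSubInvPow ε k : F) ≤ exp (k * log z + 1) := by
  rw [coe_oneSubInvPow, exp_add, exp_nat_mul, exp_log (by linarith)]
  refine house_le fun σ ↦ ?_
  have hσ : ‖σ (ε : F)⁻¹‖ ^ k ≤ z ^ k :=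
    pow_le_pow_left₀ (norm_nonneg _) ((norm_embedding_le_house _ σ).trans h) k
  calc ‖σ (1 - (ε : F)⁻¹ ^ k)‖ ≤ 1 + ‖σ (ε : F)⁻¹‖ ^ k := by
        rw [map_sub, map_one, map_pow]
        exact (norm_sub_le _ _).trans_eq (by rw [norm_one, norm_pow])
    _ ≤ z ^ k * 2 := by linarith [one_le_pow₀ hz (n := k)]
    _ ≤ z ^ k * exp 1 := by gcongr; linarith [exp_one_gt_d9]

lemma inv_pow_mem {z : ℝ} (hz : 1.32 < z) {k : ℕ} (hk : k ≠ 0) : (z ^ k)⁻¹ ∈ Set.Ioc 0 0.76 := by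
  refine ⟨by positivity, ?_⟩
  calc (z ^ k)⁻¹ ≤ 1.32⁻¹ := by
        gcongr
        exact hz.le.trans (le_self_pow₀ (by linarith) hk)
    _ ≤ 0.76 := by norm_num

lemma seven_le_exp_two : 7 ≤ exp 2 := by
  rw [← Nat.cast_ofNat (n := 2), ← exp_one_pow]
  nlinarith [exp_one_gt_d9]

lemma abs_log_one_sub_le {x : ℝ} (hx : x ∈ Set.Ioc 0 0.76) : |log (1 - x)| ≤ 2 := by
  obtain ⟨hx₀, hx₁⟩ := hx
  rw [abs_of_nonpos (log_nonpos (by linarith) (by linarith)), ← log_inv,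
    log_le_iff_le_exp (inv_pos.mpr (by linarith))]
  refine le_trans ?_ seven_le_exp_two
  rw [inv_le_comm₀ (by linarith) (by norm_num)]
  linarith

lemma UnitFrame.heightLE_oneSubInvPow {D : UnitFrame F} {ε : (𝓞 F)ˣ} (hε : 1.32 < D.emb ε)
    (h : house (ε : F)⁻¹ ≤ D.emb ε) {k : ℕ} (hk : k ≠ 0) {H : ℝ} (hH : 400 ≤ H)
    (hkH : k * log (D.emb ε) + 1 ≤ H) : D.HeightLE (oneSubInvPow ε k) H where
  emb_pos := by
    rw [map_oneSubInvPow]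
    linarith [(inv_pow_mem hε hk).2]
  house_le := (house_oneSubInvPow_le (by linarith) h k).trans (exp_le_exp.mpr hkH)
  abs_log_le := by
    rw [map_oneSubInvPow]
    linarith [abs_log_one_sub_le (inv_pow_mem hε hk)]

end Heights

section Gap

open Real NumberField goldenPlasticField
open scoped goldenRatio

local notation "ρ" => plasticRatio

lemma abs_log_div_le {U V M : ℝ} (hM : 0 < M) (hU : M ≤ U) (hV : M ≤ V) :
    |log (U / V)| ≤ |U - V| / M := by
  have key {U V : ℝ} (hU : M ≤ U) (hV : M ≤ V) : log (U / V) ≤ |U - V| / M :=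
    have hV₀ := hM.trans_le hV
    calc log (U / V) ≤ U / V - 1 := log_le_sub_one_of_pos (div_pos (hM.trans_le hU) hV₀)
      _ = (U - V) / V := by rw [sub_div, div_self hV₀.ne']
      _ ≤ |U - V| / M := by gcongr; exact le_abs_self _
  refine abs_le'.mpr ⟨key hU hV, ?_⟩
  rw [← log_inv, inv_div, abs_sub_comm]
  exact key hV hU

/-- The derivative of `X ^ 3 - X - 1` at the plastic ratio, the denominator of the coefficients in
the Binet formula for the Padovan numbers. -/
noncomputable def plasticDeriv : 𝓞 goldenPlasticField := 3 * plastic ^ 2 - 1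

lemma house_plasticDeriv_le : house (plasticDeriv : goldenPlasticField) ≤ exp 2 := by
  refine le_trans (house_le fun σ ↦ ?_) seven_le_exp_two
  have hσ : ‖σ (plastic : goldenPlasticField)‖ ^ 2 ≤ ρ ^ 2 :=
    pow_le_pow_left₀ (norm_nonneg _) ((norm_embedding_le_house _ σ).trans house_plastic_le) 2
  calc ‖σ (3 * (plastic : goldenPlasticField) ^ 2 - 1)‖ ≤
        3 * ‖σ (plastic : goldenPlasticField)‖ ^ 2 + 1 := by
        rw [map_sub, map_mul, map_pow, map_one, map_ofNat]
        exact (norm_sub_le _ _).trans_eq (by simp)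
    _ ≤ 7 := by linarith [plasticRatio_sq_bounds.2]

lemma house_golden_pow_three_le : house ((golden : goldenPlasticField) ^ 3) ≤ exp 2 :=
  calc house ((golden : goldenPlasticField) ^ 3) ≤ φ ^ 3 :=
        (house_pow_le _ 3).trans (pow_le_pow_left₀ (house_nonneg _) house_golden_le 3)
    _ ≤ 7 := (goldenRatio_pow_le 3).trans (by norm_num)
    _ ≤ exp 2 := seven_le_exp_two

lemma abs_log_goldenRatio_pow_three_div_le : |log (φ ^ 3 / (3 * ρ ^ 2 - 1))| ≤ 0.02 := by
  have hφ := le_goldenRatio_pow 3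
  have hφ' := goldenRatio_pow_le 3
  obtain ⟨hρ, hρ'⟩ := plasticRatio_sq_bounds
  refine (abs_log_div_le (M := 4) (by norm_num) (by linarith) (by linarith)).trans ?_
  rw [div_le_iff₀ (by norm_num), abs_le]
  constructor <;> linarith

lemma house_mul_le_exp_add {F : Type*} [Field F] [NumberField F] {a b : F} {s t : ℝ}
    (ha : house a ≤ exp s) (hb : house b ≤ exp t) : house (a * b) ≤ exp (s + t) := by
  rw [exp_add]
  exact (house_mul_le a b).trans (mul_le_mul ha hb (house_nonneg b) (exp_pos s).le)

lemma logForm_goldenRatio_plasticRatio_eq {x₁ x₂ : ℝ} (hx₁ : 0 < x₁) (hx₂ : 0 < x₂) (n m : ℕ) :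
    logForm φ ρ (φ ^ 3 * x₂ / ((3 * ρ ^ 2 - 1) * x₁)) (n + 3) (m + 4) =
      log (φ ^ n * x₁ / (padovanMain m * x₂)) := by
  have hφ := goldenRatio_pos
  have hρ := plasticRatio_pos
  have hd := three_mul_plasticRatio_sq_sub_one_pos
  have hconst : log (φ ^ 3 * x₂ / ((3 * ρ ^ 2 - 1) * x₁)) =
      3 * log φ + log x₂ - (log (3 * ρ ^ 2 - 1) + log x₁) := by
    rw [log_div (mul_pos (pow_pos hφ 3) hx₂).ne' (mul_pos hd hx₁).ne',
      log_mul (pow_pos hφ 3).ne' hx₂.ne', log_mul hd.ne' hx₁.ne', log_pow, Nat.cast_ofNat]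
  have hratio : log (φ ^ n * x₁ / (padovanMain m * x₂)) =
      n * log φ + log x₁ - ((m + 4) * log ρ - log (3 * ρ ^ 2 - 1) + log x₂) := by
    rw [log_div (mul_pos (pow_pos hφ n) hx₁).ne' (mul_pos (padovanMain_pos m) hx₂).ne',
      log_mul (pow_pos hφ n).ne' hx₁.ne', log_mul (padovanMain_pos m).ne' hx₂.ne', padovanMain,
      log_div (pow_pos hρ _).ne' hd.ne', log_pow, log_pow, Nat.cast_add, Nat.cast_ofNat]
  rw [logForm, hconst, hratio]
  push_cast
  ring

/- Shifting the exponents to `n + 3` and `m + 4` brings the constant term of the linear form near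
`0`, since `φ ^ 3 ≈ 3 * ρ ^ 2 - 1`. -/
lemma exp_neg_le_abs_log_div {e₁ e₂ : 𝓞 goldenPlasticField} {n m L H : ℕ}
    (he₁ : goldenPlasticFrame.HeightLE e₁ H) (he₂ : goldenPlasticFrame.HeightLE e₂ H)
    (hL : 1050 ≤ L) (hLn : 10.5 * log (n + 3) ≤ L)
    (hbig : 13500000000 * (L ^ 2 * (H + 2)) ≤ n) :
    exp (-(1150000 * ((L : ℝ) ^ 3 * (H + 2)))) ≤ |log (φ ^ n * goldenPlasticFrame.emb e₁ /
      (padovanMain m * goldenPlasticFrame.emb e₂))| := by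
  have hd := three_mul_plasticRatio_sq_sub_one_pos
  have hemb₁ : goldenPlasticFrame.emb (golden ^ 3 * e₂ : 𝓞 goldenPlasticField) =
    φ ^ 3 * goldenPlasticFrame.emb e₂ := rfl
  have hemb₂ : goldenPlasticFrame.emb (plasticDeriv * e₁ : 𝓞 goldenPlasticField) =
    (3 * ρ ^ 2 - 1) * goldenPlasticFrame.emb e₁ := rfl
  have hη : |log (φ ^ 3 * goldenPlasticFrame.emb e₂ /
      ((3 * ρ ^ 2 - 1) * goldenPlasticFrame.emb e₁))| ≤ ((H + 2 : ℕ) : ℝ) / 100 := by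
    have h₀ := abs_log_goldenRatio_pow_three_div_le
    have h₁ := he₁.abs_log_le
    have h₂ := he₂.abs_log_le
    have hφ := pow_pos goldenRatio_pos 3
    rw [mul_div_mul_comm, log_mul (div_pos hφ hd).ne' (div_pos he₂.emb_pos he₁.emb_pos).ne',
      log_div he₂.emb_pos.ne' he₁.emb_pos.ne']
    push_cast
    rw [abs_le] at h₀ h₁ h₂ ⊢
    constructor <;> linarith
  have hform := goldenPlasticFrame.exp_neg_le_abs_logForm (e₁ := golden ^ 3 * e₂)
    (e₂ := plasticDeriv * e₁) (n := n + 3) (m := m + 4) (h := H + 2) log_goldenRatio_lt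
    lt_log_plasticRatio log_plasticRatio_lt mul_log_plasticRatio_le log_goldenRatio_le_mul
    (hemb₁ ▸ mul_pos (pow_pos goldenRatio_pos 3) he₂.emb_pos) (hemb₂ ▸ mul_pos hd he₁.emb_pos)
    (by omega)
    (by simpa [add_comm] using house_mul_le_exp_add house_golden_pow_three_le he₂.house_le)
    (by simpa [add_comm] using house_mul_le_exp_add house_plasticDeriv_le he₁.house_le)
    (by rw [hemb₁, hemb₂]; exact hη) hL (by positivity) (by exact_mod_cast hLn)
    (by exact_mod_cast hbig.trans (Nat.le_add_right n 3))
  rw [hemb₁, hemb₂, emb_goldenPlasticFrame_α, emb_goldenPlasticFrame_γ,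
    logForm_goldenRatio_plasticRatio_eq he₁.emb_pos he₂.emb_pos] at hform
  exact_mod_cast hform

end Gap

section Descent

open Real NumberField goldenPlasticField
open scoped goldenRatio

local notation "ρ" => plasticRatio

/-- Two real numbers `A` and `G` whose corrections by the relative amounts `X` and `Y` differ by
a bounded amount. This is what the Diophantine equation becomes, with `A` and `G` the main terms
of `L_n` and `𝒫_m`, and `A * X` and `G * Y` those of `L_{n₁}` and `𝒫_{m₁}`. -/
structure ApproxRelation (A G X Y : ℝ) : Prop where
  le_left : 1000 ≤ A
  left_mem : X ∈ Set.Ioc 0 0.76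
  right_mem : Y ∈ Set.Ioc 0 0.76
  one_le_mul : 1 ≤ A * X
  le_mul : 0.7 ≤ G * Y
  abs_sub_le : |A * (1 - X) - G * (1 - Y)| ≤ 4

namespace ApproxRelation

variable {A G X Y : ℝ}

lemma le_right_mul (h : ApproxRelation A G X Y) : 0.2 * A ≤ G * (1 - Y) := by
  have := h.le_left
  have hX : A * 0.24 ≤ A * (1 - X) := by
    gcongr
    linarith [h.left_mem.2]
  linarith [(abs_le.mp h.abs_sub_le).2]

lemma le_right (h : ApproxRelation A G X Y) : 0.2 * A ≤ G := by
  linarith [h.le_right_mul, h.le_mul]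

lemma le_left_mul (h : ApproxRelation A G X Y) : 0.2 * G ≤ A * (1 - X) := by
  have := h.le_left
  have hG : 200 ≤ G := by linarith [h.le_right]
  have hY : G * 0.24 ≤ G * (1 - Y) := by
    gcongr
    linarith [h.right_mem.2]
  linarith [(abs_le.mp h.abs_sub_le).1]

lemma abs_log_div_le_max (h : ApproxRelation A G X Y) : |log (A / G)| ≤ 73 * max X Y := by
  have hA := h.le_left
  have hG : G ≤ 5 * A := by linarith [h.le_left_mul, h.one_le_mul]
  have hX : A * X ≤ A * max X Y := by
    gcongr
    exact le_max_left X Y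
  have hY : G * Y ≤ 5 * A * max X Y := by
    gcongr
    · exact h.right_mem.1.le
    · exact le_max_right X Y
  refine (abs_log_div_le (M := 0.2 * A) (by linarith) (by linarith) h.le_right).trans ?_
  have hdiff := abs_le.mp h.abs_sub_le
  have := h.one_le_mul
  have := h.le_mul
  rw [div_le_iff₀ (by linarith), abs_le]
  constructor <;> linarith

lemma abs_log_mul_div_le (h : ApproxRelation A G X Y) : |log (A * (1 - X) / G)| ≤ 73 * Y := by
  have hG : 0 < 0.2 * G := by linarith [h.le_left, h.le_right]
  refine (abs_log_div_le hG h.le_left_mul (by linarith)).trans ?_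
  have hdiff := abs_le.mp h.abs_sub_le
  have := h.le_mul
  rw [div_le_iff₀ hG, abs_le]
  constructor <;> linarith

lemma abs_log_div_mul_le (h : ApproxRelation A G X Y) : |log (A / (G * (1 - Y)))| ≤ 73 * X := by
  have hA : 0 < 0.2 * A := by linarith [h.le_left]
  refine (abs_log_div_le hA (by linarith) h.le_right_mul).trans ?_
  have hdiff := abs_le.mp h.abs_sub_le
  have := h.one_le_mul
  rw [div_le_iff₀ hA, abs_le]
  constructor <;> linarith

lemma abs_log_mul_div_mul_le (h : ApproxRelation A G X Y) :
    |log (A * (1 - X) / (G * (1 - Y)))| ≤ 73 * A⁻¹ := by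
  have hA : 0 < A := by linarith [h.le_left]
  have hAX : 0.2 * A ≤ A * (1 - X) := by
    rw [mul_comm]
    gcongr
    linarith [h.left_mem.2]
  refine (abs_log_div_le (by positivity) hAX h.le_right_mul).trans ?_
  rw [div_le_iff₀ (by positivity), mul_mul_mul_comm, mul_comm (73 : ℝ), mul_assoc,
    mul_left_comm, inv_mul_cancel₀ hA.ne']
  linarith [h.abs_sub_le]

end ApproxRelation

lemma mul_log_add_one_le_of_exp_neg_le {V z : ℝ} (hz : 0 < z) {k : ℕ}
    (h : exp (-V) ≤ 73 * (z ^ k)⁻¹) : k * log z + 1 ≤ V + 6 := by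
  have h73 : 73 ≤ exp 5 := by
    rw [← Nat.cast_ofNat (n := 5), ← exp_one_pow]
    calc (73 : ℝ) ≤ 2.7 ^ 5 := by norm_num
      _ ≤ exp 1 ^ 5 := by gcongr; linarith [exp_one_gt_d9]
  have hexp : exp (-V) ≤ exp (5 - k * log z) := by
    rw [exp_sub, exp_nat_mul, exp_log hz, div_eq_mul_inv]
    exact h.trans (by gcongr)
  linarith [exp_le_exp.mp hexp]

/-- The bound on the logarithms of the next pair of coefficients that the lower bound for linear
forms in logarithms yields when the logarithms of the current pair are bounded by `H`. -/
def nextHeight (L H : ℕ) : ℕ := 1150000 * (L ^ 3 * (H + 2)) + 6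

lemma le_nextHeight {L : ℕ} (hL : L ≠ 0) (H : ℕ) : H ≤ nextHeight L H := by
  have : 1 * H ≤ L ^ 3 * (H + 2) := Nat.mul_le_mul (Nat.one_le_pow 3 L (by omega)) (by omega)
  rw [nextHeight]
  omega

lemma le_nextHeight_zero {L : ℕ} (hL : L ≠ 0) : 400 ≤ nextHeight L 0 := by
  have := Nat.one_le_pow 3 L (by omega)
  rw [nextHeight]
  omega

variable {n m L H k : ℕ} {z : ℝ} {e₁ e₂ : 𝓞 goldenPlasticField}

lemma mul_log_add_one_le_nextHeight (hz : 0 < z)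
    (he₁ : goldenPlasticFrame.HeightLE e₁ H) (he₂ : goldenPlasticFrame.HeightLE e₂ H)
    (hL : 1050 ≤ L) (hLn : 10.5 * log (n + 3) ≤ L) (hbig : 13500000000 * (L ^ 2 * (H + 2)) ≤ n)
    (hlog : |log (φ ^ n * goldenPlasticFrame.emb e₁ /
      (padovanMain m * goldenPlasticFrame.emb e₂))| ≤ 73 * (z ^ k)⁻¹) :
    k * log z + 1 ≤ nextHeight L H := by
  rw [nextHeight]
  push_cast
  exact mul_log_add_one_le_of_exp_neg_le hz
    ((exp_neg_le_abs_log_div he₁ he₂ hL hLn hbig).trans hlog)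

lemma heightLE_golden (hk : k ≠ 0) (hH : 400 ≤ H) (hkH : k * log φ + 1 ≤ H) :
    goldenPlasticFrame.HeightLE (oneSubInvPow goldenPlasticFrame.α k) H := by
  have hφ := lt_goldenRatio
  refine UnitFrame.heightLE_oneSubInvPow ?_ goldenPlasticFrame.house_inv_α_le hk (mod_cast hH) ?_
  · rw [emb_goldenPlasticFrame_α]
    linarith
  · rwa [emb_goldenPlasticFrame_α]

lemma heightLE_plastic (hk : k ≠ 0) (hH : 400 ≤ H) (hkH : k * log ρ + 1 ≤ H) :
    goldenPlasticFrame.HeightLE (oneSubInvPow goldenPlasticFrame.γ k) H := by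
  have hρ := lt_plasticRatio
  refine UnitFrame.heightLE_oneSubInvPow ?_ goldenPlasticFrame.house_inv_γ_le hk (mod_cast hH) ?_
  · rw [emb_goldenPlasticFrame_γ]
    linarith
  · rwa [emb_goldenPlasticFrame_γ]

variable {a b : ℕ} (hrel : ApproxRelation (φ ^ n) (padovanMain m) (φ ^ a)⁻¹ (ρ ^ b)⁻¹)

include hrel

lemma mul_log_le_or_mul_log_le (hL : 1050 ≤ L) (hLn : 10.5 * log (n + 3) ≤ L)
    (hbig : 13500000000 * (L ^ 2 * 2) ≤ n) :
    a * log φ + 1 ≤ nextHeight L 0 ∨ b * log ρ + 1 ≤ nextHeight L 0 := by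
  have hone : goldenPlasticFrame.HeightLE 1 (0 : ℕ) := by simpa using UnitFrame.heightLE_one
  have hlog := hrel.abs_log_div_le_max
  rcases max_choice (φ ^ a)⁻¹ (ρ ^ b)⁻¹ with hmax | hmax <;> rw [hmax] at hlog
  · exact .inl <| mul_log_add_one_le_nextHeight (m := m) goldenRatio_pos hone hone hL hLn hbig
      (by simpa using hlog)
  · exact .inr <| mul_log_add_one_le_nextHeight (m := m) plasticRatio_pos hone hone hL hLn hbig
      (by simpa using hlog)

lemma mul_log_le_and_mul_log_le (ha : a ≠ 0) (hb : b ≠ 0) (hL : 1050 ≤ L)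
    (hLn : 10.5 * log (n + 3) ≤ L) (hbig : 13500000000 * (L ^ 2 * (nextHeight L 0 + 2)) ≤ n) :
    a * log φ + 1 ≤ nextHeight L (nextHeight L 0) ∧
      b * log ρ + 1 ≤ nextHeight L (nextHeight L 0) := by
  have hH : (nextHeight L 0 : ℝ) ≤ nextHeight L (nextHeight L 0) :=
    mod_cast le_nextHeight (by omega) _
  have h400 : 400 ≤ nextHeight L 0 := le_nextHeight_zero (by omega)
  have hone : goldenPlasticFrame.HeightLE 1 (nextHeight L 0) :=
    UnitFrame.heightLE_one.mono (Nat.cast_nonneg _)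
  have hbig₀ : 13500000000 * (L ^ 2 * 2) ≤ n := le_trans (by gcongr; omega) hbig
  rcases mul_log_le_or_mul_log_le hrel hL hLn hbig₀ with h | h
  · refine ⟨h.trans hH, mul_log_add_one_le_nextHeight (m := m) plasticRatio_pos
      (heightLE_golden ha h400 h) hone hL hLn hbig ?_⟩
    simpa [map_oneSubInvPow, emb_goldenPlasticFrame_α] using hrel.abs_log_mul_div_le
  · refine ⟨mul_log_add_one_le_nextHeight (m := m) goldenRatio_pos hone
      (heightLE_plastic hb h400 h) hL hLn hbig ?_, h.trans hH⟩
    simpa [map_oneSubInvPow, emb_goldenPlasticFrame_γ] using hrel.abs_log_div_mul_le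

lemma mul_log_goldenRatio_add_one_le (ha : a ≠ 0) (hb : b ≠ 0) (hL : 1050 ≤ L)
    (hLn : 10.5 * log (n + 3) ≤ L)
    (hbig : 13500000000 * (L ^ 2 * (nextHeight L (nextHeight L 0) + 2)) ≤ n) :
    n * log φ + 1 ≤ nextHeight L (nextHeight L (nextHeight L 0)) := by
  have hH := le_nextHeight (L := L) (by omega) (nextHeight L 0)
  have h400 := (le_nextHeight_zero (L := L) (by omega)).trans hH
  have hbig₁ : 13500000000 * (L ^ 2 * (nextHeight L 0 + 2)) ≤ n := le_trans (by gcongr) hbig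
  obtain ⟨h₁, h₂⟩ := mul_log_le_and_mul_log_le hrel ha hb hL hLn hbig₁
  refine mul_log_add_one_le_nextHeight (m := m) goldenRatio_pos (heightLE_golden ha h400 h₁)
    (heightLE_plastic hb h400 h₂) hL hLn hbig ?_
  simpa [map_oneSubInvPow, emb_goldenPlasticFrame_α, emb_goldenPlasticFrame_γ] using
    hrel.abs_log_mul_div_mul_le

end Descent

/-! ### The upper bound -/

section UpperBound

open Real
open scoped goldenRatio

local notation "ρ" => plasticRatio

lemma approxRelation_of_sub_eq {n₁ m₁ a b : ℕ} (ha : a ≠ 0) (hb : b ≠ 0)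
    (hA : 1000 ≤ φ ^ (n₁ + a))
    (heq : (lucasSeq (n₁ + a) : ℝ) - lucasSeq n₁ = padovan (m₁ + b) - padovan m₁) :
    ApproxRelation (φ ^ (n₁ + a)) (padovanMain (m₁ + b)) (φ ^ a)⁻¹ (ρ ^ b)⁻¹ := by
  have hX : φ ^ (n₁ + a) * (φ ^ a)⁻¹ = φ ^ n₁ := by
    rw [pow_add, mul_inv_cancel_right₀ (pow_pos goldenRatio_pos a).ne']
  have hY : padovanMain (m₁ + b) * (ρ ^ b)⁻¹ = padovanMain m₁ := by
    rw [padovanMain_add, mul_inv_cancel_right₀ (pow_pos plasticRatio_pos b).ne']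
  refine ⟨hA, inv_pow_mem (by linarith [lt_goldenRatio]) ha,
    inv_pow_mem (by linarith [lt_plasticRatio]) hb, hX ▸ one_le_pow₀ one_lt_goldenRatio.le,
    hY ▸ le_padovanMain m₁, ?_⟩
  rw [mul_one_sub, mul_one_sub, hX, hY, abs_le]
  have h₁ := abs_le.mp (abs_lucasSeq_sub_le (n₁ + a))
  have h₂ := abs_le.mp (abs_lucasSeq_sub_le n₁)
  have h₃ := abs_le.mp (abs_padovanError_le (m₁ + b))
  have h₄ := abs_le.mp (abs_padovanError_le m₁)
  rw [padovanError] at h₃ h₄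
  constructor <;> linarith

lemma log_1160_lt : log 1160 < 120 / 17 := by
  exact_mod_cast log_lt_div_of_pow_lt (x := 1160) (p := 120) (q := 17) (by norm_num) (by norm_num)
    (by norm_num)

lemma log_lt_63_div_2 : log (4.6 * 10 ^ 13) < 63 / 2 := by
  simpa using log_lt_div_of_pow_lt (x := 4.6 * 10 ^ 13) (p := 63) (q := 2) (by norm_num)
    (by norm_num) (by norm_num)

set_option exponentiation.threshold 2000 in
lemma lt_log_2_4_mul_pow : 1200 / 11 < log (2.4 * 10 ^ 47) := by
  simpa using div_lt_log_of_lt_pow (x := 2.4 * 10 ^ 47) (p := 1200) (q := 11) (by norm_num)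
    (by norm_num) (by norm_num)

lemma mul_pow_eleven_le {x L : ℝ} (hx : 2.4 * 10 ^ 47 ≤ x) (hL : 0 < L)
    (hLx : L ≤ 10.5 * log (x + 3) + 1) : 4.6 * 10 ^ 13 * L ^ 11 ≤ x := by
  have hx₀ : 0 < x := by linarith
  have hlog : 1200 / 11 < log x := lt_log_2_4_mul_pow.trans_le (log_le_log (by norm_num) hx)
  have hlog_add : log (x + 3) ≤ log x + 0.001 := by
    have h := log_le_sub_one_of_pos (x := (x + 3) / x) (by positivity)
    rw [log_div (by positivity) hx₀.ne', add_div, div_self hx₀.ne'] at h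
    have : 3 / x ≤ 0.001 := by
      rw [div_le_iff₀ hx₀]
      linarith
    linarith
  have hlogL : log L ≤ log 1160 + L / 1160 - 1 := by
    have h := log_le_sub_one_of_pos (x := L / 1160) (by positivity)
    rw [log_div hL.ne' (by norm_num)] at h
    linarith
  rw [← log_le_log_iff (by positivity) hx₀, log_mul (by positivity) (by positivity), log_pow]
  push_cast
  linarith [log_1160_lt, log_lt_63_div_2]

lemma nextHeight_nextHeight_add_two_le {L : ℕ} (hL : L ≠ 0) :
    (nextHeight L (nextHeight L 0) + 2 : ℝ) ≤ 2.7 * 10 ^ 12 * L ^ 6 := by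
  have hL₁ : (1 : ℝ) ≤ L := by exact_mod_cast Nat.one_le_iff_ne_zero.mpr hL
  have h₃ : (1 : ℝ) ≤ L ^ 3 := one_le_pow₀ hL₁
  have h₆ : (1 : ℝ) ≤ L ^ 6 := one_le_pow₀ hL₁
  have hH : (nextHeight L 0 + 2 : ℝ) ≤ 2300010 * L ^ 3 := by
    rw [nextHeight]
    push_cast
    linarith
  calc (nextHeight L (nextHeight L 0) + 2 : ℝ)
      = 1150000 * (L ^ 3 * (nextHeight L 0 + 2)) + 8 := by
        rw [nextHeight.eq_def L (nextHeight L 0)]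
        push_cast
        ring
    _ ≤ 1150000 * (L ^ 3 * (2300010 * L ^ 3)) + 8 := by gcongr
    _ ≤ 2.7 * 10 ^ 12 * L ^ 6 := by linarith

lemma mul_sq_mul_nextHeight_le {n L : ℕ} (hL : 1050 ≤ L) (hn : 4.6 * 10 ^ 13 * (L : ℝ) ^ 11 ≤ n) :
    13500000000 * (L ^ 2 * (nextHeight L (nextHeight L 0) + 2)) ≤ n := by
  have hL' : (1050 : ℝ) ≤ L := mod_cast hL
  have hH := nextHeight_nextHeight_add_two_le (L := L) (by omega)
  have : (13500000000 * (L ^ 2 * (nextHeight L (nextHeight L 0) + 2)) : ℝ) ≤ n :=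
    calc (13500000000 * (L ^ 2 * (nextHeight L (nextHeight L 0) + 2)) : ℝ)
        ≤ 13500000000 * (L ^ 2 * (2.7 * 10 ^ 12 * L ^ 6)) := by gcongr
      _ = 3.645 * 10 ^ 22 * (L : ℝ) ^ 8 := by ring
      _ ≤ 4.6 * 10 ^ 13 * 1050 ^ 3 * (L : ℝ) ^ 8 := by gcongr ?_ * _; norm_num
      _ ≤ 4.6 * 10 ^ 13 * L ^ 3 * (L : ℝ) ^ 8 := by gcongr
      _ = 4.6 * 10 ^ 13 * (L : ℝ) ^ 11 := by ring
      _ ≤ n := hn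
  exact_mod_cast this

lemma nextHeight_nextHeight_nextHeight_le {n L : ℕ} (hL : 1050 ≤ L)
    (hn : 4.6 * 10 ^ 13 * (L : ℝ) ^ 11 ≤ n) :
    (nextHeight L (nextHeight L (nextHeight L 0)) : ℝ) ≤ 0.1 * n + 6 := by
  have hL' : (1050 : ℝ) ≤ L := mod_cast hL
  have hH := nextHeight_nextHeight_add_two_le (L := L) (by omega)
  rw [nextHeight.eq_def L (nextHeight L (nextHeight L 0))]
  push_cast
  refine add_le_add_left ?_ 6
  calc (1150000 * (L ^ 3 * (nextHeight L (nextHeight L 0) + 2)) : ℝ)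
      ≤ 1150000 * (L ^ 3 * (2.7 * 10 ^ 12 * L ^ 6)) := by gcongr
    _ = 3.105 * 10 ^ 18 * (L : ℝ) ^ 9 := by ring
    _ ≤ 0.1 * (4.6 * 10 ^ 13 * 1050 ^ 2 * (L : ℝ) ^ 9) := by
      rw [← mul_assoc]
      gcongr ?_ * _
      norm_num
    _ ≤ 0.1 * (4.6 * 10 ^ 13 * L ^ 2 * (L : ℝ) ^ 9) := by gcongr
    _ = 0.1 * (4.6 * 10 ^ 13 * (L : ℝ) ^ 11) := by ring
    _ ≤ 0.1 * n := by gcongr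

lemma thousand_le_goldenRatio_pow {n : ℕ} (hn : 20 ≤ n) : 1000 ≤ φ ^ n :=
  calc (1000 : ℝ) ≤ 1.6180339887 ^ 20 := by norm_num
    _ ≤ φ ^ 20 := le_goldenRatio_pow 20
    _ ≤ φ ^ n := pow_le_pow_right₀ one_lt_goldenRatio.le hn

lemma lt_log_goldenRatio : 0.38 < log φ := by
  have hinv : φ⁻¹ < 0.62 := by
    rw [inv_lt_comm₀ goldenRatio_pos (by norm_num)]
    exact lt_of_le_of_lt (by norm_num) lt_goldenRatio
  linarith [one_sub_inv_le_log_of_pos goldenRatio_pos]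

lemma lt_of_lucasSeq_sub_eq_padovan_sub {n n₁ m m₁ : ℕ} (hn : n₁ < n) (hm : m₁ < m)
    (heq : (lucasSeq n : ℝ) - lucasSeq n₁ = padovan m - padovan m₁) : (n : ℝ) < 2.4 * 10 ^ 47 := by
  obtain ⟨a, rfl⟩ := Nat.exists_eq_add_of_le hn.le
  obtain ⟨b, rfl⟩ := Nat.exists_eq_add_of_le hm.le
  by_contra! hlarge
  set n := n₁ + a
  have hn₂₀ : 20 ≤ n := by
    have : (20 : ℝ) ≤ n := by linarith
    exact_mod_cast this
  have hlog : 1200 / 11 < log (n + 3) :=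
    lt_log_2_4_mul_pow.trans_le (log_le_log (by norm_num) (by linarith))
  obtain ⟨L, hL⟩ : ∃ L : ℕ, L = ⌈10.5 * log (n + 3)⌉₊ := ⟨_, rfl⟩
  have hLn : 10.5 * log (n + 3) ≤ L := hL ▸ Nat.le_ceil _
  have hLn' : (L : ℝ) ≤ 10.5 * log (n + 3) + 1 :=
    hL ▸ (Nat.ceil_lt_add_one (by linarith)).le
  have hL₁₀₅₀ : 1050 ≤ L := by
    have : (1050 : ℝ) ≤ L := by linarith
    exact_mod_cast this
  have hgrow := mul_pow_eleven_le hlarge (by positivity) hLn'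
  have hrel := approxRelation_of_sub_eq (by omega) (by omega) (thousand_le_goldenRatio_pow hn₂₀) heq
  have hφ := mul_log_goldenRatio_add_one_le hrel (by omega) (by omega) hL₁₀₅₀ hLn
    (mul_sq_mul_nextHeight_le hL₁₀₅₀ hgrow)
  have hheight := nextHeight_nextHeight_nextHeight_le hL₁₀₅₀ hgrow
  have : n * 0.38 ≤ n * log φ := by
    gcongr
    exact lt_log_goldenRatio.le
  linarith

set_option exponentiation.threshold 1000 in
lemma lt_log_3_6_mul_pow : 87 < log (3.6 * 10 ^ 41) := by
  simpa using div_lt_log_of_lt_pow (x := 3.6 * 10 ^ 41) (p := 87) (q := 1) (by norm_num)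
    (by norm_num) (by norm_num)

lemma lt_mul_one_add_log_pow_three {x : ℝ} (hx : 1 ≤ x) (h : x < 2.4 * 10 ^ 47) :
    x < 1.8 * 10 ^ 41 * (1 + log (2 * x)) ^ 3 := by
  have key {c B : ℝ} (hc : 0 ≤ c) (hB : B ≤ 1.8 * 10 ^ 41 * (1 + c) ^ 3) (hxB : x < B)
      (hcx : c ≤ log (2 * x)) : x < 1.8 * 10 ^ 41 * (1 + log (2 * x)) ^ 3 :=
    (hxB.trans_le hB).trans_le (by gcongr)
  rcases lt_or_ge x (1.8 * 10 ^ 41) with hx₁ | hx₁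
  · exact key le_rfl (by norm_num) hx₁ (log_nonneg (by linarith))
  rcases lt_or_ge x (1.2 * 10 ^ 47) with hx₂ | hx₂
  · exact key (c := 87) (by norm_num) (by norm_num) hx₂
      (lt_log_3_6_mul_pow.le.trans (log_le_log (by norm_num) (by linarith)))
  · exact key (c := 1200 / 11) (by norm_num) (by norm_num) h
      (lt_log_2_4_mul_pow.le.trans (log_le_log (by norm_num) (by linarith)))

end UpperBound

end LucasPadovan

theorem upper_bound_n_general (n n₁ m m₁ : ℕ) (hnn₁ : n₁ < n) (hmm₁ : m₁ < m)
    (heq : (lucasSeq n : ℤ) - (lucasSeq n₁ : ℤ) = (padovan m : ℤ) - (padovan m₁ : ℤ)) :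
    (n : ℝ) - 3 < 1.8 * 10 ^ 41 * (1 + Real.log (2 * n)) ^ 3 ∧
    (n : ℝ) < 2.45 * 10 ^ 47 := by
  have hn : (1 : ℝ) ≤ n := by exact_mod_cast Nat.one_le_of_lt hnn₁
  have hbound : (n : ℝ) < 2.4 * 10 ^ 47 :=
    LucasPadovan.lt_of_lucasSeq_sub_eq_padovan_sub hnn₁ hmm₁ (by exact_mod_cast heq)
  exact ⟨by linarith [LucasPadovan.lt_mul_one_add_log_pow_three hn hbound], by linarith⟩

theorem upper_bound_n (n n₁ m m₁ : ℕ) (hn₁ : 1 ≤ n₁) (hnn₁ : n₁ < n)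
    (hm₁ : 1 ≤ m₁) (hmm₁ : m₁ < m) (hn : 300 ≤ n)
    (heq : (lucasSeq n : ℤ) - (lucasSeq n₁ : ℤ) = (padovan m : ℤ) - (padovan m₁ : ℤ)) :
    (n : ℝ) - 3 < 1.8 * 10 ^ 41 * (1 + Real.log (2 * n)) ^ 3 ∧
    (n : ℝ) < 2.45 * 10 ^ 47 :=
  upper_bound_n_general n n₁ m m₁ hnn₁ hmm₁ heq
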